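/- arXiv:math/9204212 — 2 statements merged into one kernel-verified Lean document; each statement's English description precedes it below -/
import Mathlib

section
/- Let K be a convex body in ℝⁿ whose boundary is of class C² with everywhere positive Gauss–Kronecker curvature. Then for every 0 < δ < vol(K), the boundary of the convolution body K(δ) = {x : vol(K ∩ (x+K)) ≥ δ} has everywhere positive Gauss–Kronecker curvature. -/
open MeasureTheory Set
open scoped Pointwise

/-- A set has `C²` boundary with everywhere positive Gauss–Kronecker curvature if its
boundary is a regular level set of a `C²` function whose Hessian is positive definite on
each tangent hyperplane of the boundary. -/
def HasC2PositiveCurvatureBoundary {E : Type*} [NormedAddCommGroup E] [NormedSpace ℝ E]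
    (C : Set E) : Prop :=
  ∃ (g : E → ℝ) (U : Set E), IsOpen U ∧ frontier C ⊆ U ∧ ContDiffOn ℝ 2 g U ∧
    (∀ x ∈ U, (x ∈ frontier C ↔ g x = 0)) ∧
    (∀ x ∈ U, x ∈ interior C → g x < 0) ∧
    ∀ x ∈ frontier C, fderiv ℝ g x ≠ 0 ∧
      ∀ v : E, v ≠ 0 → fderiv ℝ g x v = 0 → 0 < iteratedFDeriv ℝ 2 g x ![v, v]

open scoped Topology ENNReal

/-- The one-dimensional Brunn–Minkowski inequality for compact sets. -/
theorem volume_add_le_of_isCompact {A B Z : Set ℝ} (hA : IsCompact A) (hB : IsCompact B)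
    (hA0 : A.Nonempty) (hB0 : B.Nonempty) (hZ : ∀ a ∈ A, ∀ b ∈ B, a + b ∈ Z) :
    volume A + volume B ≤ volume Z := by
  obtain ⟨a, ha, hamax⟩ := hA.exists_isMaxOn hA0 continuousOn_id
  obtain ⟨b, hb, hbmin⟩ := hB.exists_isMinOn hB0 continuousOn_id
  have hae : AEDisjoint volume ((fun x => x + b) '' A) ((fun x => a + x) '' B) := by
    have hsub : ((fun x => x + b) '' A) ∩ ((fun x => a + x) '' B) ⊆ {a + b} := by
      rintro _ ⟨⟨x, hx, rfl⟩, ⟨y, hy, hxy⟩⟩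
      have h1 : x ≤ a := hamax hx
      have h2 : b ≤ y := hbmin hy
      simp only [mem_singleton_iff] at *
      linarith
    exact measure_mono_null hsub (by simp)
  have hmeas : MeasurableSet ((fun x => a + x) '' B) :=
    (hB.image (continuous_const_add a)).isClosed.measurableSet
  calc volume A + volume B
      = volume ((fun x => x + b) '' A) + volume ((fun x => a + x) '' B) := by
        simp [Set.image_add_right, Set.image_add_left]
    _ = volume (((fun x => x + b) '' A) ∪ ((fun x => a + x) '' B)) :=
        (measure_union₀ hmeas.nullMeasurableSet hae).symm
    _ ≤ volume Z := by
        apply measure_mono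
        rintro _ (⟨x, hx, rfl⟩ | ⟨x, hx, rfl⟩)
        · exact hZ x hx b hb
        · exact hZ a ha x hx

/-- The one-dimensional Brunn–Minkowski inequality for measurable sets. -/
theorem volume_add_le_of_measurableSet {A B Z : Set ℝ} (hA : MeasurableSet A)
    (hB : MeasurableSet B) (hA0 : A.Nonempty) (hB0 : B.Nonempty)
    (hZ : ∀ a ∈ A, ∀ b ∈ B, a + b ∈ Z) :
    volume A + volume B ≤ volume Z := by
  obtain ⟨a₀, ha₀⟩ := hA0
  obtain ⟨b₀, hb₀⟩ := hB0
  rw [hA.measure_eq_iSup_isCompact, hB.measure_eq_iSup_isCompact]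
  refine ENNReal.biSup_add_biSup_le' (p := fun K => K ⊆ A ∧ IsCompact K)
    (q := fun K => K ⊆ B ∧ IsCompact K) (f := fun K => volume K) (g := fun K => volume K)
    ⟨∅, empty_subset _, isCompact_empty⟩ ⟨∅, empty_subset _, isCompact_empty⟩ ?_ |>.trans' ?_
  · rintro K ⟨hKA, hK⟩ K' ⟨hKB, hK'⟩
    refine le_trans (add_le_add (measure_mono (subset_insert a₀ K))
      (measure_mono (subset_insert b₀ K'))) ?_
    refine volume_add_le_of_isCompact (hK.insert a₀) (hK'.insert b₀) (insert_nonempty _ _)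
      (insert_nonempty _ _) ?_
    intro a ha b hb
    exact hZ a (insert_subset ha₀ hKA ha) b (insert_subset hb₀ hKB hb)
  · simp only [iSup_and]; rfl

/-- The weighted one-dimensional Brunn–Minkowski inequality. -/
theorem weighted_volume_add_le {s t : ℝ} (hs : 0 < s) (ht : 0 < t) {A B Z : Set ℝ}
    (hA : MeasurableSet A) (hB : MeasurableSet B) (hA0 : A.Nonempty) (hB0 : B.Nonempty)
    (hZ : ∀ a ∈ A, ∀ b ∈ B, s * a + t * b ∈ Z) :
    ENNReal.ofReal s * volume A + ENNReal.ofReal t * volume B ≤ volume Z := by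
  have h := volume_add_le_of_measurableSet (A := s • A) (B := t • B) (Z := Z)
    (hA.const_smul₀ s) (hB.const_smul₀ t) (hA0.smul_set) (hB0.smul_set) (by
      rintro _ ⟨a, ha, rfl⟩ _ ⟨b, hb, rfl⟩
      simpa using hZ a ha b hb)
  simpa [Measure.addHaar_smul, abs_of_pos hs, abs_of_pos ht] using h

theorem lintegral_eq_setLIntegral_measure_lt_of_le_one {f : ℝ → ℝ≥0∞} (hf : Measurable f)
    (hf1 : ∀ x, f x ≤ 1) :
    ∫⁻ x, f x = ∫⁻ t in Ioo (0 : ℝ) 1, volume {x | ENNReal.ofReal t < f x} := by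
  have hfin : ∀ x, f x ≠ ∞ := fun x => ((hf1 x).trans_lt ENNReal.one_lt_top).ne
  have h := lintegral_eq_lintegral_meas_lt (volume : Measure ℝ) (f := fun x => (f x).toReal)
    (Filter.Eventually.of_forall fun x => ENNReal.toReal_nonneg) hf.ennreal_toReal.aemeasurable
  simp only [ENNReal.ofReal_toReal (hfin _)] at h
  rw [h, ← Ioo_union_Ici_eq_Ioi (zero_lt_one' ℝ),
    lintegral_union measurableSet_Ici (by
      rw [Set.disjoint_left]; intro x hx hx'; exact absurd hx.2 (not_lt.mpr hx'))]
  have h0 : ∫⁻ t in Ici (1 : ℝ), volume {x | t < (f x).toReal} = 0 := by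
    rw [setLIntegral_congr_fun (g := fun _ => 0) measurableSet_Ici]
    · simp
    · intro t ht
      have : {x | t < (f x).toReal} = ∅ := by
        ext x
        simp only [mem_ofPred_eq, mem_empty_iff_false, iff_false, not_lt]
        refine le_trans ?_ (mem_Ici.mp ht)
        simpa using ENNReal.toReal_mono ENNReal.one_ne_top (hf1 x)
      simp [this]
  rw [h0, add_zero]
  refine setLIntegral_congr_fun measurableSet_Ioo fun t ht => ?_
  congr 1
  ext x
  exact (ENNReal.ofReal_lt_iff_lt_toReal ht.1.le (hfin x)).symm

theorem prekopaLeindler_of_iSup_eq_one {a b : ℝ} (ha : 0 < a) (hb : 0 < b) (hab : a + b = 1)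
    {f g h : ℝ → ℝ≥0∞} (hf : Measurable f) (hg : Measurable g) (hh : Measurable h)
    (hf1 : ⨆ x, f x = 1) (hg1 : ⨆ x, g x = 1)
    (H : ∀ x y, f x ^ a * g y ^ b ≤ h (a * x + b * y)) :
    ENNReal.ofReal a * (∫⁻ x, f x) + ENNReal.ofReal b * (∫⁻ x, g x) ≤ ∫⁻ x, h x := by
  have hfle : ∀ x, f x ≤ 1 := fun x => hf1 ▸ le_iSup f x
  have hgle : ∀ x, g x ≤ 1 := fun x => hg1 ▸ le_iSup g x
  have hmin : ∫⁻ x, min (h x) 1 ≤ ∫⁻ x, h x := lintegral_mono fun x => min_le_left _ _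
  refine le_trans ?_ hmin
  rw [lintegral_eq_setLIntegral_measure_lt_of_le_one hf hfle,
    lintegral_eq_setLIntegral_measure_lt_of_le_one hg hgle,
    lintegral_eq_setLIntegral_measure_lt_of_le_one (hh.min measurable_const)
      (fun x => min_le_right _ _)]
  have hanti : ∀ u : ℝ → ℝ≥0∞, Measurable fun t : ℝ => volume {x | ENNReal.ofReal t < u x} := by
    intro u
    apply Antitone.measurable
    intro t t' htt'
    exact measure_mono fun x hx => lt_of_le_of_lt (ENNReal.ofReal_le_ofReal htt') hx
  rw [← lintegral_const_mul _ (hanti f), ← lintegral_const_mul _ (hanti g),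
    ← lintegral_add_left ((hanti f).const_mul _)]
  refine setLIntegral_mono' measurableSet_Ioo fun t ht => ?_
  have ht1 : ENNReal.ofReal t < 1 := by simpa using ht.2
  refine weighted_volume_add_le ha hb (measurableSet_lt measurable_const hf)
    (measurableSet_lt measurable_const hg) ?_ ?_ ?_
  · obtain ⟨x, hx⟩ := lt_iSup_iff.mp (hf1 ▸ ht1)
    exact ⟨x, hx⟩
  · obtain ⟨x, hx⟩ := lt_iSup_iff.mp (hg1 ▸ ht1)
    exact ⟨x, hx⟩
  intro x hx y hy
  refine lt_of_lt_of_le ?_ (min_le_min_right 1 (H x y))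
  refine lt_min ?_ ht1
  calc ENNReal.ofReal t = ENNReal.ofReal t ^ a * ENNReal.ofReal t ^ b := by
        rw [← ENNReal.rpow_add _ _ (by simpa using ht.1) ENNReal.ofReal_ne_top, hab,
          ENNReal.rpow_one]
    _ < f x ^ a * g y ^ b :=
        ENNReal.mul_lt_mul (ENNReal.rpow_lt_rpow hx ha) (ENNReal.rpow_lt_rpow hy hb)

theorem ENNReal.rpow_mul_rpow_le_weighted_add {a b : ℝ} (ha : 0 < a) (hb : 0 < b)
    (hab : a + b = 1) (x y : ℝ≥0∞) :
    x ^ a * y ^ b ≤ ENNReal.ofReal a * x + ENNReal.ofReal b * y := by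
  have ha' : ENNReal.ofReal a ≠ 0 := by simpa using ha
  have hb' : ENNReal.ofReal b ≠ 0 := by simpa using hb
  induction x using ENNReal.recTopCoe with
  | top => simp [ENNReal.mul_top ha']
  | coe x =>
    induction y using ENNReal.recTopCoe with
    | top => simp [ENNReal.mul_top hb']
    | coe y =>
      rw [← ENNReal.coe_rpow_of_nonneg _ ha.le, ← ENNReal.coe_rpow_of_nonneg _ hb.le]
      have h := NNReal.geom_mean_le_arith_mean2_weighted a.toNNReal b.toNNReal x y
        (by rw [← Real.toNNReal_add ha.le hb.le, hab, Real.toNNReal_one])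
      rw [Real.coe_toNNReal _ ha.le, Real.coe_toNNReal _ hb.le] at h
      simp only [ENNReal.ofReal]
      exact_mod_cast h

theorem prekopaLeindler_real_of_le {a b : ℝ} (ha : 0 < a) (hb : 0 < b) (hab : a + b = 1)
    {f g h : ℝ → ℝ≥0∞} (hf : Measurable f) (hg : Measurable g) (hh : Measurable h)
    {C : ℝ≥0∞} (hC : C ≠ ∞) (hfC : ∀ x, f x ≤ C) (hgC : ∀ x, g x ≤ C)
    (H : ∀ x y, f x ^ a * g y ^ b ≤ h (a * x + b * y)) :
    (∫⁻ x, f x) ^ a * (∫⁻ x, g x) ^ b ≤ ∫⁻ x, h x := by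
  set A := ⨆ x, f x with hA
  set B := ⨆ x, g x with hB
  have hAtop : A ≠ ∞ := ((iSup_le hfC).trans_lt hC.lt_top).ne
  have hBtop : B ≠ ∞ := ((iSup_le hgC).trans_lt hC.lt_top).ne
  rcases eq_or_ne A 0 with hA0 | hA0
  · have : ∀ x, f x = 0 := by simpa [hA] using hA0
    simp [this, ha]
  rcases eq_or_ne B 0 with hB0 | hB0
  · have : ∀ x, g x = 0 := by simpa [hB] using hB0
    simp [this, hb]
  have hD0 : A ^ a * B ^ b ≠ 0 := by
    simp [hA0, hB0, hAtop, hBtop]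
  have hDtop : A ^ a * B ^ b ≠ ∞ :=
    ENNReal.mul_ne_top (ENNReal.rpow_ne_top_of_nonneg ha.le hAtop)
      (ENNReal.rpow_ne_top_of_nonneg hb.le hBtop)
  have key := prekopaLeindler_of_iSup_eq_one ha hb hab (f := fun x => A⁻¹ * f x)
    (g := fun x => B⁻¹ * g x) (h := fun x => (A ^ a * B ^ b)⁻¹ * h x)
    (hf.const_mul _) (hg.const_mul _) (hh.const_mul _)
    (by rw [← ENNReal.mul_iSup, ENNReal.inv_mul_cancel hA0 hAtop])
    (by rw [← ENNReal.mul_iSup, ENNReal.inv_mul_cancel hB0 hBtop]) (by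
      intro x y
      rw [ENNReal.mul_rpow_of_nonneg _ _ ha.le, ENNReal.mul_rpow_of_nonneg _ _ hb.le,
        ENNReal.mul_inv (Or.inr (ENNReal.rpow_ne_top_of_nonneg hb.le hBtop))
          (Or.inl (ENNReal.rpow_ne_top_of_nonneg ha.le hAtop)), ENNReal.inv_rpow,
        ENNReal.inv_rpow, mul_mul_mul_comm]
      gcongr
      exact H x y)
  rw [lintegral_const_mul _ hf, lintegral_const_mul _ hg, lintegral_const_mul _ hh] at key
  have key2 := (ENNReal.rpow_mul_rpow_le_weighted_add ha hb hab _ _).trans key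
  rw [ENNReal.mul_rpow_of_nonneg _ _ ha.le, ENNReal.mul_rpow_of_nonneg _ _ hb.le,
    ENNReal.inv_rpow, ENNReal.inv_rpow, mul_mul_mul_comm,
    ← ENNReal.mul_inv (Or.inr (ENNReal.rpow_ne_top_of_nonneg hb.le hBtop))
          (Or.inl (ENNReal.rpow_ne_top_of_nonneg ha.le hAtop))] at key2
  exact (ENNReal.mul_le_mul_iff_right (ENNReal.inv_ne_zero.mpr hDtop)
    (ENNReal.inv_ne_top.mpr hD0)).mp key2

theorem iSup_lintegral_min_natCast {f : ℝ → ℝ≥0∞} (hf : Measurable f) :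
    ⨆ N : ℕ, ∫⁻ x, min (f x) N = ∫⁻ x, f x := by
  rw [← lintegral_iSup (fun N => hf.min measurable_const)
    (fun N N' h x => min_le_min_left _ (by exact_mod_cast h))]
  congr 1
  ext x
  apply le_antisymm (iSup_le fun N => min_le_left _ _)
  refine le_of_forall_lt fun c hc => ?_
  obtain ⟨N, hN⟩ := ENNReal.exists_nat_gt (hc.trans_le le_top).ne
  exact lt_iSup_iff.mpr ⟨N, lt_min hc hN⟩

/-- The Prékopa–Leindler inequality on the real line. -/
theorem prekopaLeindler_real {a b : ℝ} (ha : 0 < a) (hb : 0 < b) (hab : a + b = 1)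
    {f g h : ℝ → ℝ≥0∞} (hf : Measurable f) (hg : Measurable g) (hh : Measurable h)
    (H : ∀ x y, f x ^ a * g y ^ b ≤ h (a * x + b * y)) :
    (∫⁻ x, f x) ^ a * (∫⁻ x, g x) ^ b ≤ ∫⁻ x, h x := by
  have hmono : ∀ u : ℝ → ℝ≥0∞, Monotone fun N : ℕ => ∫⁻ x, min (u x) (N : ℝ≥0∞) :=
    fun u N N' hN => lintegral_mono fun x => min_le_min_left _ (by exact_mod_cast hN)
  have hlim : ∀ {u : ℝ → ℝ≥0∞}, Measurable u → Filter.Tendsto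
      (fun N : ℕ => ∫⁻ x, min (u x) (N : ℝ≥0∞)) Filter.atTop (nhds (∫⁻ x, u x)) := by
    intro u hu
    rw [← iSup_lintegral_min_natCast hu]
    exact tendsto_atTop_iSup (hmono u)
  rcases eq_or_ne (∫⁻ x, f x) 0 with h0 | hf0
  · simp [h0, ha]
  rcases eq_or_ne (∫⁻ x, g x) 0 with h0 | hg0
  · simp [h0, hb]
  refine le_of_tendsto (ENNReal.Tendsto.mul ((hlim hf).ennrpow_const a) ?_
    ((hlim hg).ennrpow_const b) ?_) (Filter.Eventually.of_forall fun N => ?_)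
  · left; simp [hf0, ha.le, ha]
  · left; simp [hg0, hb.le, hb]
  · refine prekopaLeindler_real_of_le ha hb hab (hf.min measurable_const)
      (hg.min measurable_const) hh (ENNReal.natCast_ne_top N) (fun x => min_le_right _ _)
      (fun x => min_le_right _ _) fun x y => le_trans ?_ (H x y)
    gcongr <;> exact min_le_left _ _

/-- The Prékopa–Leindler inequality. -/
theorem prekopaLeindler {a b : ℝ} (ha : 0 < a) (hb : 0 < b) (hab : a + b = 1) (n : ℕ)
    {f g h : (Fin n → ℝ) → ℝ≥0∞} (hf : Measurable f) (hg : Measurable g) (hh : Measurable h)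
    (H : ∀ x y, f x ^ a * g y ^ b ≤ h (a • x + b • y)) :
    (∫⁻ x, f x) ^ a * (∫⁻ x, g x) ^ b ≤ ∫⁻ x, h x := by
  induction n with
  | zero =>
    have hv : (volume : Measure (Fin 0 → ℝ)) = Measure.dirac 0 :=
      Measure.volume_pi_eq_dirac 0
    simp only [hv, lintegral_dirac]
    convert H 0 0
  | succ n ih =>
    have hfub : ∀ {u : (Fin (n + 1) → ℝ) → ℝ≥0∞}, Measurable u →
        ∫⁻ x, u x = ∫⁻ s : ℝ, ∫⁻ y : Fin n → ℝ, u (Fin.cons s y) := by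
      intro u hu
      have hmp := (volume_preserving_piFinSuccAbove (fun _ : Fin (n + 1) => ℝ) 0).symm
      rw [← hmp.lintegral_comp hu, Measure.volume_eq_prod, lintegral_prod
        (fun p => u ((MeasurableEquiv.piFinSuccAbove (fun _ : Fin (n + 1) => ℝ) 0).symm p))
        (hu.comp hmp.measurable).aemeasurable]
      simp [Fin.insertNthEquiv]
    have hcons : Measurable fun p : ℝ × (Fin n → ℝ) => (Fin.cons p.1 p.2 : Fin (n + 1) → ℝ) := by
      rw [measurable_pi_iff]
      intro i
      refine Fin.cases ?_ (fun j => ?_) i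
      · simpa using measurable_fst
      · simpa [Function.comp_def] using (measurable_pi_apply j).comp measurable_snd
    rw [hfub hf, hfub hg, hfub hh]
    refine prekopaLeindler_real ha hb hab (hf.comp hcons).lintegral_prod_right'
      (hg.comp hcons).lintegral_prod_right' (hh.comp hcons).lintegral_prod_right' ?_
    intro s t
    refine ih (hf.comp (hcons.comp measurable_prodMk_left))
      (hg.comp (hcons.comp measurable_prodMk_left))
      (hh.comp (hcons.comp measurable_prodMk_left)) ?_
    intro x y
    convert H (Fin.cons s x) (Fin.cons t y) using 2
    ext i
    refine Fin.cases ?_ (fun j => ?_) i <;> simp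

/-- The multiplicative Brunn–Minkowski inequality. -/
theorem volume_rpow_mul_volume_rpow_le {a b : ℝ} (ha : 0 < a) (hb : 0 < b) (hab : a + b = 1)
    {n : ℕ} {A B Z : Set (EuclideanSpace ℝ (Fin n))} (hA : MeasurableSet A)
    (hB : MeasurableSet B) (hZ : MeasurableSet Z)
    (H : ∀ x ∈ A, ∀ y ∈ B, a • x + b • y ∈ Z) :
    volume A ^ a * volume B ^ b ≤ volume Z := by
  have hmp := PiLp.volume_preserving_toLp (Fin n)
  have hind : ∀ {S : Set (EuclideanSpace ℝ (Fin n))}, MeasurableSet S →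
      volume S = ∫⁻ x : Fin n → ℝ, S.indicator 1 (WithLp.toLp 2 x) := by
    intro S hS
    rw [hmp.lintegral_comp (f := S.indicator 1) (measurable_one.indicator hS),
      lintegral_indicator_one hS]
  rw [hind hA, hind hB, hind hZ]
  refine prekopaLeindler ha hb hab n
    ((measurable_one.indicator hA).comp hmp.measurable)
    ((measurable_one.indicator hB).comp hmp.measurable)
    ((measurable_one.indicator hZ).comp hmp.measurable) fun x y => ?_
  by_cases hx : WithLp.toLp 2 x ∈ A
  · by_cases hy : WithLp.toLp 2 y ∈ B
    · have := H _ hx _ hy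
      simp [hx, hy, this]
    · simp [hy, hb]
  · simp [hx, ha]

/-- The largest level at which the function `F` is at least `exp ρ`. -/
noncomputable def expLevel (F : ℝ → ℝ) (ρ : ℝ) : ℝ := sSup {c | Real.exp ρ ≤ F c}

section expLevel

variable {F G J : ℝ → ℝ} {ρ ρ' : ℝ}

theorem bddAbove_expLevel {M : ℝ} (hF : ∀ c, M ≤ c → F c = 0) (ρ : ℝ) :
    BddAbove {c | Real.exp ρ ≤ F c} := by
  refine ⟨M, fun c hc => ?_⟩
  by_contra! h
  have h1 : Real.exp ρ ≤ F c := hc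
  rw [hF c h.le] at h1
  exact absurd (Real.exp_pos ρ) (not_lt.mpr h1)

theorem le_expLevel {M : ℝ} (hF : ∀ c, M ≤ c → F c = 0) {c : ℝ} (hc : Real.exp ρ ≤ F c) :
    c ≤ expLevel F ρ :=
  le_csSup (bddAbove_expLevel hF ρ) hc

theorem lt_exp_of_expLevel_lt {M : ℝ} (hF : ∀ c, M ≤ c → F c = 0) {c : ℝ}
    (hc : expLevel F ρ < c) : F c < Real.exp ρ := by
  by_contra! h
  exact absurd (le_expLevel hF h) (not_le.mpr hc)

theorem expLevel_antitone_of_le {M : ℝ} (hF : ∀ c, M ≤ c → F c = 0)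
    (hne : ∃ c, Real.exp ρ' ≤ F c) (h : ρ ≤ ρ') : expLevel F ρ' ≤ expLevel F ρ := by
  obtain ⟨c₀, hc₀⟩ := hne
  exact csSup_le_csSup (bddAbove_expLevel hF ρ) ⟨c₀, hc₀⟩
    fun c hc => (Real.exp_le_exp.mpr h).trans hc

theorem expLevel_combo_le {M : ℝ} {a b : ℝ} (ha : 0 < a) (hb : 0 < b)
    (hJ : ∀ c, M ≤ c → J c = 0)
    (hcomb : ∀ c c', F c ^ a * G c' ^ b ≤ J (a * c + b * c'))
    (hneF : ∃ c, Real.exp ρ ≤ F c) (hneG : ∃ c, Real.exp ρ' ≤ G c) :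
    a * expLevel F ρ + b * expLevel G ρ' ≤ expLevel J (a * ρ + b * ρ') := by
  have key : ∀ c, Real.exp ρ ≤ F c → ∀ c', Real.exp ρ' ≤ G c' →
      a * c + b * c' ≤ expLevel J (a * ρ + b * ρ') := by
    intro c hc c' hc'
    refine le_expLevel hJ (le_trans ?_ (hcomb c c'))
    calc Real.exp (a * ρ + b * ρ') = Real.exp ρ ^ a * Real.exp ρ' ^ b := by
          rw [Real.exp_add, ← Real.exp_mul, ← Real.exp_mul, mul_comm ρ, mul_comm ρ']
      _ ≤ F c ^ a * G c' ^ b := mul_le_mul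
          (Real.rpow_le_rpow (Real.exp_pos _).le hc ha.le)
          (Real.rpow_le_rpow (Real.exp_pos _).le hc' hb.le) (by positivity)
          (Real.rpow_nonneg ((Real.exp_pos _).le.trans hc) _)
  have h1 : ∀ c', Real.exp ρ' ≤ G c' →
      expLevel F ρ ≤ (expLevel J (a * ρ + b * ρ') - b * c') / a := by
    intro c' hc'
    refine csSup_le hneF fun c hc => ?_
    rw [le_div_iff₀ ha]
    have := key c hc c' hc'
    linarith
  have h2 : expLevel G ρ' ≤ (expLevel J (a * ρ + b * ρ') - a * expLevel F ρ) / b := by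
    refine csSup_le hneG fun c' hc' => ?_
    rw [le_div_iff₀ hb]
    have := h1 c' hc'
    rw [le_div_iff₀ ha] at this
    linarith
  rw [le_div_iff₀ hb] at h2
  linarith

end expLevel

theorem sum_second_difference_le {w : ℕ → ℝ} {N : ℕ}
    (hw : ∀ j, j < 2 * N + 1 → w j + w (j + 2) ≤ 2 * w (j + 1)) :
    ∑ i ∈ Finset.range (N + 1), (2 * w (2 * i + 1) - w (2 * i) - w (2 * i + 2)) ≤
      (w 1 - w 0) - (w (2 * N + 2) - w (2 * N + 1)) := by
  induction N with
  | zero => simp; linarith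
  | succ N ih =>
    rw [Finset.sum_range_succ]
    have h1 := ih fun j hj => hw j (by omega)
    have h2 := hw (2 * N + 1) (by omega)
    have e1 : 2 * (N + 1) = 2 * N + 2 := by ring
    rw [e1]
    norm_num [add_assoc] at h1 h2 ⊢
    linarith

set_option maxHeartbeats 1000000 in
/-- Let `P` and `Q` split a function `H` into two log-concave parts, such that near the right end
`P` does not depend on `t`, and near the left end `Q` moves with speed `τ > 0`. Then `H` cannot be
flat to second order. -/
theorem not_flat_of_split {P Q : ℝ → ℝ → ℝ} {H : ℝ → ℝ} {M m c₁ c₂ τ t₀ : ℝ}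
    (hadd : ∀ c t, P c t + Q c t = H t) (hQ0 : ∀ c t, 0 ≤ Q c t)
    (hanti : ∀ t, Antitone fun c => P c t)
    (hP : ∀ a b : ℝ, 0 < a → 0 < b → a + b = 1 → ∀ c c' t t',
      P c t ^ a * P c' t' ^ b ≤ P (a * c + b * c') (a * t + b * t'))
    (hQ : ∀ a b : ℝ, 0 < a → 0 < b → a + b = 1 → ∀ c c' t t',
      Q c t ^ a * Q c' t' ^ b ≤ Q (a * c + b * c') (a * t + b * t'))
    (hM : ∀ c t, |t| ≤ t₀ → M ≤ c → P c t = 0) (hm : Q m 0 = 0)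
    (ht₀ : 0 < t₀) (hτ : 0 < τ)
    (htop : ∀ c t, |t| ≤ t₀ → c₁ ≤ c → P c t = P c 0) (htop0 : 0 < P c₁ 0)
    (hbot : ∀ t, |t| ≤ t₀ → Q (c₂ + τ * t) t = Q c₂ 0) (hbot0 : 0 < Q c₂ 0)
    (hslab : ∀ c, c₂ < c → P c 0 < P c₂ 0) (hc : c₂ < c₁)
    (hflat : ∀ η > 0, ∃ t₁ > 0, ∀ t, |t| < t₁ → H 0 - η * t ^ 2 ≤ H t) : False := by
  set q := Q c₂ 0 with hq
  set p₀ := P c₁ 0 with hp₀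
  have hPc₂ : P c₂ 0 = H 0 - q := by have := hadd c₂ 0; linarith
  have hp₀lt : p₀ < H 0 - q := hPc₂ ▸ hslab c₁ hc
  have hPm : P m 0 = H 0 := by have := hadd m 0; linarith
  have hM0 : ∀ c, M ≤ c → P c 0 = 0 := fun c h => hM c 0 (by simpa using ht₀.le) h
  set C := fun t ρ => expLevel (fun c => P c t) ρ with hC
  set ρ₀ := Real.log p₀ with hρ₀
  set ρ₁ := Real.log (H 0 - q) with hρ₁
  set ρM := Real.log (H 0) with hρM
  have hexp₀ : Real.exp ρ₀ = p₀ := Real.exp_log htop0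
  have hexp₁ : Real.exp ρ₁ = H 0 - q := Real.exp_log (by linarith)
  have hexpM : Real.exp ρM = H 0 := Real.exp_log (by linarith)
  have h01 : ρ₀ < ρ₁ := Real.exp_lt_exp.mp (by rw [hexp₀, hexp₁]; exact hp₀lt)
  have h1M : ρ₁ < ρM := Real.exp_lt_exp.mp (by rw [hexpM, hexp₁]; linarith)
  have hne0 : ∀ ρ, ρ ≤ ρM → ∃ c, Real.exp ρ ≤ P c 0 := fun ρ h =>
    ⟨m, by rw [hPm, ← hexpM]; exact Real.exp_le_exp.mpr h⟩
  have hanti0 : ∀ ρ ρ', ρ ≤ ρ' → ρ' ≤ ρM → C 0 ρ' ≤ C 0 ρ := fun ρ ρ' h h' =>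
    expLevel_antitone_of_le hM0 (hne0 ρ' h') h
  have hconc0 : ∀ a b : ℝ, 0 < a → 0 < b → a + b = 1 → ∀ ρ ρ', ρ ≤ ρM → ρ' ≤ ρM →
      a * C 0 ρ + b * C 0 ρ' ≤ C 0 (a * ρ + b * ρ') := by
    intro a b ha hb hab ρ ρ' h h'
    refine expLevel_combo_le ha hb hM0 (fun c c' => ?_) (hne0 ρ h) (hne0 ρ' h')
    simpa using hP a b ha hb hab c c' 0 0
  -- a Lipschitz bound for `C 0` on `(-∞, ρ₁]`
  set K := (C 0 ρ₁ - C 0 ρM) / (ρM - ρ₁) with hK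
  have hK0 : 0 ≤ K := div_nonneg (sub_nonneg.mpr (hanti0 _ _ h1M.le le_rfl)) (by linarith)
  have hLip : ∀ ρ ρ', ρ ≤ ρ' → ρ' ≤ ρ₁ → C 0 ρ - C 0 ρ' ≤ K * (ρ' - ρ) := by
    intro ρ ρ' h h'
    have hcv : ConcaveOn ℝ (Iic ρM) (C 0) :=
      concaveOn_iff_forall_pos.mpr ⟨convex_Iic _, fun x hx y hy a b ha hb hab =>
        hconc0 a b ha hb hab x y hx hy⟩
    rcases h.eq_or_lt with rfl | hlt
    · simp
    have s1 : (C 0 ρM - C 0 ρ₁) / (ρM - ρ₁) ≤ (C 0 ρ' - C 0 ρ) / (ρ' - ρ) := by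
      rcases h'.eq_or_lt with rfl | hlt'
      · exact hcv.slope_anti_adjacent (mem_Iic.mpr (by linarith)) (mem_Iic.mpr le_rfl) hlt h1M
      · exact (hcv.slope_anti_adjacent (mem_Iic.mpr (by linarith)) (mem_Iic.mpr le_rfl)
          hlt' h1M).trans (hcv.slope_anti_adjacent (mem_Iic.mpr (by linarith))
            (mem_Iic.mpr (by linarith)) hlt hlt')
    have s2 : -K ≤ (C 0 ρ' - C 0 ρ) / (ρ' - ρ) := by
      rw [hK, ← neg_div, neg_sub]; exact s1
    rw [le_div_iff₀ (by linarith)] at s2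
    linarith
  have hlog : ∀ ρ ρ' ε, Real.exp ρ' = Real.exp ρ + ε → p₀ ≤ Real.exp ρ → 0 ≤ ε →
      ρ' - ρ ≤ ε / p₀ := by
    intro ρ ρ' ε h hp hε
    have h1 : Real.exp (ρ' - ρ) = 1 + ε / Real.exp ρ := by
      rw [Real.exp_sub, h]; field_simp
    have h2 := Real.add_one_le_exp (ρ' - ρ)
    have h3 : ε / Real.exp ρ ≤ ε / p₀ := div_le_div_of_nonneg_left hε htop0 hp
    linarith
  set K₁ := K / p₀ with hK₁
  have hK₁0 : 0 ≤ K₁ := div_nonneg hK0 htop0.le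
  have hC₁ : C 0 ρ₁ ≤ c₂ := by
    refine csSup_le (hne0 ρ₁ h1M.le) fun c hc' => ?_
    have hc'' : Real.exp ρ₁ ≤ P c 0 := hc'
    by_contra! hlt
    have := hslab c hlt
    rw [hexp₁, ← hPc₂] at hc''
    linarith
  -- the main estimate
  have main : ∀ t ε : ℝ, 0 < t → t ≤ t₀ → 0 < ε → p₀ + ε < H 0 - q → H 0 - ε < H t →
      H 0 - ε < H (-t) → ∀ N : ℕ,
      2 * τ * t ≤ K * (ρ₁ - ρ₀) / (N + 1) + 6 * (N + 1) * K₁ * ε := by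
    intro t ε ht htt₀ hε hεp hHt hHt' N
    have habs : |t| ≤ t₀ := by rwa [abs_of_pos ht]
    have habs' : |-t| ≤ t₀ := by rwa [abs_neg]
    set ρN := Real.log (H 0 - ε - q) with hρN
    have hexpN : Real.exp ρN = H 0 - ε - q := Real.exp_log (by linarith)
    have h0N : ρ₀ ≤ ρN := Real.exp_le_exp.mp (by rw [hexp₀, hexpN]; linarith)
    have hN1 : ρN ≤ ρ₁ := Real.exp_le_exp.mp (by rw [hexp₁, hexpN]; linarith)
    have hMt : ∀ c, M ≤ c → P c t = 0 := fun c h => hM c t habs h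
    have hMt' : ∀ c, M ≤ c → P c (-t) = 0 := fun c h => hM c (-t) habs' h
    have hPb : P (c₂ + τ * t) t = H t - q := by
      have h1 := hadd (c₂ + τ * t) t
      rw [hbot t habs] at h1; linarith
    have hPb' : P (c₂ + τ * (-t)) (-t) = H (-t) - q := by
      have h1 := hadd (c₂ + τ * (-t)) (-t)
      rw [hbot (-t) habs'] at h1; linarith
    have hne : ∀ ρ, ρ ≤ ρN → ∃ c, Real.exp ρ ≤ P c t := fun ρ h =>
      ⟨c₂ + τ * t, by rw [hPb]; have := Real.exp_le_exp.mpr h; linarith⟩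
    have hne' : ∀ ρ, ρ ≤ ρN → ∃ c, Real.exp ρ ≤ P c (-t) := fun ρ h =>
      ⟨c₂ + τ * (-t), by rw [hPb']; have := Real.exp_le_exp.mpr h; linarith⟩
    have hmid : ∀ ρ ρ', ρ ≤ ρN → ρ' ≤ ρN →
        C t ρ + C (-t) ρ' ≤ 2 * C 0 ((ρ + ρ') / 2) := by
      intro ρ ρ' h h'
      have := expLevel_combo_le (a := 1 / 2) (b := 1 / 2) (by norm_num) (by norm_num) hM0
        (fun c c' => by
          simpa using hP (1 / 2) (1 / 2) (by norm_num) (by norm_num) (by norm_num) c c' t (-t))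
        (hne ρ h) (hne' ρ' h')
      have e : (ρ + ρ') / 2 = 1 / 2 * ρ + 1 / 2 * ρ' := by ring
      rw [e]
      simp only [hC]
      linarith
    have hlow : ∀ ρ, ρ₀ ≤ ρ → ρ ≤ ρN → 2 * C 0 ρ - 2 * K₁ * ε ≤ C t ρ + C (-t) ρ := by
      intro ρ h h'
      set ρ' := Real.log (Real.exp ρ + ε) with hρ'
      have hexp' : Real.exp ρ' = Real.exp ρ + ε :=
        Real.exp_log (by have := Real.exp_pos ρ; linarith)
      have hρρ' : ρ ≤ ρ' := Real.exp_le_exp.mp (by rw [hexp']; linarith)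
      have hle : Real.exp ρ ≤ H 0 - ε - q := by
        rw [← hexpN]; exact Real.exp_le_exp.mpr h'
      have hρ'1 : ρ' ≤ ρ₁ := Real.exp_le_exp.mp (by rw [hexp', hexp₁]; linarith)
      have hp₀ρ : p₀ ≤ Real.exp ρ := by rw [← hexp₀]; exact Real.exp_le_exp.mpr h
      have step : ∀ c c', C t ρ < c → C (-t) ρ < c' → C 0 ρ' ≤ (c + c') / 2 := by
        intro c c' h1 h2
        have g1 : P c t < Real.exp ρ := lt_exp_of_expLevel_lt hMt h1
        have g2 : P c' (-t) < Real.exp ρ := lt_exp_of_expLevel_lt hMt' h2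
        set A := min (Q c t) (Q c' (-t)) with hA
        have hA1 : H 0 - ε - Real.exp ρ < A := by
          refine lt_min ?_ ?_
          · have := hadd c t; linarith
          · have := hadd c' (-t); linarith
        have hA0 : 0 < A := by linarith
        have q3 : A ≤ Q ((c + c') / 2) 0 := by
          have hh := hQ (1 / 2) (1 / 2) (by norm_num) (by norm_num) (by norm_num) c c' t (-t)
          have e1 : 1 / 2 * c + 1 / 2 * c' = (c + c') / 2 := by ring
          have e2 : 1 / 2 * t + 1 / 2 * (-t) = 0 := by ring
          rw [e1, e2] at hh
          refine le_trans ?_ hh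
          calc A = A ^ (1 / 2 : ℝ) * A ^ (1 / 2 : ℝ) := by
                rw [← Real.rpow_add hA0]; norm_num
            _ ≤ _ := mul_le_mul (Real.rpow_le_rpow hA0.le (min_le_left _ _) (by norm_num))
                (Real.rpow_le_rpow hA0.le (min_le_right _ _) (by norm_num)) (by positivity)
                (Real.rpow_nonneg (hQ0 _ _) _)
        refine csSup_le (hne0 ρ' (by linarith)) fun x hx => ?_
        have hx' : Real.exp ρ' ≤ P x 0 := hx
        by_contra! hlt
        have h3 : P x 0 ≤ P ((c + c') / 2) 0 := hanti 0 hlt.le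
        have h4 := hadd ((c + c') / 2) 0
        linarith
      have hsum : C 0 ρ' ≤ (C t ρ + C (-t) ρ) / 2 := by
        refine le_of_forall_pos_le_add fun e he => ?_
        have := step (C t ρ + e) (C (-t) ρ + e) (by linarith) (by linarith)
        linarith
      have hL := hLip ρ ρ' hρρ' hρ'1
      have hl := hlog ρ ρ' ε hexp' hp₀ρ hε.le
      have : K * (ρ' - ρ) ≤ K₁ * ε := by
        calc K * (ρ' - ρ) ≤ K * (ε / p₀) := by gcongr
          _ = K₁ * ε := by rw [hK₁]; ring
      linarith
    have hend : 2 * τ * t - 2 * K₁ * ε ≤ C t ρN - C (-t) ρN := by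
      have h1 : c₂ + τ * t ≤ C t ρN := le_expLevel hMt (by rw [hPb, hexpN]; linarith)
      have h2 := hmid ρN ρN le_rfl le_rfl
      rw [add_self_div_two] at h2
      have h3 := hLip ρN ρ₁ hN1 le_rfl
      have h4 := hlog ρN ρ₁ ε (by rw [hexpN, hexp₁]; ring) (by rw [hexpN]; linarith) hε.le
      have : K * (ρ₁ - ρN) ≤ K₁ * ε := by
        calc K * (ρ₁ - ρN) ≤ K * (ε / p₀) := by gcongr
          _ = K₁ * ε := by rw [hK₁]; ring
      linarith
    have htop1 : ∀ s s', |s| ≤ t₀ → |s'| ≤ t₀ → C s ρ₀ ≤ C s' ρ₀ := by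
      intro s s' hs hs'
      have hc₁ : c₁ ≤ C s' ρ₀ := le_expLevel (fun c h => hM c s' hs' h)
        (by rw [htop c₁ s' hs' le_rfl, hexp₀])
      refine csSup_le ⟨c₁, show Real.exp ρ₀ ≤ P c₁ s by rw [htop c₁ s hs le_rfl, hexp₀]⟩
        fun c hc' => ?_
      rcases le_total c c₁ with h | h
      · exact h.trans hc₁
      · refine le_expLevel (fun c h => hM c s' hs' h) ?_
        have hc'' : Real.exp ρ₀ ≤ P c s := hc'
        rwa [htop c s' hs' h, ← htop c s hs h]
    set h := (ρN - ρ₀) / (N + 1) with hh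
    have hN0 : (0 : ℝ) < N + 1 := by positivity
    have hh0 : 0 ≤ h := div_nonneg (by linarith) hN0.le
    have hhN : (N + 1) * h = ρN - ρ₀ := by rw [hh]; field_simp
    set w : ℕ → ℝ := fun j => C 0 (ρ₀ + j * (h / 2)) with hw
    have hgrid : ∀ j : ℕ, j ≤ 2 * N + 2 → ρ₀ + j * (h / 2) ≤ ρN := by
      intro j hj
      have hj' : (j : ℝ) ≤ 2 * (N + 1) := by exact_mod_cast (show j ≤ 2 * (N + 1) by omega)
      nlinarith
    have hgrid0 : ∀ j : ℕ, ρ₀ ≤ ρ₀ + j * (h / 2) := by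
      intro j; have : 0 ≤ (j : ℝ) * (h / 2) := by positivity
      linarith
    have hsd := sum_second_difference_le (w := w) (N := N) (by
      intro j hj
      have := hconc0 (1 / 2) (1 / 2) (by norm_num) (by norm_num) (by norm_num)
        (ρ₀ + j * (h / 2)) (ρ₀ + (j + 2 : ℕ) * (h / 2))
        (by linarith [hgrid j (by omega)]) (by linarith [hgrid (j + 2) (by omega)])
      have e : 1 / 2 * (ρ₀ + j * (h / 2)) + 1 / 2 * (ρ₀ + (j + 2 : ℕ) * (h / 2)) =
          ρ₀ + (j + 1 : ℕ) * (h / 2) := by push_cast; ring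
      rw [e] at this
      simp only [hw]
      linarith)
    set E : ℕ → ℝ := fun i => C t (ρ₀ + (2 * i : ℕ) * (h / 2)) -
      C (-t) (ρ₀ + (2 * i : ℕ) * (h / 2)) with hE
    have hstep : ∀ i ∈ Finset.range (N + 1), E (i + 1) - E i ≤
        2 * (2 * w (2 * i + 1) - w (2 * i) - w (2 * i + 2)) + 4 * K₁ * ε := by
      intro i hi
      have hi' : i < N + 1 := Finset.mem_range.mp hi
      have g1 := hgrid (2 * i) (by omega)
      have g2 := hgrid (2 * i + 2) (by omega)
      have m1 := hmid _ _ g2 g1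
      have e : (ρ₀ + (2 * i + 2 : ℕ) * (h / 2) + (ρ₀ + (2 * i : ℕ) * (h / 2))) / 2 =
          ρ₀ + (2 * i + 1 : ℕ) * (h / 2) := by push_cast; ring
      rw [e] at m1
      have l1 := hlow _ (hgrid0 (2 * i)) g1
      have l2 := hlow _ (hgrid0 (2 * i + 2)) g2
      have e2 : 2 * (i + 1) = 2 * i + 2 := by ring
      simp only [hE, hw, e2]
      linarith
    have hsum := Finset.sum_le_sum hstep
    rw [Finset.sum_range_sub, Finset.sum_add_distrib, ← Finset.mul_sum] at hsum
    have hE0 : E 0 ≤ 0 := by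
      have := htop1 t (-t) habs habs'
      simp only [hE]; simpa using this
    have hE0' : 0 ≤ E 0 := by
      have := htop1 (-t) t habs' habs
      simp only [hE]; simpa using this
    have hEN : E (N + 1) = C t ρN - C (-t) ρN := by
      have e : ρ₀ + (2 * (N + 1) : ℕ) * (h / 2) = ρN := by push_cast; linarith
      simp only [hE, e]
    have hw1 : w 1 ≤ w 0 := hanti0 _ _ (by push_cast; linarith)
      (by have := hgrid 1 (by omega); linarith)
    have hw2 : w (2 * N + 1) - w (2 * N + 2) ≤ K * (h / 2) := by
      have := hLip (ρ₀ + (2 * N + 1 : ℕ) * (h / 2)) (ρ₀ + (2 * N + 2 : ℕ) * (h / 2))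
        (by push_cast; linarith) (by have := hgrid (2 * N + 2) le_rfl; linarith)
      refine this.trans (le_of_eq ?_)
      push_cast; ring
    have hKh : K * h ≤ K * (ρ₁ - ρ₀) / (N + 1) := by
      rw [hh, ← mul_div_assoc]
      gcongr
    simp only [Finset.sum_const, Finset.card_range, nsmul_eq_mul] at hsum
    push_cast at hsum
    have hKε : 0 ≤ K₁ * ε := by positivity
    have hNn : (0 : ℝ) ≤ N * (K₁ * ε) := by positivity
    linarith
  set D := K * (ρ₁ - ρ₀) with hD
  have hD0 : 0 ≤ D := mul_nonneg hK0 (by linarith)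
  set A := (D + 1) / τ with hA
  have hA0 : 0 < A := by positivity
  set X := 12 * (A + 2) * K₁ with hX
  have hX0 : 0 ≤ X := by positivity
  set η := τ / (X + 1) with hη
  have hη0 : 0 < η := by positivity
  have hXη : X * η < τ := by
    have : (X + 1) * η = τ := by rw [hη]; field_simp
    linarith
  obtain ⟨t₁, ht₁, hfl⟩ := hflat η hη0
  obtain ⟨t, ht, htt₁, htt₀, ht1, htε⟩ : ∃ t : ℝ, 0 < t ∧ t < t₁ ∧ t ≤ t₀ ∧ t ≤ 1 ∧
      2 * η * t < H 0 - q - p₀ := by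
    set g := H 0 - q - p₀ with hg
    have hg0 : 0 < g := by linarith
    refine ⟨min (min (t₁ / 2) t₀) (min 1 (g / (4 * η))), by positivity, ?_, ?_, ?_, ?_⟩
    · exact lt_of_le_of_lt ((min_le_left _ _).trans (min_le_left _ _)) (by linarith)
    · exact (min_le_left _ _).trans (min_le_right _ _)
    · exact (min_le_right _ _).trans (min_le_left _ _)
    · calc 2 * η * _ ≤ 2 * η * (g / (4 * η)) :=
            mul_le_mul_of_nonneg_left ((min_le_right _ _).trans (min_le_right _ _)) (by positivity)
        _ = g / 2 := by field_simp; norm_num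
        _ < g := by linarith
  have hη2 : 0 < η * t ^ 2 := by positivity
  have hfin := main t (2 * η * t ^ 2) ht htt₀ (by positivity)
    (by nlinarith) (by have := hfl t (by rwa [abs_of_pos ht]); linarith)
    (by have := hfl (-t) (by rwa [abs_neg, abs_of_pos ht]); rw [neg_sq] at this; linarith)
    ⌈A / t⌉₊
  have hN1 : A / t ≤ ⌈A / t⌉₊ := Nat.le_ceil _
  have hN2 : (⌈A / t⌉₊ : ℝ) < A / t + 1 := Nat.ceil_lt_add_one (by positivity)
  have b1 : D / (⌈A / t⌉₊ + 1) ≤ τ * t := by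
    rw [div_le_iff₀ (by positivity)]
    have : τ * t * (A / t) = D + 1 := by rw [hA]; field_simp
    have h2 : τ * t * (A / t) ≤ τ * t * (⌈A / t⌉₊ + 1) := by gcongr; linarith
    linarith
  have b2 : 6 * ((⌈A / t⌉₊ : ℝ) + 1) * K₁ * (2 * η * t ^ 2) ≤ X * η * t := by
    have h1 : ((⌈A / t⌉₊ : ℝ) + 1) * t ≤ A + 2 := by
      have : (A / t + 2) * t = A + 2 * t := by field_simp
      nlinarith
    calc 6 * ((⌈A / t⌉₊ : ℝ) + 1) * K₁ * (2 * η * t ^ 2)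
        = (((⌈A / t⌉₊ : ℝ) + 1) * t) * (12 * K₁ * η * t) := by ring
      _ ≤ (A + 2) * (12 * K₁ * η * t) := by gcongr
      _ = X * η * t := by rw [hX]; ring
  nlinarith

theorem exists_ball_continuousOn_norm_le {X V Q : Type*} [NormedAddCommGroup X] [ProperSpace X]
    [NormedAddCommGroup V] [NormedAddCommGroup Q] {f : X × Q → V} {x₀ : X} {P : Set Q}
    (hP : IsCompact P) (hf : ∀ q ∈ P, ∀ᶠ z in 𝓝 (x₀, q), ContinuousAt f z) :
    ∃ r > 0, ContinuousOn f (Metric.closedBall x₀ r ×ˢ P) ∧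
      ∃ B, ∀ x ∈ Metric.closedBall x₀ r, ∀ q ∈ P, ‖f (x, q)‖ ≤ B := by
  have h1 : ∀ᶠ x in 𝓝 x₀, ∀ q ∈ P, ContinuousAt f (x, q) :=
    hP.eventually_forall_of_forall_eventually fun q hq => hf q hq
  obtain ⟨r, hr, hball⟩ := Metric.nhds_basis_closedBall.eventually_iff.mp h1
  have hc : ContinuousOn f (Metric.closedBall x₀ r ×ˢ P) := fun z hz =>
    (hball hz.1 z.2 hz.2).continuousWithinAt
  obtain ⟨B, hB⟩ := ((isCompact_closedBall x₀ r).prod hP).exists_bound_of_continuousOn hc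
  exact ⟨r, hr, hc, B, fun x hx q hq => hB (x, q) ⟨hx, hq⟩⟩

section

universe u
variable {X V Q : Type u} [NormedAddCommGroup X] [NormedSpace ℝ X] [ProperSpace X]
  [NormedAddCommGroup V] [NormedSpace ℝ V] [NormedAddCommGroup Q] [NormedSpace ℝ Q]
  [MeasurableSpace Q] [OpensMeasurableSpace Q] [SecondCountableTopology Q]

/-- Integrals over a compact set of a function depending in a `C^k` way on a parameter are `C^k`
functions of the parameter. -/
theorem contDiffAt_setIntegral (k : ℕ) {ν : Measure Q} {P : Set Q}
    [IsFiniteMeasureOnCompacts ν] {f : X × Q → V} {x₀ : X} (hP : IsCompact P)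
    (hf : ∀ q ∈ P, ContDiffAt ℝ k f (x₀, q)) :
    ContDiffAt ℝ k (fun x => ∫ q in P, f (x, q) ∂ν) x₀ := by
  have hPm : MeasurableSet P := hP.measurableSet
  have hfin : IsFiniteMeasure (ν.restrict P) := ⟨by simpa using hP.measure_lt_top⟩
  induction k generalizing V with
  | zero =>
    obtain ⟨r, hr, hc, B, hB⟩ := exists_ball_continuousOn_norm_le (f := f) (x₀ := x₀) hP
      fun q hq => by
        have := (hf q hq).eventually (by simp)
        filter_upwards [this] with z hz using hz.continuousAt
    refine contDiffAt_zero.mpr ⟨Metric.ball x₀ r, Metric.ball_mem_nhds _ hr, ?_⟩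
    intro x hx
    refine ContinuousAt.continuousWithinAt ?_
    have hnear : ∀ᶠ y in 𝓝 x, y ∈ Metric.closedBall x₀ r := by
      filter_upwards [Metric.isOpen_ball.mem_nhds hx] with y hy
        using Metric.ball_subset_closedBall hy
    refine continuousAt_of_dominated (bound := fun _ => B) ?_ ?_ (integrable_const _) ?_
    · filter_upwards [hnear] with y hy
      exact (hc.comp (f := fun q => (y, q)) (by fun_prop)
        fun q hq => ⟨hy, hq⟩).aestronglyMeasurable hPm
    · filter_upwards [hnear] with y hy
      filter_upwards [ae_restrict_mem hPm] with q hq using hB y hy q hq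
    · filter_upwards [ae_restrict_mem hPm] with q hq
      have h2 : ContinuousOn (fun y => f (y, q)) (Metric.closedBall x₀ r) :=
        hc.comp (f := fun y => (y, q)) (by fun_prop) fun y hy => ⟨hy, hq⟩
      exact h2.continuousAt hnear
  | succ k ih =>
    push_cast at hf ⊢
    rw [contDiffAt_succ_iff_hasFDerivAt]
    set f' : X × Q → X →L[ℝ] V :=
      fun z => (fderiv ℝ f z).comp (ContinuousLinearMap.inl ℝ X Q) with hf'
    have hf'k : ∀ q ∈ P, ContDiffAt ℝ k f' (x₀, q) := fun q hq =>
      ((hf q hq).fderiv_right_succ).clm_comp contDiffAt_const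
    refine ⟨fun x => ∫ q in P, f' (x, q) ∂ν, ?_, ih hf'k⟩
    have hev : ∀ q ∈ P, ∀ᶠ z in 𝓝 (x₀, q), ContDiffAt ℝ (k + 1) f z := fun q hq =>
      (hf q hq).eventually (by exact_mod_cast ENat.natCast_ne_top (k + 1))
    obtain ⟨r₁, hr₁, hc₁, B₁, hB₁⟩ := exists_ball_continuousOn_norm_le (f := f) (x₀ := x₀) hP
      fun q hq => by filter_upwards [hev q hq] with z hz using hz.continuousAt
    obtain ⟨r₂, hr₂, hc₂, B₂, hB₂⟩ := exists_ball_continuousOn_norm_le (f := f') (x₀ := x₀) hP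
      fun q hq => by
        filter_upwards [hev q hq] with z hz
        exact ((hz.fderiv_right_succ).clm_comp contDiffAt_const).continuousAt
    have h1 : ∀ᶠ x in 𝓝 x₀, ∀ q ∈ P, ContDiffAt ℝ (k + 1) f (x, q) :=
      hP.eventually_forall_of_forall_eventually fun q hq => hev q hq
    obtain ⟨r₃, hr₃, hball⟩ := Metric.nhds_basis_ball.eventually_iff.mp h1
    set r := min r₁ (min r₂ r₃) with hr
    have hr0 : 0 < r := by positivity
    refine ⟨Metric.ball x₀ r, Metric.ball_mem_nhds _ hr0, fun x hx => ?_⟩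
    have s1 : ∀ y ∈ Metric.ball x₀ r, y ∈ Metric.closedBall x₀ r₁ := fun y hy =>
      Metric.ball_subset_closedBall (Metric.ball_subset_ball (min_le_left _ _) hy)
    have s2 : ∀ y ∈ Metric.ball x₀ r, y ∈ Metric.closedBall x₀ r₂ := fun y hy =>
      Metric.ball_subset_closedBall
        (Metric.ball_subset_ball ((min_le_right _ _).trans (min_le_left _ _)) hy)
    have s3 : ∀ y ∈ Metric.ball x₀ r, y ∈ Metric.ball x₀ r₃ := fun y hy =>
      Metric.ball_subset_ball ((min_le_right _ _).trans (min_le_right _ _)) hy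
    have hs : Metric.ball x₀ r ∈ 𝓝 x := Metric.isOpen_ball.mem_nhds hx
    have hmeas : ∀ y ∈ Metric.ball x₀ r,
        AEStronglyMeasurable (fun q => f (y, q)) (ν.restrict P) := fun y hy =>
      (hc₁.comp (f := fun q => (y, q)) (by fun_prop)
        fun q hq => ⟨s1 y hy, hq⟩).aestronglyMeasurable hPm
    refine hasFDerivAt_integral_of_dominated_of_fderiv_le (𝕜 := ℝ) (F := fun x q => f (x, q))
      (F' := fun x q => f' (x, q)) (bound := fun _ => B₂) hs ?_ ?_ ?_ ?_ (integrable_const _) ?_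
    · filter_upwards [hs] with y hy using hmeas y hy
    · refine Integrable.of_bound (hmeas x hx) B₁ ?_
      filter_upwards [ae_restrict_mem hPm] with q hq using hB₁ x (s1 x hx) q hq
    · exact (hc₂.comp (f := fun q => (x, q)) (by fun_prop)
        fun q hq => ⟨s2 x hx, hq⟩).aestronglyMeasurable hPm
    · filter_upwards [ae_restrict_mem hPm] with q hq y hy using hB₂ y (s2 y hy) q hq
    · filter_upwards [ae_restrict_mem hPm] with q hq y hy
      have hd : DifferentiableAt ℝ f (y, q) :=
        (hball (s3 y hy) q hq).differentiableAt (by simp)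
      exact hd.hasFDerivAt.comp y (hasFDerivAt_prodMk_left y q)

end

/-- A function which locally parametrizes the zero set of a `C^k` function with nonvanishing
derivative in the last variable is itself `C^k`. -/
theorem contDiffAt_of_forall_zero {X : Type*} [NormedAddCommGroup X] [NormedSpace ℝ X]
    [CompleteSpace X] {k : WithTop ℕ∞} (hk : k ≠ 0) {G : X × ℝ → ℝ} {φ : X → ℝ} {u₀ : X}
    (hG : ContDiffAt ℝ k G (u₀, φ u₀)) (h0 : G (u₀, φ u₀) = 0)
    (hd : fderiv ℝ G (u₀, φ u₀) (0, 1) ≠ 0)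
    (huniq : ∀ᶠ z in 𝓝 (u₀, φ u₀), G z = 0 → z.2 = φ z.1) : ContDiffAt ℝ k φ u₀ := by
  have hinv : (fderiv ℝ G (u₀, φ u₀) ∘L .inr ℝ X ℝ).IsInvertible := by
    refine ⟨ContinuousLinearEquiv.unitsEquivAut ℝ (Units.mk0 _ hd), ?_⟩
    ext
    simp
  have hψ := hG.contDiffAt_implicitFunction hk hinv
  refine hψ.congr_of_eventuallyEq ?_
  have h1 := hG.eventually_apply_implicitFunction hk hinv
  have h2 : Filter.Tendsto (fun x => (x, hG.implicitFunction hk hinv x)) (𝓝 u₀)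
      (𝓝 (u₀, φ u₀)) := by
    have := (hψ.continuousAt.tendsto)
    rw [hG.implicitFunction_apply_self hk hinv] at this
    exact Filter.tendsto_id.prodMk_nhds this
  filter_upwards [h1, h2.eventually huniq] with x hx hx'
  exact (hx' (hx.trans h0)).symm

section Boundary

variable {E : Type*} [NormedAddCommGroup E] [NormedSpace ℝ E] {K : Set E}

theorem hasDerivAt_comp_line {V : Type*} [NormedAddCommGroup V] [NormedSpace ℝ V] {f : E → V}
    {p v : E} {t : ℝ} (hf : DifferentiableAt ℝ f (p + t • v)) :
    HasDerivAt (fun t : ℝ => f (p + t • v)) (fderiv ℝ f (p + t • v) v) t := by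
  have h1 : HasDerivAt (fun t : ℝ => p + t • v) v t := by
    simpa using ((hasDerivAt_id t).smul_const v).const_add p
  exact hf.hasFDerivAt.comp_hasDerivAt t h1

/-- Near each boundary point, a body with `C²` boundary of positive curvature is described by a
local defining function, whose derivative is negative in inward directions. -/
theorem HasC2PositiveCurvatureBoundary.exists_local (hK : Convex ℝ K)
    (h : HasC2PositiveCurvatureBoundary K) {p : E}
    (hp : p ∈ frontier K) :
    ∃ g : E → ℝ, ContDiffAt ℝ 2 g p ∧ (∀ᶠ x in 𝓝 p, x ∈ frontier K ↔ g x = 0) ∧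
      (∀ z ∈ interior K, fderiv ℝ g p (z - p) < 0) ∧
      ∀ v : E, v ≠ 0 → fderiv ℝ g p v = 0 → 0 < fderiv ℝ (fderiv ℝ g) p v v := by
  obtain ⟨g, U, hU, hfU, hg, hfr, hint, hcurv⟩ := h
  have hUp : U ∈ 𝓝 p := hU.mem_nhds (hfU hp)
  have hgp : ContDiffAt ℝ 2 g p := hg.contDiffAt hUp
  have hd : DifferentiableAt ℝ g p := hgp.differentiableAt (by norm_num)
  have hg0 : g p = 0 := (hfr p (hfU hp)).mp hp
  have hle : ∀ z ∈ interior K, fderiv ℝ g p (z - p) ≤ 0 := by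
    intro z hz
    have h1 := hasDerivAt_comp_line (f := g) (p := p) (v := z - p) (t := 0) (by simpa using hd)
    rw [zero_smul, add_zero] at h1
    have h2 := h1.tendsto_slope_zero_right
    refine le_of_tendsto h2 ?_
    have hcont : Filter.Tendsto (fun t : ℝ => p + t • (z - p)) (𝓝[>] 0) (𝓝 p) := by
      have : ContinuousAt (fun t : ℝ => p + t • (z - p)) 0 := by fun_prop
      simpa [ContinuousAt] using this.tendsto.mono_left nhdsWithin_le_nhds
    filter_upwards [hcont.eventually hUp, Ioc_mem_nhdsGT (zero_lt_one' ℝ)] with t ht ht1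
    have := hint _ ht (hK.add_smul_sub_mem_interior' (frontier_subset_closure hp) hz ht1)
    simp only [zero_add, zero_smul, add_zero, hg0, sub_zero, smul_eq_mul]
    exact mul_nonpos_of_nonneg_of_nonpos (inv_nonneg.mpr ht1.1.le) this.le
  refine ⟨g, hgp, ?_, ?_, ?_⟩
  · filter_upwards [hUp] with x hx using hfr x hx
  · intro z hz
    obtain ⟨w, hw⟩ : ∃ w, 0 < fderiv ℝ g p w := by
      by_contra! hcon
      refine (hcurv p hp).1 ?_
      ext w
      have h1 := hcon w
      have h2 := hcon (-w)
      rw [map_neg] at h2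
      simp only [zero_apply]
      linarith
    have hc : Filter.Tendsto (fun t : ℝ => z + t • w) (𝓝[>] 0) (𝓝 z) := by
      have : ContinuousAt (fun t : ℝ => z + t • w) 0 := by fun_prop
      simpa [ContinuousAt] using this.tendsto.mono_left nhdsWithin_le_nhds
    obtain ⟨t, ht, ht0⟩ := ((hc.eventually (isOpen_interior.mem_nhds hz)).and
      self_mem_nhdsWithin).exists
    have h1 := hle _ ht
    rw [add_sub_right_comm, map_add, map_smul, smul_eq_mul] at h1
    have h2 : 0 < t * fderiv ℝ g p w := mul_pos ht0 hw
    linarith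
  · intro v hv h0
    have := (hcurv p hp).2 v hv h0
    rwa [iteratedFDeriv_two_apply] at this

theorem HasC2PositiveCurvatureBoundary.strictConvex (hK : Convex ℝ K) (hKc : IsClosed K)
    (h : HasC2PositiveCurvatureBoundary K) : StrictConvex ℝ K := by
  intro x hx y hy hxy a b ha hb hab
  by_contra hp
  have hseg : ∀ z ∈ openSegment ℝ x y, z ∉ interior K := by
    intro z hz hzi
    refine hp ?_
    obtain ⟨a', b', ha', hb', hab', rfl⟩ := hz
    rcases le_total a a' with h1 | h1
    · -- between `y` and the interior point
      have h2 : a • x + b • y = y + (a / a') • ((a' • x + b' • y) - y) := by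
        have e1 : b' = 1 - a' := by linarith
        have e2 : b = 1 - a := by linarith
        rw [e1, e2]
        have : (a / a') • ((a' • x + (1 - a') • y) - y) = (a / a' * a') • (x - y) := by
          rw [mul_smul]; congr 1; module
        rw [this, div_mul_cancel₀ _ ha'.ne']
        module
      rw [h2]
      exact hK.add_smul_sub_mem_interior' (subset_closure hy) hzi
        ⟨by positivity, (div_le_one ha').mpr h1⟩
    · have h3 : b ≤ b' := by linarith
      have h2 : a • x + b • y = x + (b / b') • ((a' • x + b' • y) - x) := by
        have e1 : a' = 1 - b' := by linarith
        have e2 : a = 1 - b := by linarith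
        rw [e1, e2]
        have : (b / b') • (((1 - b') • x + b' • y) - x) = (b / b' * b') • (y - x) := by
          rw [mul_smul]; congr 1; module
        rw [this, div_mul_cancel₀ _ hb'.ne']
        module
      rw [h2]
      exact hK.add_smul_sub_mem_interior' (subset_closure hx) hzi
        ⟨by positivity, (div_le_one hb').mpr h3⟩
  set p := a • x + b • y with hpdef
  set v := y - x with hv
  have hline : ∀ᶠ t : ℝ in 𝓝 0, p + t • v ∈ frontier K := by
    filter_upwards [Ioo_mem_nhds (neg_lt_zero.mpr hb) ha] with t ht
    have e : p + t • v = (a - t) • x + (b + t) • y := by rw [hpdef, hv]; module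
    have hz : p + t • v ∈ openSegment ℝ x y := by
      rw [e]
      exact ⟨a - t, b + t, by linarith [ht.2], by linarith [ht.1], by linarith, rfl⟩
    rw [hKc.frontier_eq]
    exact ⟨hK.openSegment_subset hx hy hz, hseg _ hz⟩
  have hpf : p ∈ frontier K := by simpa using hline.self_of_nhds
  obtain ⟨g, hg, hfr, -, hcurv⟩ := h.exists_local hK hpf
  have hcont : Filter.Tendsto (fun t : ℝ => p + t • v) (𝓝 0) (𝓝 p) := by
    have : ContinuousAt (fun t : ℝ => p + t • v) 0 := by fun_prop
    simpa [ContinuousAt] using this.tendsto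
  have hz : ∀ᶠ t : ℝ in 𝓝 0, g (p + t • v) = 0 := by
    filter_upwards [hline, hcont.eventually hfr] with t h1 h2 using h2.mp h1
  have hdiff : ∀ᶠ t : ℝ in 𝓝 0, DifferentiableAt ℝ g (p + t • v) := by
    filter_upwards [hcont.eventually (hg.eventually (by simp))] with t ht
      using ht.differentiableAt (by norm_num)
  have hd1 : ∀ᶠ t : ℝ in 𝓝 0, fderiv ℝ g (p + t • v) v = 0 := by
    filter_upwards [hz.eventually_nhds, hdiff] with t h1 h2
    have h3 := hasDerivAt_comp_line h2
    have h4 : HasDerivAt (fun t : ℝ => g (p + t • v)) 0 t :=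
      (hasDerivAt_const t (0 : ℝ)).congr_of_eventuallyEq h1
    exact h3.unique h4
  have hd2 : fderiv ℝ (fderiv ℝ g) p v v = 0 := by
    have hdd : DifferentiableAt ℝ (fderiv ℝ g) p :=
      (hg.fderiv_right (m := 1) (by norm_num)).differentiableAt (by norm_num)
    have h3 := hasDerivAt_comp_line (f := fderiv ℝ g) (p := p) (v := v) (t := 0)
      (by simpa using hdd)
    rw [zero_smul, add_zero] at h3
    have h4 := h3.clm_apply (hasDerivAt_const (0 : ℝ) v)
    have h5 : HasDerivAt (fun t : ℝ => fderiv ℝ g (p + t • v) v) 0 0 :=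
      (hasDerivAt_const (0 : ℝ) (0 : ℝ)).congr_of_eventuallyEq hd1
    have := h4.unique h5
    simpa using this
  have hvne : v ≠ 0 := sub_ne_zero.mpr hxy.symm
  have := hcurv v hvne (by simpa using hd1.self_of_nhds)
  exact absurd hd2 this.ne.symm

/-- A function with vanishing first and nonnegative second derivative along a line is bounded
below to second order. -/
theorem le_of_fderiv_fderiv_nonneg {f : E → ℝ} {p v : E} (hf : ContDiffAt ℝ 2 f p)
    (h1 : fderiv ℝ f p v = 0) (h2 : 0 ≤ fderiv ℝ (fderiv ℝ f) p v v) {η : ℝ} (hη : 0 < η) :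
    ∃ t₁ > 0, ∀ t : ℝ, |t| < t₁ → f p - η * t ^ 2 ≤ f (p + t • v) := by
  have hcont : Filter.Tendsto (fun t : ℝ => p + t • v) (𝓝 0) (𝓝 p) := by
    have : ContinuousAt (fun t : ℝ => p + t • v) 0 := by fun_prop
    simpa [ContinuousAt] using this.tendsto
  have hdiff : ∀ᶠ t : ℝ in 𝓝 0, DifferentiableAt ℝ f (p + t • v) := by
    filter_upwards [hcont.eventually (hf.eventually (by simp))] with t ht
      using ht.differentiableAt (by norm_num)
  have hdd : DifferentiableAt ℝ (fderiv ℝ f) p :=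
    (hf.fderiv_right (m := 1) (by norm_num)).differentiableAt (by norm_num)
  have h3 := hasDerivAt_comp_line (f := fderiv ℝ f) (p := p) (v := v) (t := 0)
    (by simpa using hdd)
  rw [zero_smul, add_zero] at h3
  have h4 : HasDerivAt (fun t : ℝ => fderiv ℝ f (p + t • v) v)
      (fderiv ℝ (fderiv ℝ f) p v v) 0 := by
    simpa using h3.clm_apply (hasDerivAt_const (0 : ℝ) v)
  have h5 : ∀ᶠ t : ℝ in 𝓝 0, ‖fderiv ℝ f (p + t • v) v -
      t * fderiv ℝ (fderiv ℝ f) p v v‖ ≤ η * ‖t‖ := by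
    have := h4.isLittleO.def hη
    simpa [h1] using this
  obtain ⟨t₁, ht₁, hball⟩ := Metric.nhds_basis_ball.eventually_iff.mp (hdiff.and h5)
  refine ⟨t₁, ht₁, fun t ht => ?_⟩
  set ψ : ℝ → ℝ := fun t => f (p + t • v) + η * t ^ 2 with hψ
  have hder : ∀ s : ℝ, |s| < t₁ → HasDerivAt ψ (fderiv ℝ f (p + s • v) v + 2 * η * s) s := by
    intro s hs
    have := (hasDerivAt_comp_line (hball (by simpa using hs)).1).add
      (((hasDerivAt_id s).pow 2).const_mul η)
    refine this.congr_deriv ?_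
    simp
    ring
  have hbd : ∀ s : ℝ, |s| < t₁ → |fderiv ℝ f (p + s • v) v -
      s * fderiv ℝ (fderiv ℝ f) p v v| ≤ η * |s| := fun s hs =>
    (hball (by simpa using hs)).2
  have hψ0 : ψ 0 = f p := by simp [hψ]
  suffices ψ 0 ≤ ψ t by simp only [hψ0] at this; simp only [hψ] at this; linarith
  rcases le_total 0 t with h0 | h0
  · have hm : MonotoneOn ψ (Icc 0 t) := by
      have hs : ∀ s ∈ Icc 0 t, |s| < t₁ := fun s hs => by
        rw [abs_of_nonneg hs.1]; exact hs.2.trans_lt ((le_abs_self t).trans_lt ht)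
      refine monotoneOn_of_deriv_nonneg (convex_Icc 0 t)
        (fun s h => (hder s (hs s h)).continuousAt.continuousWithinAt)
        (fun s h => (hder s (hs s (interior_subset h))).differentiableAt.differentiableWithinAt) ?_
      intro s h
      have h' := interior_subset h
      rw [(hder s (hs s h')).deriv]
      have := (abs_le.mp (hbd s (hs s h'))).1
      rw [abs_of_nonneg h'.1] at this
      have := mul_nonneg h'.1 h2
      nlinarith [mul_nonneg hη.le h'.1]
    exact hm ⟨le_rfl, h0⟩ ⟨h0, le_rfl⟩ h0
  · have hm : AntitoneOn ψ (Icc t 0) := by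
      have hs : ∀ s ∈ Icc t 0, |s| < t₁ := fun s hs => by
        rw [abs_of_nonpos hs.2]; exact (neg_le_neg hs.1).trans_lt ((neg_le_abs t).trans_lt ht)
      refine antitoneOn_of_deriv_nonpos (convex_Icc t 0)
        (fun s h => (hder s (hs s h)).continuousAt.continuousWithinAt)
        (fun s h => (hder s (hs s (interior_subset h))).differentiableAt.differentiableWithinAt) ?_
      intro s h
      have h' := interior_subset h
      rw [(hder s (hs s h')).deriv]
      have := (abs_le.mp (hbd s (hs s h'))).2
      rw [abs_of_nonpos h'.2] at this
      have := mul_nonneg (neg_nonneg.mpr h'.2) h2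
      nlinarith [mul_nonneg hη.le (neg_nonneg.mpr h'.2)]
    exact hm ⟨le_rfl, h0⟩ ⟨h0, le_rfl⟩ h0

end Boundary

section Ray

variable {E : Type*} [NormedAddCommGroup E] [NormedSpace ℝ E] {K : Set E}

/-- The largest parameter for which the line through `z` with direction `x` lies in `K`. -/
noncomputable def rayEnd (K : Set E) (z x : E) : ℝ := sSup {s : ℝ | z + s • x ∈ K}

/-- The length, relative to `x`, of the chord of `K` through `z` with direction `x`. -/
noncomputable def chordLength (K : Set E) (z x : E) : ℝ := rayEnd K z x + rayEnd K z (-x)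

/-- The pairs `(z, x)` such that the line through `z` with direction `x` meets the interior
of `K`. -/
def crossing (K : Set E) : Set (E × E) := {u | ∃ s : ℝ, u.1 + s • u.2 ∈ interior K}

/-- The union of the lines with direction `x` which meet the interior of `K ∩ (x + K)`. -/
def overlap (K : Set E) (x : E) : Set E :=
  {z | ∃ s : ℝ, z + s • x ∈ interior K ∧ z + (s - 1) • x ∈ interior K}

theorem isOpen_crossing : IsOpen (crossing K) := by
  have : crossing K = ⋃ s : ℝ, {u : E × E | u.1 + s • u.2 ∈ interior K} := by
    ext u; simp [crossing]
  rw [this]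
  exact isOpen_iUnion fun s => isOpen_interior.preimage (by fun_prop)

theorem crossing_neg {z x : E} (h : (z, x) ∈ crossing K) : (z, -x) ∈ crossing K := by
  obtain ⟨s, hs⟩ := h
  exact ⟨-s, by simpa using hs⟩

theorem isOpen_overlap {x : E} : IsOpen (overlap K x) := by
  have : overlap K x = ⋃ s : ℝ, {z : E | z + s • x ∈ interior K ∧
      z + (s - 1) • x ∈ interior K} := by
    ext u; simp [overlap]
  rw [this]
  exact isOpen_iUnion fun s => (isOpen_interior.preimage (by fun_prop)).inter
    (isOpen_interior.preimage (by fun_prop))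

theorem convex_overlap (hK : Convex ℝ K) {x : E} : Convex ℝ (overlap K x) := by
  rintro z ⟨s, hs, hs'⟩ w ⟨r, hr, hr'⟩ a b ha hb hab
  refine ⟨a * s + b * r, ?_, ?_⟩
  · convert hK.interior hs hr ha hb hab using 1
    module
  · convert hK.interior hs' hr' ha hb hab using 1
    have : a * s + b * r - 1 = a * (s - 1) + b * (r - 1) := by linear_combination hab
    rw [this]
    module

theorem bddAbove_ray (hK : Bornology.IsBounded K) {x : E} (hx : x ≠ 0) (z : E) :
    BddAbove {s : ℝ | z + s • x ∈ K} := by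
  obtain ⟨R, hR⟩ := hK.exists_norm_le
  refine ⟨(R + ‖z‖) / ‖x‖, fun s hs => ?_⟩
  have h1 : ‖z + s • x‖ ≤ R := hR _ hs
  rw [le_div_iff₀ (norm_pos_iff.mpr hx)]
  have h2 : ‖s • x‖ ≤ ‖z + s • x‖ + ‖z‖ := by
    simpa using norm_sub_le (z + s • x) z
  rw [norm_smul] at h2
  have := mul_le_mul_of_nonneg_right (le_abs_self s) (norm_nonneg x)
  rw [← Real.norm_eq_abs] at this
  linarith

theorem le_rayEnd (hK : Bornology.IsBounded K) {z x : E} (hx : x ≠ 0) {s : ℝ}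
    (hs : z + s • x ∈ K) : s ≤ rayEnd K z x :=
  le_csSup (bddAbove_ray hK hx z) hs

theorem neg_rayEnd_neg_le (hK : Bornology.IsBounded K) {z x : E} (hx : x ≠ 0) {s : ℝ}
    (hs : z + s • x ∈ K) : -rayEnd K z (-x) ≤ s := by
  have := le_rayEnd hK (neg_ne_zero.mpr hx) (z := z) (s := -s) (by simpa using hs)
  linarith

theorem rayEnd_mem (hK : IsCompact K) {z x : E} (hx : x ≠ 0) {s : ℝ} (hs : z + s • x ∈ K) :
    z + rayEnd K z x • x ∈ K := by
  have hcl : IsClosed {s : ℝ | z + s • x ∈ K} := hK.isClosed.preimage (by fun_prop)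
  exact hcl.csSup_mem ⟨s, hs⟩ (bddAbove_ray hK.isBounded hx z)

theorem lt_rayEnd (hK : Bornology.IsBounded K) {z x : E} (hx : x ≠ 0) {s : ℝ}
    (hs : z + s • x ∈ interior K) : s < rayEnd K z x := by
  have hc : ContinuousAt (fun s : ℝ => z + s • x) s := by fun_prop
  have h1 : ∀ᶠ r in 𝓝[>] s, z + r • x ∈ interior K :=
    (hc.eventually (isOpen_interior.mem_nhds hs)).filter_mono nhdsWithin_le_nhds
  obtain ⟨r, hr, hsr⟩ := (h1.and self_mem_nhdsWithin).exists
  exact lt_of_lt_of_le hsr (le_rayEnd hK hx (interior_subset hr))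

theorem neg_rayEnd_neg_lt (hK : Bornology.IsBounded K) {z x : E} (hx : x ≠ 0) {s : ℝ}
    (hs : z + s • x ∈ interior K) : -rayEnd K z (-x) < s := by
  have := lt_rayEnd hK (neg_ne_zero.mpr hx) (z := z) (s := -s) (by simpa using hs)
  linarith

theorem rayEnd_mem_frontier (hK : IsCompact K) {z x : E} (hx : x ≠ 0)
    (h : (z, x) ∈ crossing K) : z + rayEnd K z x • x ∈ frontier K := by
  obtain ⟨s, hs⟩ := h
  rw [hK.isClosed.frontier_eq]
  exact ⟨rayEnd_mem hK hx (interior_subset hs), fun h => (lt_rayEnd hK.isBounded hx h).ne rfl⟩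

theorem mem_interior_of_lt_of_le (hK : Convex ℝ K) {z x : E} {s₀ s b : ℝ}
    (h₀ : z + s₀ • x ∈ interior K) (hb : z + b • x ∈ K) (h₁ : s₀ ≤ s) (h₂ : s < b) :
    z + s • x ∈ interior K := by
  have e : z + s • x = (z + b • x) +
      ((b - s) / (b - s₀)) • ((z + s₀ • x) - (z + b • x)) := by
    have h3 : b - s₀ ≠ 0 := by linarith
    have : (z + s₀ • x) - (z + b • x) = (-(b - s₀)) • x := by module
    rw [this, smul_smul, mul_neg, div_mul_cancel₀ _ h3]
    module
  rw [e]
  exact hK.add_smul_sub_mem_interior' (subset_closure hb) h₀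
    ⟨div_pos (by linarith) (by linarith), (div_le_one (by linarith)).mpr (by linarith)⟩

theorem mem_interior_of_mem_Ioo (hK : Convex ℝ K) (hKc : IsCompact K) {z x : E} (hx : x ≠ 0)
    (h : (z, x) ∈ crossing K) {s : ℝ} (h₁ : -rayEnd K z (-x) < s) (h₂ : s < rayEnd K z x) :
    z + s • x ∈ interior K := by
  obtain ⟨s₀, hs₀⟩ := h
  simp only at hs₀
  rcases le_total s₀ s with h | h
  · exact mem_interior_of_lt_of_le hK hs₀ (rayEnd_mem hKc hx (interior_subset hs₀)) h h₂
  · have hs₀' : z + (-s₀) • (-x) ∈ interior K := by simpa using hs₀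
    have := mem_interior_of_lt_of_le hK (s := -s) hs₀'
      (rayEnd_mem hKc (neg_ne_zero.mpr hx) (interior_subset hs₀')) (by linarith) (by linarith)
    simpa using this

theorem eq_rayEnd_of_mem_frontier (hK : Convex ℝ K) (hKc : IsCompact K) {z x : E} (hx : x ≠ 0)
    {s₀ s : ℝ} (h₀ : z + s₀ • x ∈ interior K) (hs : z + s • x ∈ frontier K) (h : s₀ < s) :
    s = rayEnd K z x := by
  have hsK : z + s • x ∈ K := hKc.isClosed.frontier_subset hs
  rcases (le_rayEnd hKc.isBounded hx hsK).eq_or_lt with h1 | h1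
  · exact h1
  · exact absurd (mem_interior_of_lt_of_le hK h₀ (rayEnd_mem hKc hx hsK) h.le h1)
      (fun h2 => (hs.2 h2).elim)

theorem contDiffAt_rayEnd [CompleteSpace E] (hK : Convex ℝ K) (hKc : IsCompact K)
    (hC : HasC2PositiveCurvatureBoundary K) {u₀ : E × E} (hx : u₀.2 ≠ 0) (h : u₀ ∈ crossing K) :
    ContDiffAt ℝ 2 (fun u : E × E => rayEnd K u.1 u.2) u₀ := by
  obtain ⟨s₀, hs₀⟩ := h
  set p := u₀.1 + rayEnd K u₀.1 u₀.2 • u₀.2 with hp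
  have hpf : p ∈ frontier K := rayEnd_mem_frontier hKc hx ⟨s₀, hs₀⟩
  have hlt : s₀ < rayEnd K u₀.1 u₀.2 := lt_rayEnd hKc.isBounded hx hs₀
  obtain ⟨g, hg, hfr, hneg, -⟩ := hC.exists_local hK hpf
  set m : (E × E) × ℝ → E := fun w => w.1.1 + w.2 • w.1.2 with hm
  have hmC : ContDiff ℝ 2 m := by rw [hm]; fun_prop
  have hgm : ContDiffAt ℝ 2 (fun w => g (m w)) (u₀, rayEnd K u₀.1 u₀.2) :=
    ContDiffAt.comp (g := g) (f := m) _ hg hmC.contDiffAt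
  refine contDiffAt_of_forall_zero (k := 2) (by norm_num) (G := fun w => g (m w))
    (φ := fun u : E × E => rayEnd K u.1 u.2) hgm (hfr.self_of_nhds.mp hpf) ?_ ?_
  · have h1 : HasDerivAt (fun t : ℝ => g (m (u₀, t)))
        (fderiv ℝ g p u₀.2) (rayEnd K u₀.1 u₀.2) :=
      hasDerivAt_comp_line (f := g) (p := u₀.1) (v := u₀.2) (hg.differentiableAt (by norm_num))
    have h2 : HasDerivAt (fun t : ℝ => g (m (u₀, t)))
        (fderiv ℝ (fun w => g (m w)) (u₀, rayEnd K u₀.1 u₀.2) (0, 1)) (rayEnd K u₀.1 u₀.2) := by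
      have h3 : HasDerivAt (fun t : ℝ => (u₀, t)) ((0 : E × E), (1 : ℝ)) (rayEnd K u₀.1 u₀.2) :=
        (hasDerivAt_const _ u₀).prodMk (hasDerivAt_id _)
      exact (hgm.differentiableAt (by norm_num)).hasFDerivAt.comp_hasDerivAt _ h3
    rw [h2.unique h1]
    have h4 := hneg _ hs₀
    have h5 : u₀.1 + s₀ • u₀.2 - p = (-(rayEnd K u₀.1 u₀.2 - s₀)) • u₀.2 := by
      rw [hp]; module
    rw [h5, map_smul, smul_eq_mul] at h4
    intro h6
    rw [h6, mul_zero] at h4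
    exact lt_irrefl _ h4
  · have hmt : Filter.Tendsto m (𝓝 (u₀, rayEnd K u₀.1 u₀.2)) (𝓝 p) :=
      hmC.continuous.continuousAt.tendsto
    have e1 : ∀ᶠ w in 𝓝 (u₀, rayEnd K u₀.1 u₀.2), w.1.1 + s₀ • w.1.2 ∈ interior K := by
      have : ContinuousAt (fun w : (E × E) × ℝ => w.1.1 + s₀ • w.1.2)
        (u₀, rayEnd K u₀.1 u₀.2) := by fun_prop
      exact this.eventually (isOpen_interior.mem_nhds hs₀)
    have e2 : ∀ᶠ w in 𝓝 (u₀, rayEnd K u₀.1 u₀.2), s₀ < w.2 :=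
      continuousAt_snd.eventually (lt_mem_nhds hlt)
    have e3 : ∀ᶠ w in 𝓝 (u₀, rayEnd K u₀.1 u₀.2), w.1.2 ≠ 0 := by
      have : ContinuousAt (fun w : (E × E) × ℝ => w.1.2) (u₀, rayEnd K u₀.1 u₀.2) := by fun_prop
      exact this.eventually (isOpen_ne.mem_nhds hx)
    filter_upwards [hmt.eventually hfr, e1, e2, e3] with w h1 h2 h3 h4 h5
    exact eq_rayEnd_of_mem_frontier hK hKc h4 h2 (h1.mpr h5) h3

theorem contDiffAt_chordLength [CompleteSpace E] (hK : Convex ℝ K) (hKc : IsCompact K)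
    (hC : HasC2PositiveCurvatureBoundary K) {u₀ : E × E} (hx : u₀.2 ≠ 0) (h : u₀ ∈ crossing K) :
    ContDiffAt ℝ 2 (fun u : E × E => chordLength K u.1 u.2) u₀ := by
  have h1 := contDiffAt_rayEnd hK hKc hC hx h
  have h2 : ContDiffAt ℝ 2 (fun u : E × E => rayEnd K u.1 u.2) (u₀.1, -u₀.2) :=
    contDiffAt_rayEnd hK hKc hC (neg_ne_zero.mpr hx) (crossing_neg h)
  have h3 : ContDiffAt ℝ 2 (fun u : E × E => (u.1, -u.2)) u₀ := by fun_prop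
  exact h1.add (ContDiffAt.comp (g := fun u : E × E => rayEnd K u.1 u.2)
    (f := fun u : E × E => (u.1, -u.2)) u₀ h2 h3)

theorem combo_rayEnd_le (hK : Convex ℝ K) (hKc : IsCompact K) {z w x : E} (hx : x ≠ 0)
    {s r : ℝ} (hs : z + s • x ∈ K) (hr : w + r • x ∈ K) {a b : ℝ} (ha : 0 ≤ a) (hb : 0 ≤ b)
    (hab : a + b = 1) :
    a * rayEnd K z x + b * rayEnd K w x ≤ rayEnd K (a • z + b • w) x := by
  refine le_rayEnd hKc.isBounded hx ?_
  convert hK (rayEnd_mem hKc hx hs) (rayEnd_mem hKc hx hr) ha hb hab using 1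
  module

theorem combo_chordLength_le (hK : Convex ℝ K) (hKc : IsCompact K) {z w x : E} (hx : x ≠ 0)
    (hz : (z, x) ∈ crossing K) (hw : (w, x) ∈ crossing K) {a b : ℝ} (ha : 0 ≤ a) (hb : 0 ≤ b)
    (hab : a + b = 1) :
    a * chordLength K z x + b * chordLength K w x ≤ chordLength K (a • z + b • w) x := by
  obtain ⟨s, hs⟩ := id hz
  obtain ⟨r, hr⟩ := id hw
  obtain ⟨s', hs'⟩ := crossing_neg hz
  obtain ⟨r', hr'⟩ := crossing_neg hw
  have h1 := combo_rayEnd_le hK hKc hx (interior_subset hs) (interior_subset hr) ha hb hab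
  have h2 := combo_rayEnd_le hK hKc (neg_ne_zero.mpr hx) (interior_subset hs')
    (interior_subset hr') ha hb hab
  simp only [chordLength]
  simp only at h1 h2
  linarith

theorem crossing_combo (hK : Convex ℝ K) {z w x : E}
    (hz : (z, x) ∈ crossing K) (hw : (w, x) ∈ crossing K) {a b : ℝ} (ha : 0 ≤ a) (hb : 0 ≤ b)
    (hab : a + b = 1) : (a • z + b • w, x) ∈ crossing K := by
  obtain ⟨s, hs⟩ := hz
  obtain ⟨r, hr⟩ := hw
  refine ⟨a * s + b * r, ?_⟩
  convert hK.interior hs hr ha hb hab using 1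
  simp only
  module

theorem mem_overlap_iff (hK : Convex ℝ K) (hKc : IsCompact K) {z x : E} (hx : x ≠ 0) :
    z ∈ overlap K x ↔ (z, x) ∈ crossing K ∧ 1 < chordLength K z x := by
  constructor
  · rintro ⟨s, hs, hs'⟩
    refine ⟨⟨s, hs⟩, ?_⟩
    have h1 := lt_rayEnd hKc.isBounded hx hs
    have h2 := neg_rayEnd_neg_lt hKc.isBounded hx hs'
    simp only [chordLength]
    linarith
  · rintro ⟨h, h1⟩
    simp only [chordLength] at h1
    refine ⟨(rayEnd K z x + 1 - rayEnd K z (-x)) / 2, ?_, ?_⟩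
    · exact mem_interior_of_mem_Ioo hK hKc hx h (by linarith) (by linarith)
    · exact mem_interior_of_mem_Ioo hK hKc hx h (by linarith) (by linarith)

theorem crossing_and_one_le_chordLength (hK : StrictConvex ℝ K) (hKc : IsCompact K) {z x : E}
    (hx : x ≠ 0) {s : ℝ} (hs : z + s • x ∈ K) (hs' : z + (s - 1) • x ∈ K) :
    (z, x) ∈ crossing K ∧ 1 ≤ chordLength K z x := by
  constructor
  · refine ⟨s - 1 / 2, ?_⟩
    have hne : z + s • x ≠ z + (s - 1) • x := by
      intro h
      have : x = 0 := by
        have h2 : (z + s • x) - (z + (s - 1) • x) = x := by module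
        rw [h, sub_self] at h2
        exact h2.symm
      exact hx this
    have := hK hs hs' hne (a := 1 / 2) (b := 1 / 2) (by norm_num) (by norm_num) (by norm_num)
    convert this using 1
    simp only
    module
  · have h1 := le_rayEnd hKc.isBounded hx hs
    have h2 := neg_rayEnd_neg_le hKc.isBounded hx hs'
    simp only [chordLength]
    linarith

theorem volume_chord (hK : StrictConvex ℝ K) (hKc : IsCompact K) {x : E} (hx : x ≠ 0) (z : E) :
    volume {s : ℝ | z + s • x ∈ K ∧ z + (s - 1) • x ∈ K} =
      (overlap K x).indicator (fun z => ENNReal.ofReal (chordLength K z x - 1)) z := by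
  by_cases hc : (z, x) ∈ crossing K
  · have hset : {s : ℝ | z + s • x ∈ K ∧ z + (s - 1) • x ∈ K} =
        Icc (1 - rayEnd K z (-x)) (rayEnd K z x) := by
      obtain ⟨s₀, hs₀⟩ := id hc
      have m1 := rayEnd_mem hKc hx (interior_subset hs₀)
      have m2 : z + (-rayEnd K z (-x)) • x ∈ K := by
        obtain ⟨s₁, hs₁⟩ := crossing_neg hc
        simpa using rayEnd_mem hKc (neg_ne_zero.mpr hx) (interior_subset hs₁)
      have hoc : OrdConnected {s : ℝ | z + s • x ∈ K} := by
        have : {s : ℝ | z + s • x ∈ K} = (AffineMap.lineMap z (z + x) : ℝ →ᵃ[ℝ] E) ⁻¹' K := by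
          ext s; simp [AffineMap.lineMap_apply, add_comm]
        rw [this]
        exact (hK.convex.affine_preimage _).ordConnected
      ext s
      constructor
      · rintro ⟨h1, h2⟩
        exact ⟨by have := neg_rayEnd_neg_le hKc.isBounded hx h2; linarith,
          le_rayEnd hKc.isBounded hx h1⟩
      · rintro ⟨h1, h2⟩
        exact ⟨hoc.out m2 m1 ⟨by linarith, h2⟩, hoc.out m2 m1 ⟨by linarith, by linarith⟩⟩
    rw [hset, Real.volume_Icc]
    have e : rayEnd K z x - (1 - rayEnd K z (-x)) = chordLength K z x - 1 := by
      simp only [chordLength]; ring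
    rw [e]
    by_cases ho : z ∈ overlap K x
    · rw [indicator_of_mem ho]
    · rw [indicator_of_notMem ho]
      have : ¬ 1 < chordLength K z x := fun h =>
        ho ((mem_overlap_iff hK.convex hKc hx).mpr ⟨hc, h⟩)
      exact ENNReal.ofReal_of_nonpos (by linarith)
  · have ho : z ∉ overlap K x := fun h => hc ((mem_overlap_iff hK.convex hKc hx).mp h).1
    rw [indicator_of_notMem ho]
    have : {s : ℝ | z + s • x ∈ K ∧ z + (s - 1) • x ∈ K} = ∅ := by
      ext s
      simp only [mem_ofPred_eq, mem_empty_iff_false, iff_false]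
      rintro ⟨h1, h2⟩
      exact hc (crossing_and_one_le_chordLength hK hKc hx h1 h2).1
    rw [this, measure_empty]

end Ray

section Radial

variable {E : Type*} [NormedAddCommGroup E] [NormedSpace ℝ E] {K : Set E}

/-- The radial function of `overlap K x` with respect to the point `y`. -/
noncomputable def overlapRadius (K : Set E) (y ξ x : E) : ℝ :=
  (gauge {w | y + w ∈ overlap K x} ξ)⁻¹

theorem mem_overlap_iff_gauge (hK : Convex ℝ K) {y x : E} (hy : y ∈ overlap K x) (w : E) :
    y + w ∈ overlap K x ↔ gauge {w | y + w ∈ overlap K x} w < 1 := by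
  have hop : IsOpen {w | y + w ∈ overlap K x} := isOpen_overlap.preimage (by fun_prop)
  have hcv : Convex ℝ {w | y + w ∈ overlap K x} := (convex_overlap hK).translate_preimage_right y
  have h0 : (0 : E) ∈ {w | y + w ∈ overlap K x} := by simpa using hy
  have := setOfPred_gauge_lt_one_eq_self_of_isOpen hcv h0 hop
  exact (Set.ext_iff.mp this w).symm

/-- Projection along `x` onto the kernel of `f`. -/
noncomputable def projAlong (f : E →L[ℝ] ℝ) (x : E) : E →L[ℝ] E :=
  ContinuousLinearMap.id ℝ E - f.smulRight ((f x)⁻¹ • x)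

theorem projAlong_apply (f : E →L[ℝ] ℝ) (x z : E) :
    projAlong f x z = z - (f z * (f x)⁻¹) • x := by
  simp [projAlong, smul_smul]

theorem projAlong_add_smul {f : E →L[ℝ] ℝ} {x ξ : E} (hfx : f x ≠ 0) (hξ : f ξ = 0) (y : E)
    (r s : ℝ) : projAlong f x (y + r • ξ + s • x) = projAlong f x y + r • ξ := by
  have h1 : projAlong f x x = 0 := by rw [projAlong_apply, mul_inv_cancel₀ hfx]; simp
  have h2 : projAlong f x ξ = ξ := by rw [projAlong_apply, hξ]; simp
  rw [map_add, map_add, map_smul, map_smul, h1, h2, smul_zero, add_zero]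

theorem gauge_overlap_pos (hK : Convex ℝ K) (hKc : IsCompact K) {f : E →L[ℝ] ℝ} {y x ξ : E}
    (hy : y ∈ overlap K x) (hfx : f x ≠ 0) (hξ : f ξ = 0) (hξ0 : ξ ≠ 0) :
    0 < gauge {w | y + w ∈ overlap K x} ξ := by
  refine (gauge_nonneg _).lt_of_ne' fun h0 => ?_
  obtain ⟨R, hR⟩ := (hKc.image (projAlong f x).continuous).isBounded.exists_norm_le
  have hmem : ∀ r : ℝ, 0 ≤ r → ‖projAlong f x y + r • ξ‖ ≤ R := by
    intro r hr
    have : y + r • ξ ∈ overlap K x := by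
      rw [mem_overlap_iff_gauge hK hy, gauge_smul_of_nonneg hr, h0]
      simp
    obtain ⟨s, hs, -⟩ := this
    rw [← projAlong_add_smul hfx hξ y r s]
    exact hR _ (mem_image_of_mem _ (interior_subset hs))
  have hξn : 0 < ‖ξ‖ := norm_pos_iff.mpr hξ0
  have hR0 : 0 ≤ R := (norm_nonneg _).trans (hmem 0 le_rfl)
  set r := (R + ‖projAlong f x y‖ + 1) / ‖ξ‖ with hr
  have hr0 : 0 ≤ r := by positivity
  have h1 := hmem r hr0
  have h2 : ‖r • ξ‖ ≤ ‖projAlong f x y + r • ξ‖ + ‖projAlong f x y‖ := by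
    have := norm_sub_le (projAlong f x y + r • ξ) (projAlong f x y)
    rwa [add_sub_cancel_left] at this
  rw [norm_smul, Real.norm_of_nonneg hr0, hr, div_mul_cancel₀ _ hξn.ne'] at h2
  linarith

theorem overlapRadius_pos (hK : Convex ℝ K) (hKc : IsCompact K) {f : E →L[ℝ] ℝ} {y x ξ : E}
    (hy : y ∈ overlap K x) (hfx : f x ≠ 0) (hξ : f ξ = 0) (hξ0 : ξ ≠ 0) :
    0 < overlapRadius K y ξ x :=
  inv_pos.mpr (gauge_overlap_pos hK hKc hy hfx hξ hξ0)

theorem add_smul_mem_overlap_iff (hK : Convex ℝ K) (hKc : IsCompact K) {f : E →L[ℝ] ℝ}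
    {y x ξ : E} (hy : y ∈ overlap K x) (hfx : f x ≠ 0) (hξ : f ξ = 0) (hξ0 : ξ ≠ 0) {r : ℝ}
    (hr : 0 ≤ r) : y + r • ξ ∈ overlap K x ↔ r < overlapRadius K y ξ x := by
  rw [mem_overlap_iff_gauge hK hy, gauge_smul_of_nonneg hr, smul_eq_mul, overlapRadius,
    ← one_div, lt_div_iff₀ (gauge_overlap_pos hK hKc hy hfx hξ hξ0)]

theorem chordLength_overlapRadius (hK : StrictConvex ℝ K) (hKc : IsCompact K) {f : E →L[ℝ] ℝ}
    {y x ξ : E} (hy : y ∈ overlap K x) (hfx : f x ≠ 0) (hξ : f ξ = 0) (hξ0 : ξ ≠ 0) :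
    (y + overlapRadius K y ξ x • ξ, x) ∈ crossing K ∧
      chordLength K (y + overlapRadius K y ξ x • ξ) x = 1 := by
  set R := overlapRadius K y ξ x with hR
  have hR0 : 0 < R := overlapRadius_pos hK.convex hKc hy hfx hξ hξ0
  have hx : x ≠ 0 := by rintro rfl; simp at hfx
  have hL : IsCompact {z | z ∈ K ∧ z - x ∈ K} :=
    hKc.inter_right (hKc.isClosed.preimage (by fun_prop))
  have hcl := (hL.image (projAlong f x).continuous).isClosed
  have hmem : projAlong f x y + R • ξ ∈ projAlong f x '' {z | z ∈ K ∧ z - x ∈ K} := by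
    have ht : Filter.Tendsto (fun r : ℝ => projAlong f x y + r • ξ) (𝓝[<] R)
        (𝓝 (projAlong f x y + R • ξ)) := by
      have : ContinuousAt (fun r : ℝ => projAlong f x y + r • ξ) R := by fun_prop
      exact this.tendsto.mono_left nhdsWithin_le_nhds
    refine hcl.mem_of_tendsto ht ?_
    filter_upwards [Ioo_mem_nhdsLT hR0] with r hr
    obtain ⟨s, hs, hs'⟩ := (add_smul_mem_overlap_iff hK.convex hKc hy hfx hξ hξ0 hr.1.le).mpr hr.2
    refine ⟨y + r • ξ + s • x, ⟨interior_subset hs, ?_⟩, projAlong_add_smul hfx hξ y r s⟩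
    convert interior_subset hs' using 1
    module
  obtain ⟨z, ⟨hz, hz'⟩, hzy⟩ := hmem
  obtain ⟨s, hs⟩ : ∃ s : ℝ, z = y + R • ξ + s • x := by
    rw [projAlong_apply, projAlong_apply] at hzy
    refine ⟨f z * (f x)⁻¹ - f y * (f x)⁻¹, ?_⟩
    rw [sub_eq_iff_eq_add] at hzy
    refine hzy.trans ?_
    module
  have h1 := crossing_and_one_le_chordLength hK hKc hx (z := y + R • ξ) (s := s) (hs ▸ hz)
    (by convert hz' using 1; rw [hs]; module)
  refine ⟨h1.1, le_antisymm ?_ h1.2⟩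
  by_contra! h2
  have h3 := (mem_overlap_iff hK.convex hKc hx).mpr ⟨h1.1, h2⟩
  exact lt_irrefl _ ((add_smul_mem_overlap_iff hK.convex hKc hy hfx hξ hξ0 hR0.le).mp h3)

theorem eq_overlapRadius (hK : Convex ℝ K) (hKc : IsCompact K) {y x ξ : E}
    (hy : y ∈ overlap K x) (hx : x ≠ 0) {r : ℝ} (hr : 0 < r)
    (hc : (y + r • ξ, x) ∈ crossing K) (h1 : chordLength K (y + r • ξ) x = 1) :
    r = overlapRadius K y ξ x := by
  obtain ⟨hyc, hy1⟩ := (mem_overlap_iff hK hKc hx).mp hy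
  have hge : 1 ≤ r * gauge {w | y + w ∈ overlap K x} ξ := by
    by_contra! h
    rw [← smul_eq_mul, ← gauge_smul_of_nonneg hr.le, ← mem_overlap_iff_gauge hK hy,
      mem_overlap_iff hK hKc hx, h1] at h
    exact lt_irrefl _ h.2
  have hle : r * gauge {w | y + w ∈ overlap K x} ξ ≤ 1 := by
    have hlt : ∀ t ∈ Ioo (0 : ℝ) 1, t * (r * gauge {w | y + w ∈ overlap K x} ξ) < 1 := by
      intro t ht
      rw [← mul_assoc, ← smul_eq_mul, ← gauge_smul_of_nonneg (by have := ht.1; positivity),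
        ← mem_overlap_iff_gauge hK hy, mem_overlap_iff hK hKc hx]
      have e : y + (t * r) • ξ = (1 - t) • y + t • (y + r • ξ) := by module
      rw [e]
      refine ⟨crossing_combo hK hyc hc (by linarith [ht.2]) ht.1.le (by ring), ?_⟩
      have := combo_chordLength_le hK hKc hx hyc hc (a := 1 - t) (b := t) (by linarith [ht.2])
        ht.1.le (by ring)
      rw [h1] at this
      have := mul_pos (sub_pos.mpr ht.2) (sub_pos.mpr hy1)
      nlinarith
    have ht : Filter.Tendsto (fun t : ℝ => t * (r * gauge {w | y + w ∈ overlap K x} ξ)) (𝓝[<] 1)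
        (𝓝 (1 * (r * gauge {w | y + w ∈ overlap K x} ξ))) := by
      have : ContinuousAt (fun t : ℝ => t * (r * gauge {w | y + w ∈ overlap K x} ξ)) 1 := by
        fun_prop
      exact this.tendsto.mono_left nhdsWithin_le_nhds
    rw [one_mul] at ht
    refine le_of_tendsto ht ?_
    filter_upwards [Ioo_mem_nhdsLT zero_lt_one] with t h using (hlt t h).le
  exact eq_inv_of_mul_eq_one_left (le_antisymm hle hge)

theorem eventually_mem_overlap {y x₀ : E} (hy : y ∈ overlap K x₀) :
    ∀ᶠ u in 𝓝 x₀, y ∈ overlap K u := by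
  obtain ⟨s, hs, hs'⟩ := hy
  have c1 : ContinuousAt (fun u : E => y + s • u) x₀ := by fun_prop
  have c2 : ContinuousAt (fun u : E => y + (s - 1) • u) x₀ := by fun_prop
  filter_upwards [c1.eventually (isOpen_interior.mem_nhds hs),
    c2.eventually (isOpen_interior.mem_nhds hs')] with u h1 h2 using ⟨s, h1, h2⟩

theorem contDiffAt_overlapRadius [CompleteSpace E] (hK : Convex ℝ K) (hKc : IsCompact K)
    (hC : HasC2PositiveCurvatureBoundary K) {f : E →L[ℝ] ℝ} {y x ξ : E}
    (hy : y ∈ overlap K x) (hfx : f x ≠ 0) (hξ : f ξ = 0) (hξ0 : ξ ≠ 0) :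
    ContDiffAt ℝ 2 (fun u : E × E => overlapRadius K y u.1 u.2) (ξ, x) := by
  have hx : x ≠ 0 := by rintro rfl; simp at hfx
  have hKs := hC.strictConvex hK hKc.isClosed
  obtain ⟨hyc, hy1⟩ := (mem_overlap_iff hK hKc hx).mp hy
  set R := overlapRadius K y ξ x with hR
  have hR0 : 0 < R := overlapRadius_pos hK hKc hy hfx hξ hξ0
  obtain ⟨hc, h1⟩ := chordLength_overlapRadius hKs hKc hy hfx hξ hξ0
  rw [← hR] at hc h1
  set m : (E × E) × ℝ → E × E := fun w => (y + w.2 • w.1.1, w.1.2) with hm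
  have hmC : ContDiff ℝ 2 m := by rw [hm]; fun_prop
  have hch : ContDiffAt ℝ 2 (fun u : E × E => chordLength K u.1 u.2) (y + R • ξ, x) :=
    contDiffAt_chordLength hK hKc hC hx hc
  have hG : ContDiffAt ℝ 2 (fun w => chordLength K (m w).1 (m w).2 - 1) ((ξ, x), R) :=
    (ContDiffAt.comp (g := fun u : E × E => chordLength K u.1 u.2) (f := m) ((ξ, x), R)
      hch hmC.contDiffAt).sub contDiffAt_const
  refine contDiffAt_of_forall_zero (k := 2) (by norm_num)
    (G := fun w => chordLength K (m w).1 (m w).2 - 1)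
    (φ := fun u : E × E => overlapRadius K y u.1 u.2) hG (by simp only [hm, ← hR, h1, sub_self])
    ?_ ?_
  · have hchx : DifferentiableAt ℝ (fun z => chordLength K z x) (y + R • ξ) := by
      have h2 : DifferentiableAt ℝ (fun z : E => (z, x)) (y + R • ξ) := by fun_prop
      exact DifferentiableAt.comp (g := fun u : E × E => chordLength K u.1 u.2)
        (f := fun z : E => (z, x)) (y + R • ξ) (hch.differentiableAt (by norm_num)) h2
    set D := fderiv ℝ (fun z => chordLength K z x) (y + R • ξ) with hD
    have d1 : HasDerivAt (fun t : ℝ => chordLength K (y + t • ξ) x - 1) (D ξ) R :=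
      (hasDerivAt_comp_line (f := fun z => chordLength K z x) hchx).sub_const 1
    have d2 : HasDerivAt (fun t : ℝ => chordLength K (y + t • ξ) x - 1)
        (fderiv ℝ (fun w => chordLength K (m w).1 (m w).2 - 1) ((ξ, x), R) (0, 1)) R := by
      have h3 : HasDerivAt (fun t : ℝ => ((ξ, x), t)) ((0 : E × E), (1 : ℝ)) R :=
        (hasDerivAt_const _ _).prodMk (hasDerivAt_id _)
      exact (hG.differentiableAt (by norm_num)).hasFDerivAt.comp_hasDerivAt _ h3
    change fderiv ℝ (fun w => chordLength K (m w).1 (m w).2 - 1) ((ξ, x), R) (0, 1) ≠ 0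
    rw [d2.unique d1]
    have d3 := hasDerivAt_comp_line (f := fun z => chordLength K z x) (p := y + R • ξ)
      (v := -(R • ξ)) (t := 0) (by simpa using hchx)
    rw [zero_smul, add_zero, map_neg, map_smul, ← hD] at d3
    have d4 : chordLength K y x - 1 ≤ -(R • D ξ) := by
      refine ge_of_tendsto d3.tendsto_slope_zero_right ?_
      filter_upwards [Ioo_mem_nhdsGT (zero_lt_one' ℝ)] with t ht
      have h4 := combo_chordLength_le hK hKc hx hyc hc (a := t) (b := 1 - t) ht.1.le
        (by linarith [ht.2]) (by ring)
      have e : t • y + (1 - t) • (y + R • ξ) = y + R • ξ + t • -(R • ξ) := by module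
      rw [e, h1] at h4
      rw [zero_add, zero_smul, add_zero, h1, smul_eq_mul, ← div_eq_inv_mul, le_div_iff₀ ht.1]
      linarith
    intro h5
    rw [h5, smul_zero, neg_zero] at d4
    linarith
  · have hmt : Filter.Tendsto m (𝓝 ((ξ, x), R)) (𝓝 (y + R • ξ, x)) :=
      hmC.continuous.continuousAt.tendsto
    have e2 : ∀ᶠ w in 𝓝 ((ξ, x), R), 0 < w.2 := continuousAt_snd.eventually (lt_mem_nhds hR0)
    have c3 : ContinuousAt (fun w : (E × E) × ℝ => w.1.2) ((ξ, x), R) := by fun_prop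
    filter_upwards [hmt.eventually (isOpen_crossing.mem_nhds hc), e2,
      c3.eventually (isOpen_ne.mem_nhds hx),
      c3.eventually (eventually_mem_overlap hy)] with w g1 g2 g3 g4 g5
    exact eq_overlapRadius hK hKc g4 g3 g2 g1 (by simpa [hm, sub_eq_zero] using g5)

end Radial

section Slice

variable {E : Type*} [NormedAddCommGroup E] [NormedSpace ℝ E] [FiniteDimensional ℝ E]
  [MeasurableSpace E] [BorelSpace E]

/-- Fubini's theorem along lines with direction `x`, transversal to the hyperplane `f = 0`. -/
theorem exists_measure_eq_lintegral_line (μ : Measure E) [μ.IsAddHaarMeasure] {f : E →L[ℝ] ℝ}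
    {x₀ : E} (hf : f x₀ = 1) (ν : Measure f.ker) [ν.IsAddHaarMeasure] :
    ∃ c : NNReal, ∀ x, f x ≠ 0 → ∀ A : Set E, MeasurableSet A →
      μ A = c * ENNReal.ofReal |f x| * ∫⁻ w : f.ker, volume {s : ℝ | (w : E) + s • x ∈ A} ∂ν := by
  have hinv : Function.RightInverse (ContinuousLinearMap.toSpanSingleton ℝ x₀) f := by
    intro s; simp [hf]
  set e := (ContinuousLinearEquiv.equivOfRightInverse f _ hinv).symm with he
  have he' : ∀ p : ℝ × f.ker, e p = (p.2 : E) + p.1 • x₀ := fun p => by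
    simp [he, ContinuousLinearEquiv.equivOfRightInverse, add_comm]
  have : ((volume.prod ν).map e).IsAddHaarMeasure := e.isAddHaarMeasure_map _
  obtain ⟨c, hc⟩ : ∃ c : NNReal, μ = c • (volume.prod ν).map e :=
    ⟨_, Measure.isAddLeftInvariant_eq_smul _ _⟩
  refine ⟨c, fun x hx A hA => ?_⟩
  have h1 : μ A = c * ∫⁻ s : ℝ, ν {w | (w : E) + s • x₀ ∈ A} := by
    conv_lhs => rw [hc]
    rw [Measure.smul_apply, Measure.map_apply e.continuous.measurable hA,
      Measure.prod_apply (e.continuous.measurable hA)]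
    refine congrArg (fun t => (c : ℝ≥0∞) * t) (lintegral_congr fun s => ?_)
    congr 1
    ext w
    rw [mem_preimage, mem_preimage, he', mem_ofPred_eq]
  have h2 : ∫⁻ s : ℝ, ν {w | (w : E) + s • x₀ ∈ A} =
      ENNReal.ofReal |f x| * ∫⁻ s : ℝ, ν {w | (w : E) + (f x * s) • x₀ ∈ A} := by
    have hm := lintegral_map_equiv (μ := volume) (fun s : ℝ => ν {w | (w : E) + s • x₀ ∈ A})
      (Homeomorph.mulLeft₀ (f x) hx).toMeasurableEquiv
    conv_lhs => rw [← Real.smul_map_volume_mul_left hx]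
    rw [lintegral_smul_measure]
    exact congrArg _ hm
  have h3 : ∀ s : ℝ, ν {w | (w : E) + (f x * s) • x₀ ∈ A} = ν {w | (w : E) + s • x ∈ A} := by
    intro s
    have hk : s • (x - f x • x₀) ∈ f.ker := by simp [hf]
    rw [← measure_preimage_add ν ⟨_, hk⟩]
    congr 1
    ext w
    simp only [mem_preimage, mem_ofPred_eq, Submodule.coe_add]
    rw [show s • (x - f x • x₀) + (w : E) + (f x * s) • x₀ = (w : E) + s • x by module]
  have hB : MeasurableSet {p : ℝ × f.ker | (p.2 : E) + p.1 • x ∈ A} := by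
    have : Continuous fun p : ℝ × f.ker => (p.2 : E) + p.1 • x := by fun_prop
    exact this.measurable hA
  rw [h1, h2]
  simp only [h3]
  rw [mul_assoc]
  congr 2
  exact (Measure.prod_apply hB).symm.trans (Measure.prod_apply_symm hB)

end Slice

section Polar

variable {F : Type*} [NormedAddCommGroup F] [NormedSpace ℝ F] [FiniteDimensional ℝ F]
  [MeasurableSpace F] [BorelSpace F] [Nontrivial F]

/-- Integration in polar coordinates. -/
theorem lintegral_eq_lintegral_sphere (ν : Measure F) [ν.IsAddHaarMeasure] {φ : F → ℝ≥0∞}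
    (hφ : Measurable φ) :
    ∫⁻ w, φ w ∂ν = ∫⁻ ξ : Metric.sphere (0 : F) 1, ∫⁻ r in Ioi (0 : ℝ),
      ENNReal.ofReal (r ^ (Module.finrank ℝ F - 1)) * φ (r • (ξ : F)) ∂volume ∂ν.toSphere := by
  have hs : Continuous fun p : Metric.sphere (0 : F) 1 × Ioi (0 : ℝ) => (p.2 : ℝ) • (p.1 : F) := by
    fun_prop
  have hφs : Measurable fun p : Metric.sphere (0 : F) 1 × Ioi (0 : ℝ) =>
      φ ((p.2 : ℝ) • (p.1 : F)) := hφ.comp hs.measurable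
  calc ∫⁻ w, φ w ∂ν = ∫⁻ w in ({0}ᶜ : Set F), φ w ∂ν := by rw [restrict_compl_singleton]
    _ = ∫⁻ w : (({0}ᶜ : Set F) : Type _), φ w ∂(ν.comap (↑)) :=
      (lintegral_subtype_comap (measurableSet_singleton _).compl φ).symm
    _ = ∫⁻ w : (({0}ᶜ : Set F) : Type _), φ (((homeomorphUnitSphereProd F w).2 : ℝ) •
          ((homeomorphUnitSphereProd F w).1 : F)) ∂(ν.comap (↑)) := by
      refine lintegral_congr fun w => ?_
      congr 1
      conv_lhs => rw [← (homeomorphUnitSphereProd F).symm_apply_apply w]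
      rw [homeomorphUnitSphereProd_symm_apply_coe]
    _ = ∫⁻ p : Metric.sphere (0 : F) 1 × Ioi (0 : ℝ), φ ((p.2 : ℝ) • (p.1 : F))
          ∂(ν.toSphere.prod (Measure.volumeIoiPow (Module.finrank ℝ F - 1))) :=
      ν.measurePreserving_homeomorphUnitSphereProd.lintegral_comp hφs
    _ = _ := by
      rw [lintegral_prod _ hφs.aemeasurable]
      refine lintegral_congr fun ξ => ?_
      have h1 : Measurable fun r : Ioi (0 : ℝ) => φ ((r : ℝ) • (ξ : F)) :=
        hφ.comp (by fun_prop)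
      rw [Measure.volumeIoiPow, lintegral_withDensity_eq_lintegral_mul _ (by fun_prop) h1]
      exact lintegral_subtype_comap measurableSet_Ioi
        (fun r : ℝ => ENNReal.ofReal (r ^ (Module.finrank ℝ F - 1)) * φ (r • (ξ : F)))

/-- Rescaling of an integral over the positive half-line. -/
theorem setLIntegral_Ioi_eq_mul {R : ℝ} (hR : 0 < R) (ψ : ℝ → ℝ≥0∞) :
    ∫⁻ r in Ioi (0 : ℝ), ψ r = ENNReal.ofReal R * ∫⁻ r in Ioi (0 : ℝ), ψ (R * r) := by
  rw [← lintegral_indicator measurableSet_Ioi, ← lintegral_indicator measurableSet_Ioi]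
  have hm := lintegral_map_equiv (μ := volume) ((Ioi (0 : ℝ)).indicator ψ)
    (Homeomorph.mulLeft₀ R hR.ne').toMeasurableEquiv
  conv_lhs => rw [← Real.smul_map_volume_mul_left hR.ne']
  rw [lintegral_smul_measure, abs_of_pos hR]
  refine congrArg _ (hm.trans (lintegral_congr fun s => ?_))
  change (Ioi (0 : ℝ)).indicator ψ (R * s) = _
  simp only [indicator, mem_Ioi, mul_pos_iff_of_pos_left hR]

end Polar

section Covariogram

variable {E : Type*} [NormedAddCommGroup E] [NormedSpace ℝ E] {K : Set E}

/-- The density of `K ∩ (x + K)` in the polar coordinates of the cylinder `overlap K x`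
about `y`; the parameter `q` is a direction together with a fraction of the radius. -/
noncomputable def polarDensity (K : Set E) (k : ℕ) (y : E) (u : E × E × ℝ) : ℝ :=
  overlapRadius K y u.2.1 u.1 * (overlapRadius K y u.2.1 u.1 * u.2.2) ^ k *
    (chordLength K (y + (overlapRadius K y u.2.1 u.1 * u.2.2) • u.2.1) u.1 - 1)

theorem crossing_add_smul (hK : StrictConvex ℝ K) (hKc : IsCompact K) {f : E →L[ℝ] ℝ}
    {y x ξ : E} (hy : y ∈ overlap K x) (hfx : f x ≠ 0) (hξ : f ξ = 0) (hξ0 : ξ ≠ 0) {ρ : ℝ}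
    (hρ : ρ ∈ Icc (0 : ℝ) 1) :
    (y + (overlapRadius K y ξ x * ρ) • ξ, x) ∈ crossing K ∧
      1 ≤ chordLength K (y + (overlapRadius K y ξ x * ρ) • ξ) x := by
  have hx : x ≠ 0 := by rintro rfl; simp at hfx
  rcases hρ.2.eq_or_lt with rfl | h1
  · rw [mul_one]
    have := chordLength_overlapRadius hK hKc hy hfx hξ hξ0
    exact ⟨this.1, this.2.ge⟩
  · have hR := overlapRadius_pos hK.convex hKc hy hfx hξ hξ0
    have := (mem_overlap_iff hK.convex hKc hx).mp
      ((add_smul_mem_overlap_iff hK.convex hKc hy hfx hξ hξ0 (mul_nonneg hR.le hρ.1)).mpr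
        (mul_lt_of_lt_one_right hR h1))
    exact ⟨this.1, this.2.le⟩

theorem polarDensity_nonneg (hK : StrictConvex ℝ K) (hKc : IsCompact K) {f : E →L[ℝ] ℝ}
    {y x ξ : E} (hy : y ∈ overlap K x) (hfx : f x ≠ 0) (hξ : f ξ = 0) (hξ0 : ξ ≠ 0) {ρ : ℝ}
    (hρ : ρ ∈ Icc (0 : ℝ) 1) (k : ℕ) : 0 ≤ polarDensity K k y (x, ξ, ρ) := by
  have hR := overlapRadius_pos hK.convex hKc hy hfx hξ hξ0
  have h1 := (crossing_add_smul hK hKc hy hfx hξ hξ0 hρ).2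
  have h0 := hρ.1
  exact mul_nonneg (by positivity) (sub_nonneg.mpr h1)

theorem contDiffAt_polarDensity [CompleteSpace E] (hK : Convex ℝ K) (hKc : IsCompact K)
    (hC : HasC2PositiveCurvatureBoundary K) {f : E →L[ℝ] ℝ} {y x ξ : E}
    (hy : y ∈ overlap K x) (hfx : f x ≠ 0) (hξ : f ξ = 0) (hξ0 : ξ ≠ 0) {ρ : ℝ}
    (hρ : ρ ∈ Icc (0 : ℝ) 1) (k : ℕ) :
    ContDiffAt ℝ 2 (polarDensity K k y) (x, ξ, ρ) := by
  have hx : x ≠ 0 := by rintro rfl; simp at hfx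
  have hKs := hC.strictConvex hK hKc.isClosed
  have hR : ContDiffAt ℝ 2 (fun u : E × E × ℝ => overlapRadius K y u.2.1 u.1) (x, ξ, ρ) :=
    ContDiffAt.comp (g := fun u : E × E => overlapRadius K y u.1 u.2)
      (f := fun u : E × E × ℝ => (u.2.1, u.1)) (x, ξ, ρ)
      (contDiffAt_overlapRadius hK hKc hC hy hfx hξ hξ0) (by fun_prop)
  have hch : ContDiffAt ℝ 2 (fun u : E × E × ℝ =>
      chordLength K (y + (overlapRadius K y u.2.1 u.1 * u.2.2) • u.2.1) u.1) (x, ξ, ρ) :=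
    ContDiffAt.comp (g := fun u : E × E => chordLength K u.1 u.2)
      (f := fun u : E × E × ℝ => (y + (overlapRadius K y u.2.1 u.1 * u.2.2) • u.2.1, u.1))
      (x, ξ, ρ)
      (contDiffAt_chordLength hK hKc hC hx (crossing_add_smul hKs hKc hy hfx hξ hξ0 hρ).1)
      (by fun_prop)
  exact (hR.mul ((hR.mul (by fun_prop)).pow k)).mul (hch.sub contDiffAt_const)

theorem setIntegral_polar_eq [MeasurableSpace E] [BorelSpace E] [SecondCountableTopology E]
    {f : E →L[ℝ] ℝ} (σ : Measure (Metric.sphere (0 : f.ker) 1))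
    [IsFiniteMeasure σ] {G : E × ℝ → ℝ}
    (hP : IsCompact ({ξ : E | f ξ = 0 ∧ ‖ξ‖ = 1} ×ˢ Icc (0 : ℝ) 1))
    (hG : ContinuousOn G ({ξ : E | f ξ = 0 ∧ ‖ξ‖ = 1} ×ˢ Icc (0 : ℝ) 1))
    (hG0 : ∀ q ∈ {ξ : E | f ξ = 0 ∧ ‖ξ‖ = 1} ×ˢ Icc (0 : ℝ) 1, 0 ≤ G q) :
    ENNReal.ofReal (∫ q in {ξ : E | f ξ = 0 ∧ ‖ξ‖ = 1} ×ˢ Icc (0 : ℝ) 1, G q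
        ∂(σ.map fun ξ : Metric.sphere (0 : f.ker) 1 => ((ξ : f.ker) : E)).prod volume) =
      ∫⁻ ξ, ∫⁻ ρ in Icc (0 : ℝ) 1, ENNReal.ofReal (G ((ξ : f.ker), ρ)) ∂volume ∂σ := by
  set ι : Metric.sphere (0 : f.ker) 1 → E := fun ξ => ((ξ : f.ker) : E) with hι
  have hS : IsClosed {ξ : E | f ξ = 0 ∧ ‖ξ‖ = 1} :=
    (isClosed_eq f.continuous continuous_const).inter (isClosed_eq continuous_norm continuous_const)
  have hιe : MeasurableEmbedding ι :=
    (MeasurableEmbedding.subtype_coe f.isClosed_ker.measurableSet).comp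
      (MeasurableEmbedding.subtype_coe Metric.isClosed_sphere.measurableSet)
  have hιS : ∀ ξ, ι ξ ∈ {ξ : E | f ξ = 0 ∧ ‖ξ‖ = 1} := fun ξ =>
    ⟨(ξ : f.ker).2, mem_sphere_zero_iff_norm.mp ξ.2⟩
  rw [ofReal_integral_eq_lintegral_ofReal (hG.integrableOn_compact hP)
    ((ae_restrict_iff' hP.measurableSet).mpr (Filter.Eventually.of_forall hG0)),
    ← Measure.prod_restrict, lintegral_prod, Measure.restrict_map hιe.measurable hS.measurableSet,
    show ι ⁻¹' {ξ : E | f ξ = 0 ∧ ‖ξ‖ = 1} = univ from eq_univ_of_forall hιS,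
    Measure.restrict_univ, hιe.lintegral_map]
  rw [Measure.prod_restrict]
  exact (hG.aemeasurable hP.measurableSet).ennreal_ofReal

variable [FiniteDimensional ℝ E] [MeasurableSpace E] [BorelSpace E]

theorem lintegral_chord_eq (hK : StrictConvex ℝ K) (hKc : IsCompact K) {f : E →L[ℝ] ℝ}
    [Nontrivial f.ker] (ν : Measure f.ker) [ν.IsAddHaarMeasure] {y : f.ker} {x : E}
    (hy : (y : E) ∈ overlap K x) (hfx : f x ≠ 0) :
    ∫⁻ w : f.ker, volume {s : ℝ | (w : E) + s • x ∈ {z | z ∈ K ∧ z - x ∈ K}} ∂ν =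
      ∫⁻ ξ : Metric.sphere (0 : f.ker) 1, ∫⁻ ρ in Icc (0 : ℝ) 1,
        ENNReal.ofReal (polarDensity K (Module.finrank ℝ f.ker - 1) y (x, (ξ : f.ker), ρ))
        ∂volume ∂ν.toSphere := by
  have hx : x ≠ 0 := by rintro rfl; simp at hfx
  have hL : IsClosed {z | z ∈ K ∧ z - x ∈ K} :=
    hKc.isClosed.inter (hKc.isClosed.preimage (by fun_prop))
  have hmeas : Measurable fun w : f.ker =>
      volume {s : ℝ | ((y + w : f.ker) : E) + s • x ∈ {z | z ∈ K ∧ z - x ∈ K}} := by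
    have hcont : Continuous fun p : f.ker × ℝ => ((y + p.1 : f.ker) : E) + p.2 • x := by fun_prop
    exact measurable_measure_prodMk_left (hcont.measurable hL.measurableSet)
  rw [← lintegral_add_left_eq_self _ y, lintegral_eq_lintegral_sphere ν hmeas]
  refine lintegral_congr fun ξ => ?_
  have hξ : f (ξ : f.ker) = 0 := (ξ : f.ker).2
  have hξ0 : ((ξ : f.ker) : E) ≠ 0 := by
    have : (ξ : f.ker) ≠ 0 := by
      intro h
      have := ξ.2
      rw [h] at this
      simp at this
    simpa using this
  set R := overlapRadius K y (ξ : f.ker) x with hR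
  have hR0 : 0 < R := overlapRadius_pos hK.convex hKc hy hfx hξ hξ0
  rw [setLIntegral_Ioi_eq_mul hR0, ← lintegral_const_mul' _ _ ENNReal.ofReal_ne_top,
    Measure.restrict_congr_set Ioc_ae_eq_Icc.symm, ← lintegral_indicator measurableSet_Ioi,
    ← lintegral_indicator measurableSet_Ioc]
  refine lintegral_congr fun ρ => ?_
  by_cases h0 : 0 < ρ
  swap
  · simp [indicator, h0]
  rw [indicator_of_mem (mem_Ioi.mpr h0)]
  have hset : {s : ℝ | ((y + (R * ρ) • (ξ : f.ker) : f.ker) : E) + s • x ∈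
      {z | z ∈ K ∧ z - x ∈ K}} = {s : ℝ | ((y : E) + (R * ρ) • ((ξ : f.ker) : E)) + s • x ∈ K ∧
        ((y : E) + (R * ρ) • ((ξ : f.ker) : E)) + (s - 1) • x ∈ K} := by
    ext s
    simp only [mem_ofPred_eq, Submodule.coe_add, Submodule.coe_smul]
    rw [show (y : E) + (R * ρ) • ((ξ : f.ker) : E) + s • x - x =
      (y : E) + (R * ρ) • ((ξ : f.ker) : E) + (s - 1) • x by module]
  rw [hset, volume_chord hK hKc hx]
  by_cases h1 : ρ < 1
  · have hmem : (y : E) + (R * ρ) • ((ξ : f.ker) : E) ∈ overlap K x :=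
      (add_smul_mem_overlap_iff hK.convex hKc hy hfx hξ hξ0 (by positivity)).mpr
        (mul_lt_of_lt_one_right hR0 h1)
    rw [indicator_of_mem hmem, indicator_of_mem (mem_Ioc.mpr ⟨h0, h1.le⟩), polarDensity,
      ENNReal.ofReal_mul (by positivity), ENNReal.ofReal_mul (by positivity), mul_assoc]
  · have hnot : (y : E) + (R * ρ) • ((ξ : f.ker) : E) ∉ overlap K x := by
      rw [add_smul_mem_overlap_iff hK.convex hKc hy hfx hξ hξ0 (by positivity), not_lt]
      exact le_mul_of_one_le_right hR0.le (not_lt.mp h1)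
    rw [indicator_of_notMem hnot, mul_zero, mul_zero]
    rcases (not_lt.mp h1).eq_or_lt with rfl | h2
    · have := (chordLength_overlapRadius hK hKc hy hfx hξ hξ0).2
      simp [polarDensity, this]
    · rw [indicator_of_notMem fun h => h2.not_ge h.2]

end Covariogram

/-- The covariogram of a convex body with `C²` boundary of positive curvature is `C²` at the
nonzero vectors `x` for which the interiors of `K` and `x + K` meet. -/
theorem contDiffAt_covariogram {E : Type} [NormedAddCommGroup E] [NormedSpace ℝ E]
    [FiniteDimensional ℝ E] [MeasurableSpace E] [BorelSpace E] {K : Set E}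
    (μ : Measure E) [μ.IsAddHaarMeasure] (hK : Convex ℝ K)
    (hKc : IsCompact K) (hC : HasC2PositiveCurvatureBoundary K) {x₀ : E} (hx₀ : x₀ ≠ 0)
    (hne : (overlap K x₀).Nonempty) :
    ContDiffAt ℝ 2 (fun x => (μ {z | z ∈ K ∧ z - x ∈ K}).toReal) x₀ := by
  have : CompleteSpace E := FiniteDimensional.complete ℝ E
  have : ProperSpace E := FiniteDimensional.proper ℝ E
  have hKs := hC.strictConvex hK hKc.isClosed
  obtain ⟨f, hf⟩ := SeparatingDual.exists_eq_one (R := ℝ) hx₀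
  obtain ⟨c, hc⟩ := exists_measure_eq_lintegral_line μ hf (Measure.addHaar : Measure f.ker)
  obtain ⟨y, hy⟩ : ∃ y : f.ker, (y : E) ∈ overlap K x₀ := by
    obtain ⟨z, s, hs, hs'⟩ := hne
    refine ⟨⟨z - f z • x₀, by simp [hf]⟩, s + f z, ?_, ?_⟩
    · convert hs using 1
      module
    · convert hs' using 1
      module
  have hmeasL : ∀ x, MeasurableSet {z | z ∈ K ∧ z - x ∈ K} := fun x =>
    (hKc.isClosed.inter (hKc.isClosed.preimage (by fun_prop))).measurableSet
  have hfpos : ∀ᶠ x in 𝓝 x₀, 0 < f x :=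
    f.continuous.continuousAt.eventually (lt_mem_nhds (by rw [hf]; exact one_pos))
  rcases subsingleton_or_nontrivial f.ker with hF | hF
  · have hyc : ContDiffAt ℝ 2 (fun x => chordLength K (y : E) x) x₀ :=
      ContDiffAt.comp (g := fun u : E × E => chordLength K u.1 u.2) (f := fun x => ((y : E), x))
        x₀ (contDiffAt_chordLength hK hKc hC hx₀ ((mem_overlap_iff hK hKc hx₀).mp hy).1)
        (by fun_prop)
    have hcd : ContDiffAt ℝ 2 (fun x => c * f x *
        ((chordLength K (y : E) x - 1) * ((Measure.addHaar : Measure f.ker) univ).toReal)) x₀ :=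
      (contDiffAt_const.mul f.contDiff.contDiffAt).mul
        ((hyc.sub contDiffAt_const).mul contDiffAt_const)
    refine hcd.congr_of_eventuallyEq ?_
    filter_upwards [hfpos, eventually_mem_overlap hy] with x hx hyx
    have hx0 : x ≠ 0 := by rintro rfl; simp at hx
    have h1 := ((mem_overlap_iff hK hKc hx0).mp hyx).2
    let _ : Unique f.ker := ⟨⟨y⟩, fun z => Subsingleton.elim _ _⟩
    have hset : {s : ℝ | (y : E) + s • x ∈ {z | z ∈ K ∧ z - x ∈ K}} =
        {s : ℝ | (y : E) + s • x ∈ K ∧ (y : E) + (s - 1) • x ∈ K} := by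
      ext s
      simp only [mem_ofPred_eq]
      rw [show (y : E) + s • x - x = (y : E) + (s - 1) • x by module]
    rw [hc x hx.ne' _ (hmeasL x), lintegral_unique]
    change (_ * (volume {s : ℝ | (y : E) + s • x ∈ {z | z ∈ K ∧ z - x ∈ K}} * _)).toReal = _
    rw [hset, volume_chord hKs hKc hx0, indicator_of_mem hyx, abs_of_pos hx]
    simp [ENNReal.toReal_mul, hx.le, h1.le]
  · set P : Set (E × ℝ) := {ξ : E | f ξ = 0 ∧ ‖ξ‖ = 1} ×ˢ Icc (0 : ℝ) 1 with hPdef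
    have hP : IsCompact P := by
      refine IsCompact.prod ?_ isCompact_Icc
      have h1 : IsClosed {ξ : E | f ξ = 0} := isClosed_eq f.continuous continuous_const
      convert (isCompact_sphere (0 : E) 1).inter_left h1 using 1
      ext ξ
      simp
    set k := Module.finrank ℝ f.ker - 1
    have hPξ : ∀ q ∈ P, f q.1 = 0 ∧ q.1 ≠ 0 ∧ q.2 ∈ Icc (0 : ℝ) 1 := by
      rintro q ⟨⟨h1, h2⟩, h3⟩
      exact ⟨h1, by rintro h; simp [h] at h2, h3⟩
    set σ := (Measure.addHaar : Measure f.ker).toSphere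
    have hcd : ContDiffAt ℝ 2 (fun x => c * f x * ∫ q in P, polarDensity K k y (x, q)
        ∂(σ.map fun ξ : Metric.sphere (0 : f.ker) 1 => ((ξ : f.ker) : E)).prod volume) x₀ := by
      refine (contDiffAt_const.mul f.contDiff.contDiffAt).mul
        (contDiffAt_setIntegral 2 hP fun q hq => ?_)
      obtain ⟨h1, h2, h3⟩ := hPξ q hq
      exact contDiffAt_polarDensity hK hKc hC hy (by rw [hf]; exact one_ne_zero) h1 h2 h3 k
    refine hcd.congr_of_eventuallyEq ?_
    filter_upwards [hfpos, eventually_mem_overlap hy] with x hx hyx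
    have hcont : ContinuousOn (fun q => polarDensity K k y (x, q)) P := fun q hq => by
      obtain ⟨h1, h2, h3⟩ := hPξ q hq
      have h4 := (contDiffAt_polarDensity hK hKc hC hyx hx.ne' h1 h2 h3 k).continuousAt
      exact (ContinuousAt.comp (g := polarDensity K k y) (f := fun q => (x, q)) h4
        (by fun_prop)).continuousWithinAt
    have hnn : ∀ q ∈ P, 0 ≤ polarDensity K k y (x, q) := fun q hq => by
      obtain ⟨h1, h2, h3⟩ := hPξ q hq
      exact polarDensity_nonneg hKs hKc hyx hx.ne' h1 h2 h3 k
    rw [hc x hx.ne' _ (hmeasL x), lintegral_chord_eq hKs hKc _ hyx hx.ne',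
      ← setIntegral_polar_eq σ (G := fun q => polarDensity K k y (x, q)) hP hcont hnn,
      abs_of_pos hx, ENNReal.toReal_mul, ENNReal.toReal_mul, ENNReal.toReal_ofReal hx.le,
      ENNReal.toReal_ofReal (setIntegral_nonneg hP.measurableSet hnn), ENNReal.coe_toReal]

section Functional

variable {E : Type*} [NormedAddCommGroup E] [NormedSpace ℝ E] {K : Set E}

/-- A longest chord of `K` with direction `x`, together with a functional that attains its
extrema over `K` at the ends of this chord. -/
theorem exists_longest_chord (hK : StrictConvex ℝ K) (hKc : IsCompact K) {x : E} (hx : x ≠ 0)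
    (hne : (overlap K x).Nonempty) :
    ∃ f : E →L[ℝ] ℝ, ∃ p ∈ K, ∃ q ∈ K, f p + f x < f q ∧
      (∀ z ∈ K, z - x ∉ interior K → f z < f q) ∧
      ∀ z ∈ K, z + x ∉ interior K → f p < f z := by
  obtain ⟨z₀, s, hs, hs'⟩ := hne
  have hcl : IsCompact ((fun l : ℝ => l • x) ⁻¹' (K - K)) :=
    (isClosedEmbedding_smul_left hx).isCompact_preimage
      (by simpa only [sub_eq_add_neg] using hKc.add hKc.neg)
  have hpush : ∀ z ∈ interior K, ∃ ε > (0 : ℝ), z + ε • x ∈ K := by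
    intro z hz
    have hc : ContinuousAt (fun ε : ℝ => z + ε • x) 0 := by fun_prop
    have h1 := hc.eventually (isOpen_interior.mem_nhds (by simpa using hz))
    obtain ⟨ε, h2, h3⟩ := ((h1.filter_mono nhdsWithin_le_nhds).and
        self_mem_nhdsWithin :
      ∀ᶠ ε in 𝓝[>] (0 : ℝ), z + ε • x ∈ interior K ∧ ε ∈ Ioi (0 : ℝ)).exists
    exact ⟨ε, h3, interior_subset h2⟩
  obtain ⟨ε₀, hε₀, hε₀K⟩ := hpush _ hs
  have hmem : 1 + ε₀ ∈ (fun l : ℝ => l • x) ⁻¹' (K - K) :=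
    ⟨_, hε₀K, _, interior_subset hs', by module⟩
  obtain ⟨l, ⟨q, hq, p, hp, hpq⟩, hmax⟩ := hcl.exists_isMaxOn ⟨_, hmem⟩ continuousOn_id
  have hl : 1 < l := by
    have : 1 + ε₀ ≤ l := hmax hmem
    linarith
  have hpq' : q = p + l • x := sub_eq_iff_eq_add'.mp hpq
  have hconv := hK.convex
  have hdisj : Disjoint (interior K) ((fun z => z - l • x) ⁻¹' interior K) := by
    rw [Set.disjoint_left]
    intro z hz hz'
    obtain ⟨ε, hε, hεK⟩ := hpush z hz
    have h1 : l + ε ∈ (fun l : ℝ => l • x) ⁻¹' (K - K) :=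
      ⟨_, hεK, _, interior_subset hz', by module⟩
    have : l + ε ≤ l := hmax h1
    linarith
  obtain ⟨f, u, hf1, hf2⟩ := geometric_hahn_banach_open_open hconv.interior isOpen_interior
    (by simpa only [sub_eq_add_neg] using hconv.interior.translate_preimage_left (-(l • x)))
    (isOpen_interior.preimage (by fun_prop)) hdisj
  have hKcl : K ⊆ closure (interior K) := by
    rw [hconv.closure_interior_eq_closure_of_nonempty_interior ⟨_, hs⟩]
    exact subset_closure
  have hle : ∀ z ∈ K, f z ≤ u := fun z hz =>
    (closure_minimal (fun w hw => (hf1 w hw).le) (isClosed_le f.continuous continuous_const))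
      (hKcl hz)
  have hf2' : ∀ z ∈ interior K, u < f z + l * f x := fun z hz => by
    simpa using hf2 (z + l • x) (by simpa using hz)
  have hge : ∀ z ∈ K, u ≤ f z + l * f x := fun z hz =>
    (closure_minimal (fun w hw => (hf2' w hw).le)
      (isClosed_le continuous_const (f.continuous.add continuous_const))) (hKcl hz)
  have hfq : f q = f p + l * f x := by rw [hpq']; simp
  have hqu : f q = u := le_antisymm (hle q hq) (hfq ▸ hge p hp)
  have hfx : 0 < l * f x := by
    have h1 := hf1 _ hs
    have h2 := hf2' _ hs
    linarith
  have hfx' : 0 < f x := pos_of_mul_pos_right hfx (by linarith)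
  have hpq_ne : p ≠ q := by rintro rfl; linarith
  have hmid : ∀ z w, z ∈ K → w ∈ K → z ≠ w → (1 / 2 : ℝ) • z + (1 / 2 : ℝ) • w ∈ interior K :=
    fun z w hz hw hzw => hK hz hw hzw (by norm_num) (by norm_num) (by norm_num)
  have hseg : ∀ a b : ℝ, 0 < a → 0 < b → a + b = 1 → a • p + b • q ∈ interior K :=
    fun a b ha hb hab => hK hp hq hpq_ne ha hb hab
  have hl0 : l ≠ 0 := by linarith
  have hl1 : 0 < l⁻¹ := by positivity
  have hl2 : 0 < 1 - l⁻¹ := by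
    have := inv_lt_one_of_one_lt₀ hl
    linarith
  refine ⟨f, p, hp, q, hq, by nlinarith, fun z hz hzx => ?_, fun z hz hzx => ?_⟩
  · refine lt_of_le_of_ne (hqu ▸ hle z hz) fun h => ?_
    by_cases hzq : z = q
    · apply hzx
      convert hseg l⁻¹ (1 - l⁻¹) hl1 hl2 (by ring) using 1
      rw [hzq, hpq', smul_add, smul_smul, sub_mul, inv_mul_cancel₀ hl0]
      module
    · have := hf1 _ (hmid z q hz hq hzq)
      simp only [map_add, map_smul, smul_eq_mul] at this
      linarith
  · have hpz : f p ≤ f z := by linarith [hge z hz]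
    refine lt_of_le_of_ne hpz fun h => ?_
    by_cases hzp : z = p
    · apply hzx
      convert hseg (1 - l⁻¹) l⁻¹ hl2 hl1 (by ring) using 1
      rw [hzp, hpq', smul_add, smul_smul, inv_mul_cancel₀ hl0]
      module
    · have := hf2' _ (hmid z p hz hp hzp)
      simp only [map_add, map_smul, smul_eq_mul] at this
      linarith

theorem exists_functional_ne_zero (hK : StrictConvex ℝ K) (hKc : IsCompact K) {x v : E}
    (hx : x ≠ 0) (hv : v ≠ 0) (hne : (overlap K x).Nonempty) :
    ∃ f : E →L[ℝ] ℝ, f v ≠ 0 ∧ ∃ p ∈ K, ∃ q ∈ K, f p + f x < f q ∧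
      (∀ z ∈ K, z - x ∉ interior K → f z < f q) ∧
      ∀ z ∈ K, z + x ∉ interior K → f p < f z := by
  obtain ⟨f, p, hp, q, hq, h1, h2, h3⟩ := exists_longest_chord hK hKc hx hne
  by_cases hfv : f v = 0
  swap
  · exact ⟨f, hfv, p, hp, q, hq, h1, h2, h3⟩
  obtain ⟨w, hw⟩ := SeparatingDual.exists_eq_one (R := ℝ) hv
  have hA : IsCompact {z | z ∈ K ∧ z - x ∉ interior K} :=
    hKc.inter_right (isOpen_interior.isClosed_compl.preimage (by fun_prop))
  have hB : IsCompact {z | z ∈ K ∧ z + x ∉ interior K} :=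
    hKc.inter_right (isOpen_interior.isClosed_compl.preimage (by fun_prop))
  have e1 : ∀ᶠ η in 𝓝 (0 : ℝ), f p + η * w p + (f x + η * w x) < f q + η * w q := by
    have c1 : ContinuousAt (fun η : ℝ => f q + η * w q - (f p + η * w p + (f x + η * w x))) 0 := by
      fun_prop
    filter_upwards [c1.eventually (lt_mem_nhds (a := 0) (by simp; linarith))] with η h
    linarith
  have e2 : ∀ᶠ η in 𝓝 (0 : ℝ), ∀ z ∈ {z | z ∈ K ∧ z - x ∉ interior K},
      0 < f q + η * w q - (f z + η * w z) := by
    refine hA.eventually_forall_of_forall_eventually fun z hz => ?_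
    have c1 : ContinuousAt (fun u : ℝ × E => f q + u.1 * w q - (f u.2 + u.1 * w u.2)) (0, z) := by
      fun_prop
    exact c1.eventually (lt_mem_nhds (by simpa using h2 z hz.1 hz.2))
  have e3 : ∀ᶠ η in 𝓝 (0 : ℝ), ∀ z ∈ {z | z ∈ K ∧ z + x ∉ interior K},
      0 < f z + η * w z - (f p + η * w p) := by
    refine hB.eventually_forall_of_forall_eventually fun z hz => ?_
    have c1 : ContinuousAt (fun u : ℝ × E => f u.2 + u.1 * w u.2 - (f p + u.1 * w p)) (0, z) := by
      fun_prop
    exact c1.eventually (lt_mem_nhds (by simpa using h3 z hz.1 hz.2))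
  obtain ⟨η, ⟨g1, g2, g3⟩, hη⟩ := (((e1.and (e2.and e3)).filter_mono nhdsWithin_le_nhds).and
    self_mem_nhdsWithin : ∀ᶠ η in 𝓝[>] (0 : ℝ), _ ∧ η ∈ Ioi (0 : ℝ)).exists
  refine ⟨f + η • w, ?_, p, hp, q, hq, ?_, fun z hz hzx => ?_, fun z hz hzx => ?_⟩
  · simpa [hfv, hw] using (ne_of_gt hη : η ≠ 0)
  · simpa using g1
  · simpa using g2 z ⟨hz, hzx⟩
  · simpa using g3 z ⟨hz, hzx⟩

end Functional

section NotFlat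

variable {n : ℕ} {K : Set (EuclideanSpace ℝ (Fin n))}

/-- The multiplicative Brunn–Minkowski inequality for real-valued volumes. -/
theorem toReal_volume_rpow_mul_le {a b : ℝ} (ha : 0 < a) (hb : 0 < b) (hab : a + b = 1)
    {A B Z : Set (EuclideanSpace ℝ (Fin n))} (hA : MeasurableSet A) (hB : MeasurableSet B)
    (hZ : MeasurableSet Z) (hZf : volume Z ≠ ∞) (H : ∀ x ∈ A, ∀ y ∈ B, a • x + b • y ∈ Z) :
    (volume A).toReal ^ a * (volume B).toReal ^ b ≤ (volume Z).toReal := by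
  rw [ENNReal.toReal_rpow, ENNReal.toReal_rpow, ← ENNReal.toReal_mul]
  exact ENNReal.toReal_mono hZf (volume_rpow_mul_volume_rpow_le ha hb hab hA hB hZ H)

theorem toReal_volume_pos_of_isOpen {U S : Set (EuclideanSpace ℝ (Fin n))} (hU : IsOpen U)
    (hne : U.Nonempty) (hUS : U ⊆ S) (hS : volume S ≠ ∞) : 0 < (volume S).toReal :=
  ENNReal.toReal_pos ((hU.measure_pos volume hne).trans_le (measure_mono hUS)).ne' hS

theorem not_flat_of_functional (hK : Convex ℝ K) (hKc : IsCompact K)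
    (hint : (interior K).Nonempty) {x v : EuclideanSpace ℝ (Fin n)}
    {θ : EuclideanSpace ℝ (Fin n) →L[ℝ] ℝ} (hθv : 0 < θ v) {p q : EuclideanSpace ℝ (Fin n)}
    (hp : p ∈ K) (hq : q ∈ K) (h1 : θ p + θ x < θ q)
    (h2 : ∀ z ∈ K, z - x ∉ interior K → θ z < θ q)
    (h3 : ∀ z ∈ K, z + x ∉ interior K → θ p < θ z)
    (hflat : ∀ η > 0, ∃ t₁ > 0, ∀ t : ℝ, |t| < t₁ →
      (volume {z | z ∈ K ∧ z - x ∈ K}).toReal - η * t ^ 2 ≤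
        (volume {z | z ∈ K ∧ z - (x + t • v) ∈ K}).toReal) : False := by
  have hA : IsCompact {z | z ∈ K ∧ z - x ∉ interior K} :=
    hKc.inter_right (isOpen_interior.isClosed_compl.preimage (by fun_prop))
  have hB : IsCompact {z | z ∈ K ∧ z + x ∉ interior K} :=
    hKc.inter_right (isOpen_interior.isClosed_compl.preimage (by fun_prop))
  have e1 : ∀ᶠ ε in 𝓝 (0 : ℝ), 0 < θ q - ε - (θ p + ε + θ x) := by
    have c1 : ContinuousAt (fun ε : ℝ => θ q - ε - (θ p + ε + θ x)) 0 := by fun_prop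
    exact c1.eventually (lt_mem_nhds (by simp; linarith))
  have e2 : ∀ᶠ ε in 𝓝 (0 : ℝ), ∀ z ∈ {z | z ∈ K ∧ z - x ∉ interior K}, 0 < θ q - ε - θ z := by
    refine hA.eventually_forall_of_forall_eventually fun z hz => ?_
    have c1 : ContinuousAt (fun u : ℝ × EuclideanSpace ℝ (Fin n) => θ q - u.1 - θ u.2) (0, z) := by
      fun_prop
    exact c1.eventually (lt_mem_nhds (by simpa using h2 z hz.1 hz.2))
  have e3 : ∀ᶠ ε in 𝓝 (0 : ℝ), ∀ z ∈ {z | z ∈ K ∧ z + x ∉ interior K}, 0 < θ z - (θ p + ε) := by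
    refine hB.eventually_forall_of_forall_eventually fun z hz => ?_
    have c1 : ContinuousAt (fun u : ℝ × EuclideanSpace ℝ (Fin n) => θ u.2 - (θ p + u.1))
        (0, z) := by
      fun_prop
    exact c1.eventually (lt_mem_nhds (by simpa using h3 z hz.1 hz.2))
  obtain ⟨ε, ⟨g1, g2, g3⟩, hε⟩ := (((e1.and (e2.and e3)).filter_mono nhdsWithin_le_nhds).and
    self_mem_nhdsWithin : ∀ᶠ ε in 𝓝[>] (0 : ℝ), _ ∧ ε ∈ Ioi (0 : ℝ)).exists
  rw [mem_Ioi] at hε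
  set c₁ := θ q - ε with hc₁
  set c₃ := θ p + ε with hc₃
  have hC : IsCompact {z | z ∈ K ∧ c₁ ≤ θ z} :=
    hKc.inter_right (isClosed_le continuous_const θ.continuous)
  have hD : IsCompact {z | z ∈ K ∧ θ z ≤ c₃} :=
    hKc.inter_right (isClosed_le θ.continuous continuous_const)
  have e4 : ∀ᶠ t in 𝓝 (0 : ℝ), ∀ z ∈ {z | z ∈ K ∧ c₁ ≤ θ z}, z - (x + t • v) ∈ interior K := by
    refine hC.eventually_forall_of_forall_eventually fun z hz => ?_
    have c1 : ContinuousAt (fun u : ℝ × EuclideanSpace ℝ (Fin n) => u.2 - (x + u.1 • v))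
        (0, z) := by
      fun_prop
    refine c1.eventually (isOpen_interior.mem_nhds ?_)
    by_contra h
    have := g2 z ⟨hz.1, by simpa using h⟩
    linarith [hz.2]
  have e5 : ∀ᶠ t in 𝓝 (0 : ℝ), ∀ z ∈ {z | z ∈ K ∧ θ z ≤ c₃}, z + (x + t • v) ∈ interior K := by
    refine hD.eventually_forall_of_forall_eventually fun z hz => ?_
    have c1 : ContinuousAt (fun u : ℝ × EuclideanSpace ℝ (Fin n) => u.2 + (x + u.1 • v))
        (0, z) := by
      fun_prop
    refine c1.eventually (isOpen_interior.mem_nhds ?_)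
    by_contra h
    have := g3 z ⟨hz.1, by simpa using h⟩
    linarith [hz.2]
  obtain ⟨t₀, ht₀, ht⟩ := Metric.eventually_nhds_iff.mp (e4.and e5)
  have ht' : ∀ t : ℝ, |t| ≤ t₀ / 2 → (∀ z ∈ K, c₁ ≤ θ z → z - (x + t • v) ∈ interior K) ∧
      ∀ z ∈ K, θ z ≤ c₃ → z + (x + t • v) ∈ interior K := by
    intro t h
    have := @ht t (by rw [Real.dist_eq, sub_zero]; linarith)
    exact ⟨fun z h h' => this.1 z ⟨h, h'⟩, fun z h h' => this.2 z ⟨h, h'⟩⟩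
  clear ht e1 e2 e3 e4 e5
  have hfin : ∀ S : Set (EuclideanSpace ℝ (Fin n)), S ⊆ K → volume S ≠ ∞ := fun S hS =>
    ((measure_mono hS).trans_lt hKc.measure_lt_top).ne
  have hmL : ∀ t : ℝ, MeasurableSet {z | z ∈ K ∧ z - (x + t • v) ∈ K} := fun t =>
    (hKc.isClosed.inter (hKc.isClosed.preimage (by fun_prop))).measurableSet
  have hmP : ∀ c t : ℝ, MeasurableSet {z | (z ∈ K ∧ z - (x + t • v) ∈ K) ∧ c ≤ θ z} := fun c t =>
    (hmL t).inter (isClosed_le continuous_const θ.continuous).measurableSet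
  have hmQ : ∀ c t : ℝ, MeasurableSet {z | (z ∈ K ∧ z - (x + t • v) ∈ K) ∧ θ z < c} := fun c t =>
    (hmL t).inter (isOpen_lt θ.continuous continuous_const).measurableSet
  have hcomb : ∀ a b : ℝ, 0 < a → 0 < b → a + b = 1 → ∀ t t' : ℝ, ∀ z w,
      (z ∈ K ∧ z - (x + t • v) ∈ K) → (w ∈ K ∧ w - (x + t' • v) ∈ K) →
      a • z + b • w ∈ K ∧ a • z + b • w - (x + (a * t + b * t') • v) ∈ K := by
    intro a b ha hb hab t t' z w hz hw
    refine ⟨hK hz.1 hw.1 ha.le hb.le hab, ?_⟩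
    convert hK hz.2 hw.2 ha.le hb.le hab using 1
    have : x = (a + b) • x := by rw [hab, one_smul]
    conv_lhs => rw [this]
    module
  have hcl : K ⊆ closure (interior K) := by
    rw [hK.closure_interior_eq_closure_of_nonempty_interior hint]
    exact subset_closure
  have htopU : ({z | c₁ < θ z} ∩ interior K).Nonempty :=
    mem_closure_iff.mp (hcl hq) _ (isOpen_lt continuous_const θ.continuous)
      (by simp only [mem_ofPred_eq]; linarith)
  have hbotU : ({z | θ z < c₃} ∩ interior K).Nonempty :=
    mem_closure_iff.mp (hcl hp) _ (isOpen_lt θ.continuous continuous_const)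
      (by simp only [mem_ofPred_eq]; linarith)
  have h0 := ht' 0 (by rw [abs_zero]; linarith)
  simp only [zero_smul, add_zero] at h0
  obtain ⟨C, hC⟩ := (hKc.image θ.continuous).isBounded.exists_norm_le
  have hθC : ∀ z ∈ K, |θ z| ≤ C := fun z hz => hC _ (mem_image_of_mem _ hz)
  refine not_flat_of_split
    (P := fun c t => (volume {z | (z ∈ K ∧ z - (x + t • v) ∈ K) ∧ c ≤ θ z}).toReal)
    (Q := fun c t => (volume {z | (z ∈ K ∧ z - (x + t • v) ∈ K) ∧ θ z < c}).toReal)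
    (H := fun t => (volume {z | z ∈ K ∧ z - (x + t • v) ∈ K}).toReal)
    (M := C + 1) (m := -C) (c₁ := c₁) (c₂ := c₃ + θ x) (τ := θ v) (t₀ := t₀ / 2)
    (fun c t => ?hadd) (fun c t => ENNReal.toReal_nonneg) (fun t c c' h => ?hanti)
    (fun a b ha hb hab c c' t t' => ?hP) (fun a b ha hb hab c c' t t' => ?hQ)
    (fun c t _ hMc => ?hM) ?hm (by linarith) hθv (fun c t h hc => ?htop) ?htop0
    (fun t h => ?hbot) ?hbot0 (fun c hc => ?hslab) (by linarith) ?hflat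
  case hadd =>
    rw [← ENNReal.toReal_add (hfin _ fun z hz => hz.1.1) (hfin _ fun z hz => hz.1.1),
      ← measure_union _ (hmQ c t)]
    · congr 2
      ext z
      simp only [mem_union, mem_ofPred_eq, ← and_or_left, le_or_gt, and_true]
    · rw [Set.disjoint_left]
      exact fun z hz hz' => hz.2.not_gt hz'.2
  case hanti =>
    exact ENNReal.toReal_mono (hfin _ fun z hz => hz.1.1)
      (measure_mono fun z hz => ⟨hz.1, h.trans hz.2⟩)
  case hP =>
    refine toReal_volume_rpow_mul_le ha hb hab (hmP _ _) (hmP _ _) (hmP _ _)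
      (hfin _ fun z hz => hz.1.1) fun z hz w hw => ⟨hcomb a b ha hb hab t t' z w hz.1 hw.1, ?_⟩
    rw [map_add, map_smul, map_smul, smul_eq_mul, smul_eq_mul]
    exact add_le_add (mul_le_mul_of_nonneg_left hz.2 ha.le) (mul_le_mul_of_nonneg_left hw.2 hb.le)
  case hQ =>
    refine toReal_volume_rpow_mul_le ha hb hab (hmQ _ _) (hmQ _ _) (hmQ _ _)
      (hfin _ fun z hz => hz.1.1) fun z hz w hw => ⟨hcomb a b ha hb hab t t' z w hz.1 hw.1, ?_⟩
    rw [map_add, map_smul, map_smul, smul_eq_mul, smul_eq_mul]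
    exact add_lt_add (mul_lt_mul_of_pos_left hz.2 ha) (mul_lt_mul_of_pos_left hw.2 hb)
  case hM =>
    convert ENNReal.toReal_zero
    convert measure_empty (μ := volume)
    refine eq_empty_of_forall_notMem fun z hz => ?_
    have := (abs_le.mp (hθC z hz.1.1)).2
    have := hz.2
    linarith
  case hm =>
    convert ENNReal.toReal_zero
    convert measure_empty (μ := volume)
    refine eq_empty_of_forall_notMem fun z hz => ?_
    have := (abs_le.mp (hθC z hz.1.1)).1
    have := hz.2
    linarith
  case htop =>
    congr 2
    ext z
    simp only [mem_ofPred_eq, zero_smul, add_zero]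
    refine ⟨fun hz => ⟨⟨hz.1.1, ?_⟩, hz.2⟩, fun hz => ⟨⟨hz.1.1, ?_⟩, hz.2⟩⟩
    · exact interior_subset (h0.1 z hz.1.1 (hc.trans hz.2))
    · exact interior_subset ((ht' t h).1 z hz.1.1 (hc.trans hz.2))
  case htop0 =>
    refine toReal_volume_pos_of_isOpen
      ((isOpen_lt continuous_const θ.continuous).inter isOpen_interior) htopU ?_
      (hfin _ fun z hz => hz.1.1)
    rintro z ⟨hz, hzK⟩
    simp only [mem_ofPred_eq, zero_smul, add_zero] at hz ⊢
    exact ⟨⟨interior_subset hzK, interior_subset (h0.1 z (interior_subset hzK) hz.le)⟩, hz.le⟩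
  case hbot =>
    have key : ∀ t : ℝ, |t| ≤ t₀ / 2 →
        volume {z | (z ∈ K ∧ z - (x + t • v) ∈ K) ∧ θ z < c₃ + θ x + θ v * t} =
          volume {z | z ∈ K ∧ θ z < c₃} := by
      intro t h
      rw [← measure_preimage_add volume (x + t • v)]
      congr 1
      ext z
      simp only [mem_preimage, mem_ofPred_eq, add_sub_cancel_left, map_add, map_smul, smul_eq_mul]
      constructor
      · rintro ⟨⟨-, g4⟩, g5⟩
        exact ⟨g4, by linarith⟩
      · rintro ⟨g4, g5⟩
        refine ⟨⟨?_, g4⟩, by linarith⟩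
        rw [add_comm]
        exact interior_subset ((ht' t h).2 z g4 g5.le)
    have k0 := key 0 (by rw [abs_zero]; linarith)
    rw [mul_zero, add_zero] at k0
    rw [key t h, k0]
  case hbot0 =>
    obtain ⟨w, hw, hwK⟩ := hbotU
    have hU : IsOpen ({z | θ z < c₃ + θ x} ∩ interior K ∩ (fun z => z - x) ⁻¹' interior K) :=
      ((isOpen_lt θ.continuous continuous_const).inter isOpen_interior).inter
        (isOpen_interior.preimage (by fun_prop))
    refine toReal_volume_pos_of_isOpen hU ⟨w + x, ⟨?_, ?_⟩, ?_⟩ ?_ (hfin _ fun z hz => hz.1.1)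
    · simpa using hw
    · exact h0.2 w (interior_subset hwK) (le_of_lt hw)
    · simpa using hwK
    · rintro z ⟨⟨hz, hzK⟩, hzx⟩
      simp only [mem_ofPred_eq, zero_smul, add_zero] at hz ⊢
      exact ⟨⟨interior_subset hzK, interior_subset hzx⟩, hz⟩
  case hslab =>
    set W := interior K ∩ (fun z => z - x) ⁻¹' interior K with hW
    have hWo : IsOpen W := isOpen_interior.inter (isOpen_interior.preimage (by fun_prop))
    have hWc : Convex ℝ W := hK.interior.inter
      (by simpa only [sub_eq_add_neg] using hK.interior.translate_preimage_left (-x))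
    obtain ⟨w₁, hw₁, hw₁K⟩ := hbotU
    obtain ⟨w₂, hw₂, hw₂K⟩ := htopU
    rw [mem_ofPred_eq] at hw₁ hw₂
    have hmin : c₃ + θ x < min c c₁ := lt_min hc (by linarith)
    obtain ⟨z, hz, hzθ⟩ : (c₃ + θ x + min c c₁) / 2 ∈ θ '' W := by
      refine (hWc.isPreconnected.image θ θ.continuous.continuousOn).ordConnected.out
        (mem_image_of_mem θ (x := w₁ + x) ⟨h0.2 w₁ (interior_subset hw₁K) hw₁.le, ?_⟩)
        (mem_image_of_mem θ (x := w₂) ⟨hw₂K, h0.1 w₂ (interior_subset hw₂K) hw₂.le⟩) ⟨?_, ?_⟩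
      · simpa using hw₁K
      · rw [map_add]
        linarith
      · linarith [min_le_right c c₁]
    have hUo : IsOpen (W ∩ {z | c₃ + θ x < θ z ∧ θ z < c}) := hWo.inter
      ((isOpen_lt continuous_const θ.continuous).inter (isOpen_lt θ.continuous continuous_const))
    have hUW : ∀ z ∈ W, z ∈ K ∧ z - (x + (0 : ℝ) • v) ∈ K := fun z hz => by
      simpa using And.intro (interior_subset hz.1) (interior_subset hz.2)
    have hpos := toReal_volume_pos_of_isOpen hUo
      ⟨z, hz, by linarith, by linarith [min_le_left c c₁]⟩ subset_rfl
      (hfin _ fun z hz => (hUW z hz.1).1)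
    have hsum : (volume {z | (z ∈ K ∧ z - (x + (0 : ℝ) • v) ∈ K) ∧ c ≤ θ z}).toReal +
        (volume (W ∩ {z | c₃ + θ x < θ z ∧ θ z < c})).toReal ≤
        (volume {z | (z ∈ K ∧ z - (x + (0 : ℝ) • v) ∈ K) ∧ c₃ + θ x ≤ θ z}).toReal := by
      rw [← ENNReal.toReal_add (hfin _ fun z hz => hz.1.1) (hfin _ fun z hz => (hUW z hz.1).1),
        ← measure_union _ hUo.measurableSet]
      · refine ENNReal.toReal_mono (hfin _ fun z hz => hz.1.1) (measure_mono ?_)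
        rintro z (hz | hz)
        · exact ⟨hz.1, hc.le.trans hz.2⟩
        · exact ⟨hUW z hz.1, hz.2.1.le⟩
      · rw [Set.disjoint_left]
        exact fun z hz hz' => hz.2.not_gt hz'.2.2
    linarith
  case hflat =>
    simpa using hflat

theorem not_flat_covariogram (hK : StrictConvex ℝ K) (hKc : IsCompact K)
    {x v : EuclideanSpace ℝ (Fin n)} (hx : x ≠ 0) (hv : v ≠ 0) (hne : (overlap K x).Nonempty)
    (hflat : ∀ η > 0, ∃ t₁ > 0, ∀ t : ℝ, |t| < t₁ →
      (volume {z | z ∈ K ∧ z - x ∈ K}).toReal - η * t ^ 2 ≤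
        (volume {z | z ∈ K ∧ z - (x + t • v) ∈ K}).toReal) : False := by
  have hint : (interior K).Nonempty := by
    obtain ⟨z, s, hs, -⟩ := hne
    exact ⟨_, hs⟩
  obtain ⟨θ, hθv, p, hp, q, hq, h1, h2, h3⟩ := exists_functional_ne_zero hK hKc hx hv hne
  rcases hθv.lt_or_gt with h | h
  · refine not_flat_of_functional hK.convex hKc hint (v := -v) (by simpa using h) hp hq h1 h2 h3
      fun η hη => ?_
    obtain ⟨t₁, ht₁, H⟩ := hflat η hη
    refine ⟨t₁, ht₁, fun t ht => ?_⟩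
    have := H (-t) (by rwa [abs_neg])
    rwa [neg_sq, neg_smul, ← smul_neg] at this
  · exact not_flat_of_functional hK.convex hKc hint h hp hq h1 h2 h3 hflat

end NotFlat

section ConvolutionBody

variable {n : ℕ} {K : Set (EuclideanSpace ℝ (Fin n))}

theorem continuous_covariogram (hK : Convex ℝ K) (hKc : IsCompact K) :
    Continuous fun x => volume {z | z ∈ K ∧ z - x ∈ K} := by
  have hm : ∀ x, MeasurableSet {z | z ∈ K ∧ z - x ∈ K} := fun x =>
    (hKc.isClosed.inter (hKc.isClosed.preimage (by fun_prop))).measurableSet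
  refine continuous_iff_continuousAt.mpr fun x => ?_
  refine tendsto_measure_of_ae_tendsto_indicator (𝓝 x) (hm x) hm hKc.measurableSet
    hKc.measure_lt_top.ne (Filter.Eventually.of_forall fun y z hz => hz.1) ?_
  have hfr : volume ((fun z => z - x) ⁻¹' frontier K) = 0 := by
    simp only [sub_eq_add_neg]
    rw [measure_preimage_add_right, hK.addHaar_frontier volume]
  filter_upwards [measure_eq_zero_iff_ae_notMem.mp hfr] with z hz
  have hc : ContinuousAt (fun y => z - y) x := by fun_prop
  by_cases h : z - x ∈ K
  · have h' : z - x ∈ interior K := by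
      by_contra h'
      exact hz ⟨subset_closure h, h'⟩
    filter_upwards [hc.eventually (isOpen_interior.mem_nhds h')] with y hy
    exact and_congr_right fun _ => iff_of_true (interior_subset hy) h
  · filter_upwards [hc.eventually (hKc.isClosed.isOpen_compl.mem_nhds h)] with y hy
    exact and_congr_right fun _ => iff_of_false hy h

theorem covariogram_rpow_mul_le (hK : Convex ℝ K) (hKc : IsCompact K) {a b : ℝ} (ha : 0 < a)
    (hb : 0 < b) (hab : a + b = 1) (x y : EuclideanSpace ℝ (Fin n)) :
    (volume {z | z ∈ K ∧ z - x ∈ K}).toReal ^ a * (volume {z | z ∈ K ∧ z - y ∈ K}).toReal ^ b ≤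
      (volume {z | z ∈ K ∧ z - (a • x + b • y) ∈ K}).toReal := by
  have hm : ∀ x, MeasurableSet {z | z ∈ K ∧ z - x ∈ K} := fun x =>
    (hKc.isClosed.inter (hKc.isClosed.preimage (by fun_prop))).measurableSet
  refine toReal_volume_rpow_mul_le ha hb hab (hm _) (hm _) (hm _)
    ((measure_mono fun z hz => hz.1).trans_lt hKc.measure_lt_top).ne fun z hz w hw =>
      ⟨hK hz.1 hw.1 ha.le hb.le hab, ?_⟩
  convert hK hz.2 hw.2 ha.le hb.le hab using 1
  module

theorem overlap_nonempty_of_covariogram_pos (hK : Convex ℝ K) {x : EuclideanSpace ℝ (Fin n)}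
    (h : 0 < volume {z | z ∈ K ∧ z - x ∈ K}) : (overlap K x).Nonempty := by
  have hfr : volume ((fun z => z - x) ⁻¹' frontier K) = 0 := by
    simp only [sub_eq_add_neg]
    rw [measure_preimage_add_right, hK.addHaar_frontier volume]
  by_contra hne
  refine h.ne' (measure_mono_null (t := frontier K ∪ (fun z => z - x) ⁻¹' frontier K) ?_
    (measure_union_null (hK.addHaar_frontier volume) hfr))
  intro z hz
  by_contra hz'
  rw [mem_union, not_or] at hz'
  refine hne ⟨z, 0, ?_, ?_⟩
  · by_contra h'
    exact hz'.1 ⟨subset_closure hz.1, by simpa using h'⟩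
  · by_contra h'
    exact hz'.2 ⟨subset_closure hz.2, by simpa [sub_eq_add_neg] using h'⟩

theorem fderiv_covariogram_neg (hK : Convex ℝ K) (hKc : IsCompact K)
    {x : EuclideanSpace ℝ (Fin n)} (h0 : 0 < (volume {z | z ∈ K ∧ z - x ∈ K}).toReal)
    (h1 : (volume {z | z ∈ K ∧ z - x ∈ K}).toReal < (volume K).toReal)
    (hd : DifferentiableAt ℝ (fun x => (volume {z | z ∈ K ∧ z - x ∈ K}).toReal) x) :
    fderiv ℝ (fun x => (volume {z | z ∈ K ∧ z - x ∈ K}).toReal) x x < 0 := by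
  set D := fderiv ℝ (fun x => (volume {z | z ∈ K ∧ z - x ∈ K}).toReal) x with hD
  set d := (volume {z | z ∈ K ∧ z - x ∈ K}).toReal with hd'
  set V := (volume K).toReal
  have h2 : HasDerivAt (fun t : ℝ => (volume {z | z ∈ K ∧ z - (x + t • -x) ∈ K}).toReal)
      (D (-x)) 0 := by
    have := hasDerivAt_comp_line (f := fun x => (volume {z | z ∈ K ∧ z - x ∈ K}).toReal)
      (p := x) (v := -x) (t := 0) (by simpa using hd)
    rwa [zero_smul, add_zero] at this
  have hlog : 0 < Real.log (V / d) := Real.log_pos ((one_lt_div h0).mpr h1)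
  have h3 : d * Real.log (V / d) ≤ D (-x) := by
    refine ge_of_tendsto h2.tendsto_slope_zero_right ?_
    filter_upwards [Ioo_mem_nhdsGT (zero_lt_one' ℝ)] with t ht
    have h4 := covariogram_rpow_mul_le hK hKc ht.1 (sub_pos.mpr ht.2) (by ring) 0 x
    rw [smul_zero, zero_add] at h4
    simp only [sub_zero, and_self, ofPred_mem_eq] at h4
    rw [zero_add, zero_smul, add_zero, smul_eq_mul, ← div_eq_inv_mul, le_div_iff₀ ht.1,
      show x + t • -x = (1 - t) • x by module]
    have h5 : d * (V / d) ^ t = V ^ t * d ^ (1 - t) := by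
      rw [Real.div_rpow (h0.trans h1).le h0.le, Real.rpow_sub h0, Real.rpow_one]
      ring
    have h6 : 1 + t * Real.log (V / d) ≤ (V / d) ^ t := by
      rw [Real.rpow_def_of_pos (div_pos (h0.trans h1) h0)]
      linarith [Real.add_one_le_exp (Real.log (V / d) * t)]
    nlinarith
  rw [map_neg] at h3
  have := mul_pos h0 hlog
  linarith

end ConvolutionBody

/-- If a convex body `K` has `C²` boundary with everywhere positive Gauss–Kronecker
curvature, then so does every convolution body `K(δ)`. -/
theorem stmt_9 (n : ℕ) (K : Set (EuclideanSpace ℝ (Fin n)))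
    (hKcomp : IsCompact K) (hKconv : Convex ℝ K) (hKint : (interior K).Nonempty)
    (hKcurv : HasC2PositiveCurvatureBoundary K)
    (δ : ENNReal) (hδ0 : 0 < δ) (hδ : δ < volume K) :
    HasC2PositiveCurvatureBoundary
      {x : EuclideanSpace ℝ (Fin n) | δ ≤ volume (K ∩ (fun z => x + z) '' K)} := by
  have hKs := hKcurv.strictConvex hKconv hKcomp.isClosed
  set G : EuclideanSpace ℝ (Fin n) → ℝ≥0∞ := fun x => volume {z | z ∈ K ∧ z - x ∈ K} with hG
  have hset : {x : EuclideanSpace ℝ (Fin n) | δ ≤ volume (K ∩ (fun z => x + z) '' K)} =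
      {x | δ ≤ G x} := by
    ext x
    rw [mem_ofPred_eq, mem_ofPred_eq, hG, image_add_left]
    simp only [preimage, inter_def, mem_ofPred_eq, neg_add_eq_sub]
  rw [hset]
  have hcont : Continuous G := continuous_covariogram hKconv hKcomp
  have hGK : ∀ x, G x ≤ volume K := fun x => measure_mono fun z hz => hz.1
  have hfin : ∀ x, G x ≠ ∞ := fun x => ((hGK x).trans_lt hKcomp.measure_lt_top).ne
  have hG0 : G 0 = volume K := by simp [hG]
  have hδfin : δ ≠ ∞ := hδ.ne_top
  have hδr : 0 < δ.toReal := ENNReal.toReal_pos hδ0.ne' hδfin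
  have hδV : δ.toReal < (volume K).toReal :=
    (ENNReal.toReal_lt_toReal hδfin hKcomp.measure_lt_top.ne).mpr hδ
  have hint : interior {x | δ ≤ G x} = {x | δ < G x} := by
    refine Subset.antisymm (fun x hx => ?_)
      (interior_maximal (fun x (hx : δ < G x) => (hx.le : δ ≤ G x))
        (isOpen_lt continuous_const hcont))
    have hxm : δ ≤ G x := interior_subset (s := {x | δ ≤ G x}) hx
    refine lt_of_le_of_ne hxm fun hxδ => ?_
    have hc : ContinuousAt (fun s : ℝ => (1 + s) • x) 0 := by fun_prop
    obtain ⟨s, hs, hs0⟩ := (((hc.eventually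
      (isOpen_interior.mem_nhds (by simpa using hx))).filter_mono nhdsWithin_le_nhds).and
        self_mem_nhdsWithin :
      ∀ᶠ s in 𝓝[>] (0 : ℝ), (1 + s) • x ∈ interior {x | δ ≤ G x} ∧ s ∈ Ioi (0 : ℝ)).exists
    rw [mem_Ioi] at hs0
    have h1s : (0 : ℝ) < 1 + s := by linarith
    have h1 : 0 < s / (1 + s) := by positivity
    have h2 : 0 < 1 / (1 + s) := by positivity
    have h3 := covariogram_rpow_mul_le hKconv hKcomp h1 h2 (by field_simp; ring) 0 ((1 + s) • x)
    rw [smul_zero, zero_add, smul_smul, one_div_mul_cancel h1s.ne', one_smul] at h3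
    change (G 0).toReal ^ _ * (G ((1 + s) • x)).toReal ^ _ ≤ (G x).toReal at h3
    rw [hG0, ← hxδ] at h3
    have h4 : δ.toReal ≤ (G ((1 + s) • x)).toReal :=
      ENNReal.toReal_mono (hfin _) (interior_subset (s := {x | δ ≤ G x}) hs)
    have h5 : δ.toReal = δ.toReal ^ (s / (1 + s)) * δ.toReal ^ (1 / (1 + s)) := by
      rw [← Real.rpow_add hδr, ← add_div, add_comm s 1, div_self h1s.ne', Real.rpow_one]
    have h6 : δ.toReal ^ (s / (1 + s)) < (volume K).toReal ^ (s / (1 + s)) :=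
      Real.rpow_lt_rpow hδr.le hδV h1
    have h7 : δ.toReal ^ (1 / (1 + s)) ≤ (G ((1 + s) • x)).toReal ^ (1 / (1 + s)) :=
      Real.rpow_le_rpow hδr.le h4 h2.le
    have h8 := mul_lt_mul h6 h7 (Real.rpow_pos_of_pos hδr _) (by positivity)
    linarith
  have hfr : frontier {x | δ ≤ G x} = {x | G x = δ} := by
    rw [frontier, (isClosed_le continuous_const hcont).closure_eq, hint]
    ext x
    simp only [mem_sdiff, mem_ofPred_eq, not_lt]
    exact ⟨fun h => le_antisymm h.2 h.1, fun h => ⟨h.ge, h.le⟩⟩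
  have hx0 : ∀ x, G x = δ → x ≠ 0 := by
    rintro x hx rfl
    exact hδ.ne' (hG0 ▸ hx)
  have hC2 : ∀ x, x ≠ 0 → 0 < G x → ContDiffAt ℝ 2 (fun x => (G x).toReal) x := fun x hx hx' =>
    contDiffAt_covariogram volume hKconv hKcomp hKcurv hx
      (overlap_nonempty_of_covariogram_pos hKconv hx')
  refine ⟨fun x => δ.toReal - (G x).toReal, {x | x ≠ 0 ∧ 0 < G x},
    isOpen_ne.inter (isOpen_lt continuous_const hcont), ?_, ?_, ?_, ?_, ?_⟩
  · rw [hfr]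
    exact fun x hx => ⟨hx0 x hx, by rw [hx]; exact hδ0⟩
  · exact fun x hx => (contDiffAt_const.sub (hC2 x hx.1 hx.2)).contDiffWithinAt
  · intro x _
    rw [hfr, mem_ofPred_eq, sub_eq_zero, ENNReal.toReal_eq_toReal_iff' hδfin (hfin x), eq_comm]
  · intro x _ hx
    rw [hint] at hx
    exact sub_neg.mpr ((ENNReal.toReal_lt_toReal hδfin (hfin x)).mpr hx)
  · intro x hx
    rw [hfr, mem_ofPred_eq] at hx
    have hxne := hx0 x hx
    have hGx : 0 < G x := by rw [hx]; exact hδ0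
    have hcd := hC2 x hxne hGx
    have hfd : fderiv ℝ (fun x => δ.toReal - (G x).toReal) =
        fun x => -fderiv ℝ (fun x => (G x).toReal) x := by
      ext1 y
      exact fderiv_const_sub _
    rw [hfd]
    have hneg := fderiv_covariogram_neg hKconv hKcomp (x := x)
      (by change 0 < (G x).toReal; rwa [hx]) (by change (G x).toReal < _; rwa [hx])
      (hcd.differentiableAt (by norm_num))
    refine ⟨fun h => ?_, fun v hv hDv => ?_⟩
    · have := congrArg (fun L => L x) h
      simp only [neg_apply, zero_apply, neg_eq_zero] at this
      exact hneg.ne this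
    · rw [iteratedFDeriv_two_apply, hfd]
      simp only [Matrix.cons_val_zero, Matrix.cons_val_one]
      rw [show (fun x => -fderiv ℝ (fun x => (G x).toReal) x) =
        -fderiv ℝ (fun x => (G x).toReal) from rfl,
        fderiv_neg]
      simp only [neg_apply, neg_eq_zero, neg_pos] at hDv ⊢
      by_contra! hnn
      exact not_flat_covariogram hKs hKcomp hxne hv
        (overlap_nonempty_of_covariogram_pos hKconv hGx)
        fun η hη => le_of_fderiv_fderiv_nonneg hcd hDv hnn hη
end

section
/- Let K be a symmetric convex body in ℝⁿ. If for some τ > 0 the volume vol(K ∩ (x + τK)) depends only on ‖x‖_K (i.e., ‖x‖_K = ‖y‖_K implies vol(K ∩ (x+τK)) = vol(K ∩ (y+τK))), then K is an ellipsoid. Conversely, every symmetric ellipsoid has this property for every τ > 0. -/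
open MeasureTheory Set Module
open scoped Pointwise ENNReal Topology

theorem preimage_gauge_Iic {E : Type*} [NormedAddCommGroup E] [NormedSpace ℝ E]
    {K : Set E} (hcl : IsClosed K) (hconv : Convex ℝ K) (h0 : K ∈ 𝓝 0) {t : ℝ}
    (ht : 0 < t) : gauge K ⁻¹' Iic t = t • K := by
  ext x
  rw [mem_smul_set_iff_inv_smul_mem₀ ht.ne', mem_preimage, mem_Iic]
  conv_rhs => rw [← hcl.closure_eq]
  rw [← gauge_le_one_iff_mem_closure hconv h0, gauge_smul_of_nonneg (inv_nonneg.2 ht.le),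
    smul_eq_mul, inv_mul_le_iff₀ ht, mul_one]

theorem image_add_smul_eq {E : Type*} [AddCommGroup E] [Module ℝ E] (x : E) (τ : ℝ) (K : Set E) :
    (fun z => x + τ • z) '' K = {y | y - x ∈ τ • K} := by
  ext y
  simp only [mem_image, mem_ofPred_eq, mem_smul_set, eq_sub_iff_add_eq']

theorem integrableOn_pow_of_isCompact {E : Type*} [NormedAddCommGroup E] [NormedSpace ℝ E]
    [MeasurableSpace E] [BorelSpace E] (μ : Measure E) [IsFiniteMeasureOnCompacts μ] {K : Set E}
    (hcomp : IsCompact K) (ℓ : E →L[ℝ] ℝ) (j : ℕ) :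
    IntegrableOn (fun x => ℓ x ^ j) K μ :=
  (ℓ.continuous.pow j).continuousOn.integrableOn_compact hcomp

section Haar

variable {E : Type*} [NormedAddCommGroup E] [NormedSpace ℝ E] [FiniteDimensional ℝ E]
  [MeasurableSpace E] [BorelSpace E] (μ : Measure E)

theorem measure_inter_translate_eq_lintegral {K : Set E} (hK : MeasurableSet K) (hsymm : K = -K)
    (τ : ℝ) (x : E) :
    μ (K ∩ (fun z => x + τ • z) '' K) =
      ∫⁻ y in K, (τ • K).indicator 1 (x - y) ∂μ := by
  have hKτ : MeasurableSet (τ • K) := hK.const_smul₀ τ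
  have hneg : ∀ v : E, v ∈ τ • K ↔ -v ∈ τ • K := fun v => by
    conv_rhs => rw [hsymm, smul_set_neg, Set.neg_mem_neg]
  have hset : K ∩ (fun z => x + τ • z) '' K = (fun y => x - y) ⁻¹' (τ • K) ∩ K := by
    rw [image_add_smul_eq, inter_comm]
    ext y
    simp only [mem_inter_iff, mem_ofPred_eq, mem_preimage]
    rw [hneg (y - x), neg_sub]
  have hm : MeasurableSet ((fun y => x - y) ⁻¹' (τ • K)) :=
    (measurable_const.sub measurable_id) hKτ
  rw [hset, ← Measure.restrict_apply hm, ← lintegral_indicator_one hm]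
  rfl

variable [μ.IsAddHaarMeasure]

theorem setLIntegral_smul_set {t : ℝ} (ht : 0 < t) (K : Set E) (P : E → ℝ≥0∞) :
    ∫⁻ x in t • K, P x ∂μ = ENNReal.ofReal (t ^ finrank ℝ E) * ∫⁻ x in K, P (t • x) ∂μ := by
  have hpos : 0 < t ^ finrank ℝ E := pow_pos ht _
  have hemb : MeasurableEmbedding (fun x : E => t • x) :=
    (Homeomorph.smulOfNeZero t ht.ne').measurableEmbedding
  have hmap : Measure.map (fun x : E => t • x) μ =
      ENNReal.ofReal |(t ^ finrank ℝ E)⁻¹| • μ := Measure.map_addHaar_smul μ ht.ne'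
  have h := hemb.lintegral_map (μ := μ.restrict K) P
  have hr : Measure.map (fun x : E => t • x) (μ.restrict K) =
      (Measure.map (fun x : E => t • x) μ).restrict (t • K) := by
    rw [hemb.restrict_map]
    congr 2
    exact (preimage_image_eq K hemb.injective).symm
  rw [hr, hmap, Measure.restrict_smul, lintegral_smul_measure] at h
  rw [← h, smul_eq_mul, ← mul_assoc, ← ENNReal.ofReal_mul hpos.le, abs_of_pos (inv_pos.2 hpos),
    mul_inv_cancel₀ hpos.ne', ENNReal.ofReal_one, one_mul]

/-- Integrating a function of the gauge against a homogeneous weight gives a multiple, depending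
only on the degree of the weight, of the integral of the weight over the body. -/
theorem lintegral_gauge_mul_homogeneous [Nontrivial E] {K : Set E} (hcomp : IsCompact K)
    (hconv : Convex ℝ K) (h0 : K ∈ 𝓝 0) (k : ℕ) {P Q : E → ℝ≥0∞}
    (hP : Measurable P) (hQ : Measurable Q)
    (hPk : ∀ t : ℝ, 0 < t → ∀ x, P (t • x) = ENNReal.ofReal (t ^ k) * P x)
    (hQk : ∀ t : ℝ, 0 < t → ∀ x, Q (t • x) = ENNReal.ofReal (t ^ k) * Q x)
    (hPfin : ∫⁻ x in K, P x ∂μ ≠ ∞) (hQfin : ∫⁻ x in K, Q x ∂μ ≠ ∞)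
    {φ : ℝ → ℝ≥0∞} (hφ : Measurable φ) :
    (∫⁻ x in K, Q x ∂μ) * ∫⁻ x, φ (gauge K x) * P x ∂μ =
      (∫⁻ x in K, P x ∂μ) * ∫⁻ x, φ (gauge K x) * Q x ∂μ := by
  have hg : Measurable (gauge K) := (continuous_gauge hconv h0).measurable
  have key : ∀ R : E → ℝ≥0∞, Measurable R →
      (∀ t : ℝ, 0 < t → ∀ x, R (t • x) = ENNReal.ofReal (t ^ k) * R x) → ∀ t : ℝ,
      (μ.withDensity R).map (gauge K) (Iic t) =
        (if 0 < t then ENNReal.ofReal (t ^ finrank ℝ E) * ENNReal.ofReal (t ^ k) else 0) *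
          ∫⁻ x in K, R x ∂μ := by
    intro R hR hRk t
    rw [Measure.map_apply hg measurableSet_Iic, withDensity_apply _ (hg measurableSet_Iic)]
    split_ifs with ht
    · rw [preimage_gauge_Iic hcomp.isClosed hconv h0 ht, setLIntegral_smul_set μ ht]
      simp_rw [hRk t ht]
      rw [lintegral_const_mul _ hR, mul_assoc]
    · rw [zero_mul]
      apply setLIntegral_measure_zero
      refine measure_mono_null (t := {0}) (fun x hx => ?_) (measure_singleton _)
      by_contra hne
      exact ht ((gauge_pos (absorbent_nhds_zero h0)
        ((NormedSpace.isVonNBounded_iff ℝ).2 hcomp.isBounded)).2 hne |>.trans_le hx)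
  have hmeas : (∫⁻ x in K, Q x ∂μ) • (μ.withDensity P).map (gauge K) =
      (∫⁻ x in K, P x ∂μ) • (μ.withDensity Q).map (gauge K) := by
    refine Measure.ext_of_generateFrom_of_iUnion (range Iic) (fun i : ℕ => Iic (i : ℝ))
      (by rw [← borel_eq_generateFrom_Iic]; exact BorelSpace.measurable_eq) isPiSystem_Iic ?_
      (fun i => mem_range_self _) ?_ ?_
    · exact eq_univ_of_forall fun x => mem_iUnion.2 (exists_nat_ge x)
    · intro i
      rw [Measure.smul_apply, key P hP hPk, smul_eq_mul]
      refine ENNReal.mul_ne_top hQfin (ENNReal.mul_ne_top ?_ hPfin)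
      split_ifs
      · exact ENNReal.mul_ne_top ENNReal.ofReal_ne_top ENNReal.ofReal_ne_top
      · exact ENNReal.zero_ne_top
    · rintro _ ⟨t, rfl⟩
      rw [Measure.smul_apply, Measure.smul_apply, key P hP hPk, key Q hQ hQk, smul_eq_mul,
        smul_eq_mul]
      ring
  have hint : ∀ R : E → ℝ≥0∞, Measurable R →
      ∫⁻ x, φ (gauge K x) * R x ∂μ = ∫⁻ s, φ s ∂((μ.withDensity R).map (gauge K)) := by
    intro R hR
    rw [lintegral_map hφ hg]
    change _ = ∫⁻ x, (φ ∘ gauge K) x ∂μ.withDensity R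
    rw [lintegral_withDensity_eq_lintegral_mul _ hR (hφ.comp hg)]
    exact lintegral_congr fun x => mul_comm _ _
  rw [hint P hP, hint Q hQ, ← smul_eq_mul, ← smul_eq_mul, ← lintegral_smul_measure,
    ← lintegral_smul_measure, hmeas]

theorem measurable_measure_inter_translate {K : Set E} (hK : MeasurableSet K) (hsymm : K = -K)
    (τ : ℝ) : Measurable fun x => μ (K ∩ (fun z => x + τ • z) '' K) := by
  simp_rw [measure_inter_translate_eq_lintegral μ hK hsymm τ]
  exact Measurable.lintegral_prod_right'
    (f := fun p : E × E => (τ • K).indicator (1 : E → ℝ≥0∞) (p.1 - p.2))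
    ((measurable_one.indicator (hK.const_smul₀ τ)).comp (measurable_fst.sub measurable_snd))

theorem lintegral_measure_inter_translate_mul {K : Set E} (hK : MeasurableSet K) (hsymm : K = -K)
    {τ : ℝ} (hτ : 0 < τ) {P : E → ℝ≥0∞} (hP : Measurable P) :
    ∫⁻ x, μ (K ∩ (fun z => x + τ • z) '' K) * P x ∂μ =
      ENNReal.ofReal (τ ^ finrank ℝ E) * ∫⁻ y in K, ∫⁻ w in K, P (y + τ • w) ∂μ ∂μ := by
  have hKτ : MeasurableSet (τ • K) := hK.const_smul₀ τ
  have hind : Measurable ((τ • K).indicator (1 : E → ℝ≥0∞)) := measurable_one.indicator hKτ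
  have hswap : ∫⁻ x, μ (K ∩ (fun z => x + τ • z) '' K) * P x ∂μ =
      ∫⁻ y in K, ∫⁻ x, (τ • K).indicator 1 (x - y) * P x ∂μ ∂μ := by
    rw [lintegral_lintegral_swap]
    · refine lintegral_congr fun x => ?_
      rw [measure_inter_translate_eq_lintegral μ hK hsymm τ, lintegral_mul_const]
      exact hind.comp (measurable_const.sub measurable_id)
    · exact ((hind.comp (measurable_snd.sub measurable_fst)).mul
        (hP.comp measurable_snd)).aemeasurable
  rw [hswap, ← lintegral_const_mul']
  swap
  · exact ENNReal.ofReal_ne_top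
  refine lintegral_congr fun y => ?_
  rw [← lintegral_add_left_eq_self _ y, ← setLIntegral_smul_set μ hτ K (fun v => P (y + v)),
    ← lintegral_indicator hKτ]
  refine lintegral_congr fun v => ?_
  by_cases hv : v ∈ τ • K <;> simp [hv]

theorem setIntegral_pow_odd_eq_zero {K : Set E} (hK : MeasurableSet K) (hsymm : K = -K)
    (ℓ : E →L[ℝ] ℝ) {j : ℕ} (hj : Odd j) : ∫ x in K, ℓ x ^ j ∂μ = 0 := by
  rw [← integral_indicator hK]
  have hodd : ∀ x, K.indicator (fun x => ℓ x ^ j) (-x) = -K.indicator (fun x => ℓ x ^ j) x := by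
    intro x
    have hmem : -x ∈ K ↔ x ∈ K := by
      conv_lhs => rw [hsymm]
      exact Set.neg_mem_neg
    by_cases hx : x ∈ K
    · rw [indicator_of_mem (hmem.2 hx), indicator_of_mem hx, map_neg, hj.neg_pow]
    · rw [indicator_of_notMem (mt hmem.1 hx), indicator_of_notMem hx, neg_zero]
  have h := integral_neg_eq_self (K.indicator fun x => ℓ x ^ j) μ
  simp_rw [hodd, integral_neg] at h
  linarith

theorem setIntegral_pow_even_pos {K : Set E} (hcomp : IsCompact K) (h0 : K ∈ 𝓝 0)
    {ℓ : E →L[ℝ] ℝ} (hℓ : ℓ ≠ 0) {j : ℕ} (hj : Even j) : 0 < ∫ x in K, ℓ x ^ j ∂μ := by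
  rw [integral_pos_iff_support_of_nonneg (fun x => hj.pow_nonneg _)
    (integrableOn_pow_of_isCompact μ hcomp ℓ j)]
  have hker : μ (ℓ.ker : Set E) = 0 := Measure.addHaar_submodule μ _ fun h => hℓ <| by
    ext x
    have : x ∈ ℓ.ker := h ▸ Submodule.mem_top
    simpa using this
  have hsub : (ℓ.ker : Set E)ᶜ ⊆ Function.support fun x => ℓ x ^ j := fun x hx =>
    pow_ne_zero _ fun h => hx (by simpa using h)
  have hKpos : 0 < μ K := Measure.measure_pos_of_mem_nhds μ h0
  have hnull : μ.restrict K (ℓ.ker : Set E) = 0 :=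
    le_antisymm ((Measure.restrict_apply_le _ _).trans hker.le) zero_le
  refine lt_of_lt_of_le ?_ (measure_mono hsub)
  have hu : μ.restrict K univ ≤ μ.restrict K (ℓ.ker : Set E) + μ.restrict K (ℓ.ker : Set E)ᶜ := by
    rw [← union_compl_self (ℓ.ker : Set E)]
    exact measure_union_le _ _
  rw [hnull, zero_add, Measure.restrict_apply_univ] at hu
  exact hKpos.trans_le hu

/-- Binomial expansion of the moments of the convolution of `K` with its dilate. -/
theorem lintegral_lintegral_pow_add_smul {K : Set E} (hcomp : IsCompact K) (ℓ : E →L[ℝ] ℝ) (τ : ℝ)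
    {k : ℕ} (hk : Even k) :
    ∫⁻ y in K, ∫⁻ w in K, ENNReal.ofReal (ℓ (y + τ • w) ^ k) ∂μ ∂μ =
      ENNReal.ofReal (∑ i ∈ Finset.range (k + 1),
        (∫ x in K, ℓ x ^ i ∂μ) * (∫ x in K, ℓ x ^ (k - i) ∂μ) * (τ ^ (k - i) * k.choose i)) := by
  have hcont : Continuous fun z : E × E => ℓ (z.1 + τ • z.2) ^ k := by fun_prop
  have hint : ∀ f : E × E → ℝ, Continuous f →
      Integrable f ((μ.restrict K).prod (μ.restrict K)) := fun f hf => by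
    rw [Measure.prod_restrict]
    exact hf.continuousOn.integrableOn_compact (hcomp.prod hcomp)
  have hexp : ∀ z : E × E, ℓ (z.1 + τ • z.2) ^ k =
      ∑ i ∈ Finset.range (k + 1), ℓ z.1 ^ i * ℓ z.2 ^ (k - i) * (τ ^ (k - i) * k.choose i) := by
    intro z
    rw [map_add, map_smul, smul_eq_mul, add_pow]
    refine Finset.sum_congr rfl fun i _ => ?_
    rw [mul_pow]
    ring
  rw [← lintegral_prod (μ := μ.restrict K) (ν := μ.restrict K)
    (fun z : E × E => ENNReal.ofReal (ℓ (z.1 + τ • z.2) ^ k))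
    hcont.measurable.ennreal_ofReal.aemeasurable,
    ← ofReal_integral_eq_lintegral_ofReal (hint _ hcont) (ae_of_all _ fun z => hk.pow_nonneg _)]
  congr 1
  simp_rw [hexp]
  rw [integral_finsetSum]
  · refine Finset.sum_congr rfl fun i _ => ?_
    rw [integral_mul_const, integral_prod_mul (fun x => ℓ x ^ i) (fun x => ℓ x ^ (k - i))]
  · exact fun i _ => hint _ (by fun_prop)

theorem setIntegral_pow_eq_of_forall_lt [Nontrivial E] {K : Set E} (hcomp : IsCompact K)
    (hconv : Convex ℝ K) (h0 : K ∈ 𝓝 0) (hsymm : K = -K) {τ : ℝ} (hτ : 0 < τ)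
    (hvol : ∀ x y : E, gauge K x = gauge K y →
      μ (K ∩ (fun z => x + τ • z) '' K) = μ (K ∩ (fun z => y + τ • z) '' K))
    {ℓ ℓ' : E →L[ℝ] ℝ} (hℓ : ℓ ≠ 0) {k : ℕ} (hk : Even k) (hk4 : 4 ≤ k)
    (hlt : ∀ j < k, ∫ x in K, ℓ x ^ j ∂μ = ∫ x in K, ℓ' x ^ j ∂μ) :
    ∫ x in K, ℓ x ^ k ∂μ = ∫ x in K, ℓ' x ^ k ∂μ := by
  have hK : MeasurableSet K := hcomp.measurableSet
  have hgpos : ∀ {x : E}, x ≠ 0 → 0 < gauge K x := fun hx =>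
    (gauge_pos (absorbent_nhds_zero h0) ((NormedSpace.isVonNBounded_iff ℝ).2 hcomp.isBounded)).2 hx
  -- The volume factors through the gauge via a measurable function.
  obtain ⟨φ, hφ, hφK⟩ : ∃ φ : ℝ → ℝ≥0∞, Measurable φ ∧
      ∀ x, μ (K ∩ (fun z => x + τ • z) '' K) = φ (gauge K x) := by
    obtain ⟨e, he⟩ := exists_ne (0 : E)
    refine ⟨fun t => μ (K ∩ (fun z => t • (gauge K e)⁻¹ • e + τ • z) '' K), ?_, fun x => ?_⟩
    · exact (measurable_measure_inter_translate μ hK hsymm τ).comp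
        (measurable_id.smul_const _)
    · apply hvol
      rw [gauge_smul_of_nonneg (gauge_nonneg x), gauge_smul_of_nonneg (inv_nonneg.2 (gauge_nonneg e)),
        smul_eq_mul, smul_eq_mul, inv_mul_cancel₀ (hgpos he).ne', mul_one]
  have hmeas : ∀ m : E →L[ℝ] ℝ, Measurable fun x => ENNReal.ofReal (m x ^ k) := fun m =>
    (m.continuous.pow k).measurable.ennreal_ofReal
  have hhom : ∀ (m : E →L[ℝ] ℝ) (t : ℝ), 0 < t → ∀ x,
      ENNReal.ofReal (m (t • x) ^ k) = ENNReal.ofReal (t ^ k) * ENNReal.ofReal (m x ^ k) := by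
    intro m t ht x
    rw [← ENNReal.ofReal_mul (pow_nonneg ht.le _), map_smul, smul_eq_mul, mul_pow]
  have hlint : ∀ m : E →L[ℝ] ℝ, ∫⁻ x in K, ENNReal.ofReal (m x ^ k) ∂μ =
      ENNReal.ofReal (∫ x in K, m x ^ k ∂μ) := fun m =>
    (ofReal_integral_eq_lintegral_ofReal (integrableOn_pow_of_isCompact μ hcomp m k)
      (ae_of_all _ fun x => hk.pow_nonneg _)).symm
  have hrad := lintegral_gauge_mul_homogeneous μ hcomp hconv h0 k (hmeas ℓ) (hmeas ℓ') (hhom ℓ)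
    (hhom ℓ') (by rw [hlint]; exact ENNReal.ofReal_ne_top)
    (by rw [hlint]; exact ENNReal.ofReal_ne_top) hφ
  simp_rw [← hφK] at hrad
  rw [lintegral_measure_inter_translate_mul μ hK hsymm hτ (hmeas ℓ),
    lintegral_measure_inter_translate_mul μ hK hsymm hτ (hmeas ℓ'),
    lintegral_lintegral_pow_add_smul μ hcomp ℓ τ hk,
    lintegral_lintegral_pow_add_smul μ hcomp ℓ' τ hk, hlint, hlint] at hrad
  have hnn : ∀ (m : E →L[ℝ] ℝ) (i : ℕ), 0 ≤ ∫ x in K, m x ^ i ∂μ := by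
    intro m i
    rcases Nat.even_or_odd i with hi | hi
    · exact integral_nonneg fun x => hi.pow_nonneg _
    · exact (setIntegral_pow_odd_eq_zero μ hK hsymm m hi).ge
  have hterm : ∀ (m : E →L[ℝ] ℝ) (i : ℕ), 0 ≤ (∫ x in K, m x ^ i ∂μ) *
      (∫ x in K, m x ^ (k - i) ∂μ) * (τ ^ (k - i) * k.choose i) := fun m i =>
    mul_nonneg (mul_nonneg (hnn m _) (hnn m _)) (by positivity)
  have hτd : 0 < τ ^ finrank ℝ E := pow_pos hτ _
  rw [← ENNReal.ofReal_mul hτd.le, ← ENNReal.ofReal_mul hτd.le, ← ENNReal.ofReal_mul (hnn _ _),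
    ← ENNReal.ofReal_mul (hnn _ _), ENNReal.ofReal_eq_ofReal_iff
      (mul_nonneg (hnn _ _) (mul_nonneg hτd.le (Finset.sum_nonneg fun i _ => hterm _ i)))
      (mul_nonneg (hnn _ _) (mul_nonneg hτd.le (Finset.sum_nonneg fun i _ => hterm _ i)))] at hrad
  obtain ⟨r, rfl⟩ : ∃ r, k = r + 1 := ⟨k - 1, by omega⟩
  simp only [Finset.sum_range_succ _ (r + 1), Finset.sum_range_succ' _ r] at hrad
  have hcross : ∑ i ∈ Finset.range r, (∫ x in K, ℓ x ^ (i + 1) ∂μ) *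
        (∫ x in K, ℓ x ^ (r + 1 - (i + 1)) ∂μ) *
          (τ ^ (r + 1 - (i + 1)) * (r + 1).choose (i + 1)) =
      ∑ i ∈ Finset.range r, (∫ x in K, ℓ' x ^ (i + 1) ∂μ) *
        (∫ x in K, ℓ' x ^ (r + 1 - (i + 1)) ∂μ) *
          (τ ^ (r + 1 - (i + 1)) * (r + 1).choose (i + 1)) := by
    refine Finset.sum_congr rfl fun i hi => ?_
    have := Finset.mem_range.1 hi
    rw [hlt (i + 1) (by omega), hlt (r + 1 - (i + 1)) (by omega)]
  have hcross_pos : 0 < ∑ i ∈ Finset.range r, (∫ x in K, ℓ x ^ (i + 1) ∂μ) *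
        (∫ x in K, ℓ x ^ (r + 1 - (i + 1)) ∂μ) *
          (τ ^ (r + 1 - (i + 1)) * (r + 1).choose (i + 1)) := by
    refine Finset.sum_pos' (fun i _ => hterm ℓ (i + 1)) ⟨1, Finset.mem_range.2 (by omega), ?_⟩
    refine mul_pos (mul_pos (setIntegral_pow_even_pos μ hcomp h0 hℓ even_two)
      (setIntegral_pow_even_pos μ hcomp h0 hℓ ?_))
      (mul_pos (pow_pos hτ _) (Nat.cast_pos.2 (Nat.choose_pos (by omega))))
    exact (Nat.even_sub (by omega)).2 (by simp [hk])
  rw [← hcross] at hrad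
  have hzero := hlt 0 (by omega)
  simp only [Nat.sub_self, Nat.sub_zero, ← hzero] at hrad
  generalize (∑ i ∈ Finset.range r, (∫ x in K, ℓ x ^ (i + 1) ∂μ) *
        (∫ x in K, ℓ x ^ (r + 1 - (i + 1)) ∂μ) *
          (τ ^ (r + 1 - (i + 1)) * (r + 1).choose (i + 1))) = X at hrad hcross_pos
  refine mul_right_cancel₀ (mul_pos hτd hcross_pos).ne' ?_
  linarith

theorem setIntegral_pow_eq_of_sq_eq [Nontrivial E] {K : Set E} (hcomp : IsCompact K)
    (hconv : Convex ℝ K) (h0 : K ∈ 𝓝 0) (hsymm : K = -K) {τ : ℝ} (hτ : 0 < τ)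
    (hvol : ∀ x y : E, gauge K x = gauge K y →
      μ (K ∩ (fun z => x + τ • z) '' K) = μ (K ∩ (fun z => y + τ • z) '' K))
    {ℓ ℓ' : E →L[ℝ] ℝ} (hℓ : ℓ ≠ 0)
    (hsq : ∫ x in K, ℓ x ^ 2 ∂μ = ∫ x in K, ℓ' x ^ 2 ∂μ) (k : ℕ) :
    ∫ x in K, ℓ x ^ k ∂μ = ∫ x in K, ℓ' x ^ k ∂μ := by
  induction k using Nat.strong_induction_on with
  | _ k ih =>
    rcases Nat.even_or_odd k with hk | hk
    · rcases le_or_gt 4 k with h4 | h4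
      · exact setIntegral_pow_eq_of_forall_lt μ hcomp hconv h0 hsymm hτ hvol hℓ hk h4 ih
      · obtain rfl | rfl : k = 0 ∨ k = 2 := by grind
        · simp
        · exact hsq
    · rw [setIntegral_pow_odd_eq_zero μ hcomp.measurableSet hsymm ℓ hk,
        setIntegral_pow_odd_eq_zero μ hcomp.measurableSet hsymm ℓ' hk]

end Haar

/-- The even moments of a linear functional on a body determine its supremum. -/
theorem forall_mem_le_of_setIntegral_pow_eq {E : Type*} [NormedAddCommGroup E]
    [NormedSpace ℝ E] [MeasurableSpace E] [BorelSpace E] (μ : Measure E)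
    [IsFiniteMeasureOnCompacts μ] [μ.IsOpenPosMeasure] {K : Set E} (hcomp : IsCompact K)
    (hconv : Convex ℝ K) (h0 : K ∈ 𝓝 0) (hsymm : K = -K) {ℓ ℓ' : E →L[ℝ] ℝ}
    (h : ∀ k, ∫ x in K, ℓ x ^ (2 * k) ∂μ = ∫ x in K, ℓ' x ^ (2 * k) ∂μ) {s : ℝ}
    (hs : ∀ x ∈ K, ℓ x ≤ s) {x : E} (hx : x ∈ K) : ℓ' x ≤ s := by
  by_contra! hlt
  have hs0 : 0 ≤ s := by simpa using hs 0 (mem_of_mem_nhds h0)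
  obtain ⟨r, hsr, hrx⟩ := exists_between hlt
  have hr0 : 0 < r := hs0.trans_lt hsr
  have hU : IsOpen (ℓ' ⁻¹' Ioi r) := isOpen_Ioi.preimage ℓ'.continuous
  have hne : (interior K ∩ ℓ' ⁻¹' Ioi r).Nonempty := by
    have hxc : x ∈ closure (interior K) := by
      rw [hconv.closure_interior_eq_closure_of_nonempty_interior
        ⟨0, mem_interior_iff_mem_nhds.2 h0⟩]
      exact subset_closure hx
    obtain ⟨y, hy, hyK⟩ := mem_closure_iff.1 hxc _ hU hrx
    exact ⟨y, hyK, hy⟩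
  set ε := μ.real (K ∩ ℓ' ⁻¹' Ioi r) with hε
  have hfin : μ (K ∩ ℓ' ⁻¹' Ioi r) ≠ ∞ :=
    (measure_mono inter_subset_left).trans_lt hcomp.measure_lt_top |>.ne
  have hεpos : 0 < ε := by
    refine ENNReal.toReal_pos ?_ hfin
    exact ((isOpen_interior.inter hU).measure_pos μ hne |>.trans_le
      (measure_mono (inter_subset_inter_left _ interior_subset))).ne'
  have hlow : ∀ k, r ^ (2 * k) * ε ≤ ∫ x in K, ℓ' x ^ (2 * k) ∂μ := by
    intro k
    have h1 : ∫ x in K ∩ ℓ' ⁻¹' Ioi r, ℓ' x ^ (2 * k) ∂μ ≤ ∫ x in K, ℓ' x ^ (2 * k) ∂μ :=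
      setIntegral_mono_set (integrableOn_pow_of_isCompact μ hcomp ℓ' _)
        (ae_of_all _ fun x => (even_two_mul k).pow_nonneg _)
        (Filter.Eventually.of_forall inter_subset_left)
    refine le_trans ?_ h1
    have h2 := setIntegral_mono_on (μ := μ) (s := K ∩ ℓ' ⁻¹' Ioi r) (f := fun _ => r ^ (2 * k))
      (g := fun x => ℓ' x ^ (2 * k)) (integrableOn_const hfin)
      ((integrableOn_pow_of_isCompact μ hcomp ℓ' _).mono_set inter_subset_left)
      (hcomp.measurableSet.inter hU.measurableSet)
      (fun y hy => pow_le_pow_left₀ hr0.le (le_of_lt hy.2) _)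
    rwa [setIntegral_const, smul_eq_mul, mul_comm] at h2
  have hup : ∀ k, ∫ x in K, ℓ x ^ (2 * k) ∂μ ≤ s ^ (2 * k) * μ.real K := by
    intro k
    have h2 := setIntegral_mono_on (μ := μ) (s := K) (f := fun x => ℓ x ^ (2 * k))
      (g := fun _ => s ^ (2 * k)) (integrableOn_pow_of_isCompact μ hcomp ℓ _)
      (integrableOn_const hcomp.measure_lt_top.ne) hcomp.measurableSet
      (fun y hy => by
        have hy' : -y ∈ K := by rw [hsymm]; simpa using hy
        have habs : |ℓ y| ≤ s := abs_le.2 ⟨by have := hs _ hy'; rw [map_neg] at this; linarith,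
          hs y hy⟩
        rw [← (even_two_mul k).pow_abs]
        exact pow_le_pow_left₀ (abs_nonneg _) habs _)
    rwa [setIntegral_const, smul_eq_mul, mul_comm (μ.real K)] at h2
  have hq : (s / r) ^ 2 < 1 := by
    have : s / r < 1 := (div_lt_one hr0).2 hsr
    have : 0 ≤ s / r := div_nonneg hs0 hr0.le
    nlinarith
  have hlim : Filter.Tendsto (fun k : ℕ => ((s / r) ^ 2) ^ k * μ.real K) Filter.atTop (𝓝 0) := by
    simpa using (tendsto_pow_atTop_nhds_zero_of_lt_one (sq_nonneg (s / r)) hq).mul_const (μ.real K)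
  refine absurd (ge_of_tendsto' hlim fun k => ?_) hεpos.not_ge
  have := (hlow k).trans ((h k).symm.le.trans (hup k))
  rw [← pow_mul, div_pow, div_mul_eq_mul_div, le_div_iff₀ (pow_pos hr0 _)]
  linarith

theorem mem_nhds_zero_of_convex_of_eq_neg {E : Type*} [NormedAddCommGroup E] [NormedSpace ℝ E]
    {K : Set E} (hconv : Convex ℝ K) (hint : (interior K).Nonempty) (hsymm : K = -K) :
    K ∈ 𝓝 (0 : E) := by
  obtain ⟨x, hx⟩ := hint
  have hnx : -x ∈ interior K := by
    rw [mem_interior_iff_mem_nhds, hsymm]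
    refine continuous_neg.continuousAt.preimage_mem_nhds ?_
    rw [neg_neg]
    exact mem_interior_iff_mem_nhds.1 hx
  rw [← mem_interior_iff_mem_nhds]
  have h := hconv.interior hx hnx (by norm_num : (0 : ℝ) ≤ 1 / 2) (by norm_num : (0 : ℝ) ≤ 1 / 2)
    (by norm_num)
  rwa [smul_neg, add_neg_cancel] at h

/-- A compact convex set whose support function depends only on the norm is a centred ball. -/
theorem exists_eq_closedBall_of_support {F : Type*} [NormedAddCommGroup F] [InnerProductSpace ℝ F]
    [CompleteSpace F] {L : Set F} (hcomp : IsCompact L) (hconv : Convex ℝ L) (hne : L.Nonempty)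
    (h : ∀ w w' : F, ‖w‖ = ‖w'‖ → ∀ s : ℝ, (∀ z ∈ L, inner ℝ w z ≤ s) →
      ∀ z ∈ L, inner ℝ w' z ≤ s) :
    ∃ c : ℝ, 0 ≤ c ∧ L = Metric.closedBall 0 c := by
  obtain ⟨z₀, hz₀, hmax⟩ := hcomp.exists_isMaxOn hne continuous_norm.continuousOn
  refine ⟨‖z₀‖, norm_nonneg _, Subset.antisymm (fun z hz => ?_) fun y hy => ?_⟩
  · simpa using hmax hz
  rw [mem_closedBall_zero_iff] at hy
  by_contra hyL
  obtain ⟨f, u, hfu, huy⟩ := geometric_hahn_banach_closed_point hconv hcomp.isClosed hyL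
  set w := (InnerProductSpace.toDual ℝ F).symm f with hw
  have hf : ∀ z, f z = inner ℝ w z := fun z => by
    rw [hw, InnerProductSpace.toDual_symm_apply]
  rcases eq_or_ne z₀ 0 with h0 | h0
  · rw [h0, norm_zero, norm_le_zero_iff] at hy
    exact hyL (hy ▸ h0 ▸ hz₀)
  have hn : 0 < ‖z₀‖ := norm_pos_iff.2 h0
  have hnorm : ‖w‖ = ‖(‖w‖ / ‖z₀‖) • z₀‖ := by
    rw [norm_smul, norm_div, norm_norm, norm_norm, div_mul_cancel₀ _ hn.ne']
  have h1 := h w _ hnorm u (fun z hz => (hf z ▸ hfu z hz).le) z₀ hz₀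
  rw [real_inner_smul_left, real_inner_self_eq_norm_sq, sq, ← mul_assoc,
    div_mul_cancel₀ _ hn.ne'] at h1
  have h2 : inner ℝ w y ≤ ‖w‖ * ‖z₀‖ :=
    (real_inner_le_norm w y).trans (mul_le_mul_of_nonneg_left hy (norm_nonneg _))
  rw [hf] at huy
  linarith

/-- The second moments of a body are the squared norms of the images under a linear
automorphism. -/
theorem exists_linearEquiv_setIntegral_inner_sq {n : ℕ} {K : Set (EuclideanSpace ℝ (Fin n))}
    (hcomp : IsCompact K) (h0 : K ∈ 𝓝 0) :
    ∃ A : EuclideanSpace ℝ (Fin n) ≃ₗ[ℝ] EuclideanSpace ℝ (Fin n),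
      ∀ θ, ∫ x in K, inner ℝ θ x ^ 2 = ‖A θ‖ ^ 2 := by
  set M : Matrix (Fin n) (Fin n) ℝ := Matrix.of fun i j => ∫ x in K, x i * x j with hM
  have hquad : ∀ v : Fin n → ℝ,
      v ⬝ᵥ M.mulVec v = ∫ x in K, inner ℝ (WithLp.toLp 2 v) x ^ 2 := by
    intro v
    have hexp : ∀ x : EuclideanSpace ℝ (Fin n), inner ℝ (WithLp.toLp 2 v) x ^ 2 =
        ∑ i, ∑ j, v i * (x i * x j * v j) := by
      intro x
      rw [PiLp.inner_apply, sq, Finset.sum_mul_sum]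
      refine Finset.sum_congr rfl fun i _ => Finset.sum_congr rfl fun j _ => ?_
      simp only [RCLike.inner_apply, conj_trivial]
      ring
    have hint : ∀ f : EuclideanSpace ℝ (Fin n) → ℝ, Continuous f → IntegrableOn f K :=
      fun f hf => hf.continuousOn.integrableOn_compact hcomp
    simp_rw [hexp]
    rw [integral_finsetSum _ fun i _ => hint _ (by fun_prop)]
    refine Finset.sum_congr rfl fun i _ => ?_
    rw [integral_finsetSum _ fun j _ => hint _ (by fun_prop), Matrix.mulVec, dotProduct,
      Finset.mul_sum]
    refine Finset.sum_congr rfl fun j _ => ?_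
    rw [integral_const_mul, integral_mul_const, hM, Matrix.of_apply]
  have hpos : M.PosDef := by
    refine Matrix.PosDef.of_dotProduct_mulVec_pos ?_ fun v hv => ?_
    · ext i j
      simp [hM, mul_comm]
    · rw [star_trivial, hquad]
      refine setIntegral_pow_even_pos volume hcomp h0
        (ℓ := innerSL ℝ (WithLp.toLp 2 v : EuclideanSpace ℝ (Fin n))) ?_ even_two
      intro h
      rw [← norm_eq_zero, innerSL_apply_norm, norm_eq_zero] at h
      exact hv (congrArg WithLp.ofLp h)
  obtain ⟨B, hB⟩ : ∃ B : Matrix (Fin n) (Fin n) ℝ, M = B.transpose * B := by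
    open scoped MatrixOrder in
    obtain ⟨B, hB⟩ := CStarAlgebra.nonneg_iff_eq_star_mul_self.1 hpos.posSemidef.nonneg
    exact ⟨B, by rw [hB, Matrix.star_eq_conjTranspose, Matrix.conjTranspose_eq_transpose_of_trivial]⟩
  have hA : ∀ θ, ∫ x in K, inner ℝ θ x ^ 2 = ‖Matrix.toEuclideanLin B θ‖ ^ 2 := by
    intro θ
    have h := hquad (WithLp.ofLp θ)
    rw [WithLp.toLp_ofLp] at h
    rw [← h, hB, ← Matrix.mulVec_mulVec, Matrix.dotProduct_mulVec, Matrix.vecMul_transpose,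
      EuclideanSpace.real_norm_sq_eq, dotProduct]
    refine Finset.sum_congr rfl fun i _ => ?_
    rw [sq]
    rfl
  refine ⟨LinearEquiv.ofInjectiveEndo (Matrix.toEuclideanLin B) ?_, fun θ => ?_⟩
  · rw [injective_iff_map_eq_zero]
    intro θ hθ
    by_contra hne
    have h1 : 0 < ∫ x in K, inner ℝ θ x ^ 2 :=
      setIntegral_pow_even_pos volume hcomp h0 (ℓ := innerSL ℝ θ) (fun h => hne <| by
        rwa [← norm_eq_zero, innerSL_apply_norm, norm_eq_zero] at h) even_two
    rw [hA, hθ, norm_zero] at h1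
    norm_num at h1
  · rw [hA, LinearEquiv.coe_ofInjectiveEndo]

theorem exists_linearEquiv_image_closedBall {n : ℕ} {K : Set (EuclideanSpace ℝ (Fin n))}
    (hcomp : IsCompact K) (hconv : Convex ℝ K) (h0 : K ∈ 𝓝 0) (hsymm : K = -K) {τ : ℝ} (hτ : 0 < τ)
    (hvol : ∀ x y : EuclideanSpace ℝ (Fin n), gauge K x = gauge K y →
      volume (K ∩ (fun z => x + τ • z) '' K) = volume (K ∩ (fun z => y + τ • z) '' K)) :
    ∃ T : EuclideanSpace ℝ (Fin n) ≃ₗ[ℝ] EuclideanSpace ℝ (Fin n),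
      K = T '' Metric.closedBall 0 1 := by
  rcases subsingleton_or_nontrivial (EuclideanSpace ℝ (Fin n)) with hsub | hnt
  · refine ⟨LinearEquiv.refl ℝ _, ?_⟩
    rw [Subsingleton.eq_univ_of_nonempty (s := K) ⟨0, mem_of_mem_nhds h0⟩,
      Subsingleton.eq_univ_of_nonempty (s := Metric.closedBall (0 : EuclideanSpace ℝ (Fin n)) 1)
        ⟨0, by simp⟩]
    simp
  obtain ⟨A, hA⟩ := exists_linearEquiv_setIntegral_inner_sq hcomp h0
  obtain ⟨B, hB⟩ : ∃ B : EuclideanSpace ℝ (Fin n) ≃ₗ[ℝ] EuclideanSpace ℝ (Fin n),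
      ∀ w z, inner ℝ (A.symm w) (B z) = inner ℝ w z := by
    have hadj : ∀ w z, inner ℝ (A.symm w) (LinearMap.adjoint A.toLinearMap z) = inner ℝ w z :=
      fun w z => by
        rw [LinearMap.adjoint_inner_right, LinearEquiv.coe_coe, LinearEquiv.apply_symm_apply]
    refine ⟨LinearEquiv.ofInjectiveEndo (LinearMap.adjoint A.toLinearMap) ?_, fun w z => ?_⟩
    · rw [injective_iff_map_eq_zero]
      intro z hz
      rw [← inner_self_eq_zero (𝕜 := ℝ), ← hadj, hz, inner_zero_right]
    · rw [LinearEquiv.coe_ofInjectiveEndo, hadj]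
  have hcont : Continuous B.symm := B.symm.toLinearMap.continuous_of_finiteDimensional
  obtain ⟨c, hc, hL⟩ := exists_eq_closedBall_of_support (hcomp.image hcont)
    (hconv.linear_image B.symm.toLinearMap) ⟨_, mem_image_of_mem _ (mem_of_mem_nhds h0)⟩ (by
      rintro w w' hw s hs _ ⟨x, hx, rfl⟩
      rcases eq_or_ne w 0 with rfl | hw0
      · rw [norm_zero, eq_comm, norm_eq_zero] at hw
        subst hw
        exact hs _ (mem_image_of_mem _ hx)
      have hsup : ∀ y ∈ K, innerSL ℝ (A.symm w) y ≤ s := fun y hy => by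
        have := hs _ (mem_image_of_mem _ hy)
        rwa [← hB, LinearEquiv.apply_symm_apply] at this
      have hne : innerSL ℝ (A.symm w) ≠ 0 := fun h => hw0 <| by
        rwa [← norm_eq_zero, innerSL_apply_norm, norm_eq_zero, LinearEquiv.map_eq_zero_iff] at h
      have hsq : ∫ y in K, innerSL ℝ (A.symm w) y ^ 2 = ∫ y in K, innerSL ℝ (A.symm w') y ^ 2 := by
        simp only [innerSL_apply_apply, hA, LinearEquiv.apply_symm_apply, hw]
      have h := forall_mem_le_of_setIntegral_pow_eq volume hcomp hconv h0 hsymm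
        (fun k => setIntegral_pow_eq_of_sq_eq volume hcomp hconv h0 hsymm hτ hvol hne hsq (2 * k))
        hsup hx
      rwa [innerSL_apply_apply, ← B.apply_symm_apply x, hB] at h)
  have hK : K = B '' Metric.closedBall 0 c := by
    rw [← hL, image_image]
    simp
  have hc0 : c ≠ 0 := by
    rintro rfl
    rw [Metric.closedBall_zero, image_singleton, map_zero] at hK
    have := Measure.measure_pos_of_mem_nhds (volume : Measure (EuclideanSpace ℝ (Fin n))) h0
    rw [hK, measure_singleton] at this
    exact this.false
  refine ⟨(LinearEquiv.smulOfNeZero ℝ _ c hc0).trans B, ?_⟩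
  have hball : Metric.closedBall (0 : EuclideanSpace ℝ (Fin n)) c =
      (fun z => c • z) '' Metric.closedBall 0 1 := by
    rw [image_smul, smul_unitClosedBall, Real.norm_of_nonneg hc]
  rw [hK, hball, image_image]
  rfl

theorem gauge_linearEquiv_image {E F : Type*} [AddCommGroup E] [Module ℝ E] [AddCommGroup F]
    [Module ℝ F] (T : E ≃ₗ[ℝ] F) (s : Set E) (x : F) : gauge (T '' s) x = gauge s (T.symm x) := by
  have h : ∀ r : ℝ, x ∈ r • T '' s ↔ T.symm x ∈ r • s := fun r => by
    simp only [mem_smul_set, exists_mem_image, LinearEquiv.eq_symm_apply, map_smul]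
  simp only [gauge, h]

theorem volume_closedBall_inter_translate_eq {E : Type*} [NormedAddCommGroup E]
    [InnerProductSpace ℝ E] [FiniteDimensional ℝ E] [MeasurableSpace E] [BorelSpace E] (τ : ℝ)
    {x y : E} (hxy : ‖x‖ = ‖y‖) :
    volume (Metric.closedBall 0 1 ∩ (fun z => x + τ • z) '' Metric.closedBall 0 1) =
      volume (Metric.closedBall 0 1 ∩ (fun z => y + τ • z) '' Metric.closedBall 0 1) := by
  set R := (Submodule.span ℝ {x - y})ᗮ.reflection with hR
  have hRx : R x = y := Submodule.reflection_sub hxy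
  have hball : R '' Metric.closedBall 0 1 = Metric.closedBall 0 1 := by
    rw [LinearIsometryEquiv.image_closedBall, map_zero]
  have himage : R '' (Metric.closedBall 0 1 ∩ (fun z => x + τ • z) '' Metric.closedBall 0 1) =
      Metric.closedBall 0 1 ∩ (fun z => y + τ • z) '' Metric.closedBall 0 1 := by
    rw [image_inter R.injective, hball, image_image]
    simp only [map_add, map_smul, hRx]
    conv_rhs => rw [← hball, image_image, hball]
  rw [← himage, ← R.measurePreserving.measure_preimage_equiv (f := R.toMeasurableEquiv) (R '' _)]
  exact congrArg volume (preimage_image_eq _ R.injective).symm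

theorem volume_ellipsoid_inter_translate_eq {E : Type*} [NormedAddCommGroup E]
    [InnerProductSpace ℝ E] [FiniteDimensional ℝ E] [MeasurableSpace E] [BorelSpace E]
    (T : E ≃ₗ[ℝ] E) (τ : ℝ) {x y : E}
    (hxy : gauge (T '' Metric.closedBall 0 1) x = gauge (T '' Metric.closedBall 0 1) y) :
    volume (T '' Metric.closedBall 0 1 ∩ (fun z => x + τ • z) '' (T '' Metric.closedBall 0 1)) =
      volume
        (T '' Metric.closedBall 0 1 ∩ (fun z => y + τ • z) '' (T '' Metric.closedBall 0 1)) := by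
  have himage : ∀ v : E,
      T '' Metric.closedBall 0 1 ∩ (fun z => v + τ • z) '' (T '' Metric.closedBall 0 1) =
        T.toLinearMap '' (Metric.closedBall 0 1 ∩
          (fun z => T.symm v + τ • z) '' Metric.closedBall 0 1) := by
    intro v
    rw [LinearEquiv.coe_toLinearMap, image_inter T.injective, image_image, image_image]
    simp
  rw [gauge_linearEquiv_image, gauge_linearEquiv_image, gauge_closedBall zero_le_one,
    gauge_closedBall zero_le_one, div_one, div_one] at hxy
  rw [himage x, himage y, Measure.addHaar_image_linearMap, Measure.addHaar_image_linearMap,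
    volume_closedBall_inter_translate_eq τ hxy]

/-- Main theorem: a symmetric convex body `K` such that, for some `τ > 0`,
`vol (K ∩ (x + τK))` depends only on `‖x‖_K`, is an ellipsoid; conversely every symmetric
ellipsoid has this property for every `τ > 0`. -/
theorem stmt_14 (n : ℕ) (K : Set (EuclideanSpace ℝ (Fin n)))
    (hKcomp : IsCompact K) (hKconv : Convex ℝ K) (hKint : (interior K).Nonempty)
    (hKsymm : K = -K) :
    ((∃ τ : ℝ, 0 < τ ∧ ∀ x y : EuclideanSpace ℝ (Fin n), gauge K x = gauge K y →
        volume (K ∩ (fun z => x + τ • z) '' K) = volume (K ∩ (fun z => y + τ • z) '' K)) →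
      ∃ T : EuclideanSpace ℝ (Fin n) ≃ₗ[ℝ] EuclideanSpace ℝ (Fin n),
        K = T '' Metric.closedBall 0 1) ∧
    ((∃ T : EuclideanSpace ℝ (Fin n) ≃ₗ[ℝ] EuclideanSpace ℝ (Fin n),
        K = T '' Metric.closedBall 0 1) →
      ∀ τ : ℝ, 0 < τ → ∀ x y : EuclideanSpace ℝ (Fin n), gauge K x = gauge K y →
        volume (K ∩ (fun z => x + τ • z) '' K) = volume (K ∩ (fun z => y + τ • z) '' K)) := by
  have h0 : K ∈ 𝓝 0 := mem_nhds_zero_of_convex_of_eq_neg hKconv hKint hKsymm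
  constructor
  · rintro ⟨τ, hτ, hvol⟩
    exact exists_linearEquiv_image_closedBall hKcomp hKconv h0 hKsymm hτ hvol
  · rintro ⟨T, rfl⟩ τ - x y hxy
    exact volume_ellipsoid_inter_translate_eq T τ hxy
end
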